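/- arXiv:0805.0349 — 2 statements merged into one kernel-verified Lean document; each statement's English description precedes it below -/
import Mathlib

section
/- The set of real periods equals the ℚ-subalgebra of ℝ generated by the volumes vol(D) of bounded basic open semialgebraic sets: every real period is a ℚ-linear combination of finite products of numbers vol(D), where D ⊆ ℝ^k is a bounded set of the form {x | G_1(x) > 0, …, G_q(x) > 0} with G_i polynomials with rational coefficients, and conversely every element of this subalgebra is a real period. -/
/-- A real number is a real period if it is the value of an absolutely convergent
integral of a rational function with rational coefficients over a domain in
`ℝ^ℓ` given by polynomial inequalities with rational coefficients. -/
def IsRealPeriod (α : ℝ) : Prop :=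
  ∃ (ℓ q : ℕ) (G : Fin q → MvPolynomial (Fin ℓ) ℚ)
    (P Q : MvPolynomial (Fin ℓ) ℚ),
    (∀ x ∈ {x : Fin ℓ → ℝ | ∀ i, 0 < MvPolynomial.aeval x (G i)},
      MvPolynomial.aeval x Q ≠ 0) ∧
    MeasureTheory.IntegrableOn
      (fun x => MvPolynomial.aeval x P / MvPolynomial.aeval x Q)
      {x : Fin ℓ → ℝ | ∀ i, 0 < MvPolynomial.aeval x (G i)} ∧
    α = ∫ x in {x : Fin ℓ → ℝ | ∀ i, 0 < MvPolynomial.aeval x (G i)},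
      MvPolynomial.aeval x P / MvPolynomial.aeval x Q

/-- The set of volumes of bounded basic open semialgebraic sets (with rational
coefficient polynomials). -/
def BasicSemialgebraicVolumes : Set ℝ :=
  {v : ℝ | ∃ (k q : ℕ) (G : Fin q → MvPolynomial (Fin k) ℚ),
    Bornology.IsBounded {x : Fin k → ℝ | ∀ i, 0 < MvPolynomial.aeval x (G i)} ∧
    v = (MeasureTheory.volume
      {x : Fin k → ℝ | ∀ i, 0 < MvPolynomial.aeval x (G i)}).toReal}

/-!
Periods form a `ℚ`-algebra containing the volumes: products come from Fubini, and two periods are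
added by integrating over two disjoint slabs of a common domain, with one extra variable.

Conversely, every period is already a `ℚ`-linear combination of volumes. The substitution
`t ↦ t / (1 - t ^ 2)` in each coordinate makes the domain `D` bounded. The integrand can then be
written as `p / g` with a polynomial `g` that takes values in `(0, 1)` on `D` and vanishes on its
boundary, and the period is the limit at `t = 0` of `Φ t = ∫_D (p / g) * g ^ (2 * t)`.
For `j < N` and multi-indices `k` with all entries below `N`, the derivatives `∂ᵏ (p * g ^ (s + j))`
are multiples of one power of `g` by `N ^ (n + 1)` polynomials of degree `O(N)` in `n` variables, so
for large `N` they are linearly dependent over `ℚ(s)`. Testing such a relation against a monomial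
and integrating by parts, without boundary terms, gives a recurrence
`c₀(t) Φ(t) + ⋯ + c_N(t) Φ(t + N) = 0` with rational polynomials `cⱼ` and `c₀ ≠ 0`, valid for large
`t` and hence by analyticity for all `t > 0`. Dividing by `c₀` expresses the limit of `Φ` at `0`
through derivatives of `Φ` at positive integers. Those are integrals `∫_D q * log (g ^ 2) ^ k` with
polynomials `q` divisible by `g`, hence combinations of volumes: the logarithm is an integral of
`1 / s`, and the integral of a bounded rational function is a volume under its graph.
-/

namespace RealPeriods

open MeasureTheory MvPolynomial Set

variable {ι ι' κ κ' : Type}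

/-! ### Basic open semialgebraic sets -/

/-- The basic open semialgebraic set `{x ∈ ℝ^ι | ∀ j, G j x > 0}`. Arbitrary index types are allowed
so that direct sums of variables and of conditions need no renumbering. -/
def basicOpen (G : κ → MvPolynomial ι ℚ) : Set (ι → ℝ) :=
  {x | ∀ j, 0 < aeval x (G j)}

lemma mem_basicOpen {G : κ → MvPolynomial ι ℚ} {x : ι → ℝ} :
    x ∈ basicOpen G ↔ ∀ j, 0 < aeval x (G j) := Iff.rfl

lemma basicOpen_sumElim (G : κ → MvPolynomial ι ℚ) (G' : κ' → MvPolynomial ι ℚ) :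
    basicOpen (Sum.elim G G') = basicOpen G ∩ basicOpen G' := by
  ext x
  simp [mem_basicOpen]

lemma continuous_aeval (P : MvPolynomial ι ℚ) : Continuous fun x : ι → ℝ => aeval x P := by
  simpa only [aeval_def, ← eval_map] using MvPolynomial.continuous_eval (P.map (algebraMap ℚ ℝ))

lemma isOpen_basicOpen [Finite κ] (G : κ → MvPolynomial ι ℚ) : IsOpen (basicOpen G) := by
  simp only [basicOpen, Set.ofPred_forall]
  exact isOpen_iInter_of_finite fun j => isOpen_lt continuous_const (continuous_aeval _)

lemma measurableSet_basicOpen [Finite ι] [Finite κ] (G : κ → MvPolynomial ι ℚ) :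
    MeasurableSet (basicOpen G) :=
  (isOpen_basicOpen G).measurableSet

lemma measurable_aeval_div [Finite ι] (P Q : MvPolynomial ι ℚ) :
    Measurable fun x : ι → ℝ => aeval x P / aeval x Q :=
  (continuous_aeval P).measurable.div (continuous_aeval Q).measurable

lemma exists_nat_forall_abs_aeval_le [Finite ι] {S : Set (ι → ℝ)} (hS : Bornology.IsBounded S)
    (p : MvPolynomial ι ℚ) : ∃ B : ℕ, ∀ x ∈ S, |aeval x p| ≤ B := by
  have := Fintype.ofFinite ι
  obtain ⟨C, hC⟩ := hS.isCompact_closure.exists_bound_of_continuousOn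
    (continuous_aeval p).continuousOn
  obtain ⟨B, hB⟩ := exists_nat_ge C
  exact ⟨B, fun x hx => (hC x (subset_closure hx)).trans hB⟩

lemma integrableOn_of_forall_abs_le {X : Type*} [MeasurableSpace X] {μ : Measure X} {S : Set X}
    {f : X → ℝ} {B : ℝ} (hS : MeasurableSet S) (hμ : μ S ≠ ⊤) (hf : Measurable f)
    (hB : ∀ x ∈ S, |f x| ≤ B) : IntegrableOn f S μ :=
  Measure.integrableOn_of_bounded hμ hf.aestronglyMeasurable
    (ae_restrict_of_forall_mem hS hB)

/-! ### Reindexing and splitting coordinates -/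

/-- The linear isomorphism `ℝ^ι' ≃ ℝ^ι` reindexing coordinates along `e : ι ≃ ι'`, dual to
`MvPolynomial.rename e`. -/
def reindex (e : ι ≃ ι') : (ι' → ℝ) ≃ᵐ (ι → ℝ) :=
  MeasurableEquiv.arrowCongr' e.symm (.refl ℝ)

lemma reindex_apply (e : ι ≃ ι') (x : ι' → ℝ) : reindex e x = x ∘ e := rfl

lemma measurePreserving_reindex [Fintype ι] [Fintype ι'] (e : ι ≃ ι') :
    MeasurePreserving (reindex e) volume volume :=
  volume_preserving_arrowCongr' e.symm (.refl ℝ) (.id volume)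

lemma aeval_rename_reindex (e : ι ≃ ι') (P : MvPolynomial ι ℚ) (x : ι' → ℝ) :
    aeval x (rename e P) = aeval (reindex e x) P := by
  rw [aeval_rename, reindex_apply]

lemma basicOpen_rename (e : ι ≃ ι') (f : κ ≃ κ') (G : κ → MvPolynomial ι ℚ) :
    basicOpen (fun j => rename e (G (f.symm j))) = reindex e ⁻¹' basicOpen G := by
  ext x
  simp only [mem_basicOpen, mem_preimage, aeval_rename_reindex]
  exact f.symm.forall_congr_left.trans (by simp)

lemma isBounded_preimage_reindex (e : ι ≃ ι') {S : Set (ι → ℝ)} (hS : Bornology.IsBounded S) :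
    Bornology.IsBounded (reindex e ⁻¹' S) := by
  rw [← Bornology.forall_isBounded_image_eval_iff] at hS ⊢
  refine fun i => (hS (e.symm i)).subset ?_
  rintro _ ⟨x, hx, rfl⟩
  exact ⟨_, hx, by simp [reindex_apply]⟩

/-- The splitting `ℝ^(ι ⊕ ι') ≃ ℝ^ι × ℝ^ι'` of coordinates. -/
def splitSum (ι ι' : Type) : (ι ⊕ ι' → ℝ) ≃ᵐ (ι → ℝ) × (ι' → ℝ) :=
  MeasurableEquiv.sumPiEquivProdPi fun _ => ℝ

lemma measurePreserving_splitSum (ι ι' : Type) [Fintype ι] [Fintype ι'] :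
    MeasurePreserving (splitSum ι ι') volume volume :=
  volume_measurePreserving_sumPiEquivProdPi fun _ => ℝ

lemma aeval_rename_inl (P : MvPolynomial ι ℚ) (x : ι ⊕ ι' → ℝ) :
    aeval x (rename Sum.inl P) = aeval (splitSum ι ι' x).1 P := by
  rw [aeval_rename]; rfl

lemma aeval_rename_inr (P : MvPolynomial ι' ℚ) (x : ι ⊕ ι' → ℝ) :
    aeval x (rename Sum.inr P) = aeval (splitSum ι ι' x).2 P := by
  rw [aeval_rename]; rfl

lemma isBounded_preimage_splitSum {S : Set (ι → ℝ)} {T : Set (ι' → ℝ)}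
    (hS : Bornology.IsBounded S) (hT : Bornology.IsBounded T) :
    Bornology.IsBounded (splitSum ι ι' ⁻¹' S ×ˢ T) := by
  rw [← Bornology.forall_isBounded_image_eval_iff] at hS hT ⊢
  rintro (i | i)
  · refine (hS i).subset ?_
    rintro _ ⟨x, hx, rfl⟩
    exact ⟨_, hx.1, rfl⟩
  · refine (hT i).subset ?_
    rintro _ ⟨x, hx, rfl⟩
    exact ⟨_, hx.2, rfl⟩

/-- The splitting `ℝ^(ι ⊕ 1) ≃ ℝ^ι × ℝ` of the last coordinate. -/
noncomputable def splitLast (ι : Type) : (ι ⊕ Unit → ℝ) ≃ᵐ (ι → ℝ) × ℝ :=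
  (splitSum ι Unit).trans ((MeasurableEquiv.refl _).prodCongr (MeasurableEquiv.funUnique Unit ℝ))

lemma splitLast_snd (x : ι ⊕ Unit → ℝ) : (splitLast ι x).2 = x (Sum.inr ()) := rfl

lemma aeval_rename_inl_splitLast (P : MvPolynomial ι ℚ) (x : ι ⊕ Unit → ℝ) :
    aeval x (rename Sum.inl P) = aeval (splitLast ι x).1 P :=
  aeval_rename_inl P x

lemma measurePreserving_splitLast (ι : Type) [Fintype ι] :
    MeasurePreserving (splitLast ι) volume volume :=
  (measurePreserving_splitSum ι Unit).trans
    ((MeasurePreserving.id volume).prod (volume_preserving_funUnique Unit ℝ))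

lemma isBounded_preimage_splitLast {S : Set (ι → ℝ)} {T : Set ℝ} (hS : Bornology.IsBounded S)
    (hT : Bornology.IsBounded T) : Bornology.IsBounded (splitLast ι ⁻¹' S ×ˢ T) := by
  have hT' : Bornology.IsBounded (Function.eval () ⁻¹' T) :=
    Bornology.forall_isBounded_image_eval_iff.1 fun i => hT.subset (image_preimage_subset _ _)
  exact isBounded_preimage_splitSum hS hT'

lemma setIntegral_prod_fiber {X Y : Type*} [MeasurableSpace X] [MeasurableSpace Y]
    {μ : Measure X} {ν : Measure Y} [SFinite μ] [SFinite ν] {E : Set (X × Y)} {D : Set X}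
    {S : X → Set Y} (hE : MeasurableSet E) (hD : MeasurableSet D)
    (hmem : ∀ x y, (x, y) ∈ E ↔ x ∈ D ∧ y ∈ S x) {f : X × Y → ℝ}
    (hf : IntegrableOn f E (μ.prod ν)) :
    ∫ z in E, f z ∂μ.prod ν = ∫ x in D, ∫ y in S x, f (x, y) ∂ν ∂μ := by
  rw [← integral_indicator hE, integral_prod _ (hf.integrable_indicator hE),
    ← integral_indicator hD]
  congr 1 with x
  by_cases hx : x ∈ D
  · have hS : S x = Prod.mk x ⁻¹' E := by ext y; simp [hmem, hx]
    rw [indicator_of_mem hx, hS, ← integral_indicator (measurable_prodMk_left hE)]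
    rfl
  · have hzero : ∀ y, E.indicator f (x, y) = 0 := fun y =>
      indicator_of_notMem (fun h => hx ((hmem x y).1 h).1) f
    simp only [indicator_of_notMem hx, hzero, integral_zero]

/-! ### Real periods form a `ℚ`-algebra -/

/-- `HasRationalIntegral G P Q α` says that the integral of `P / Q` over `basicOpen G` converges
absolutely to `α`, the denominator `Q` having no zero on the domain. -/
structure HasRationalIntegral [Fintype ι] (G : κ → MvPolynomial ι ℚ) (P Q : MvPolynomial ι ℚ)
    (α : ℝ) : Prop where
  ne_zero : ∀ x ∈ basicOpen G, aeval x Q ≠ 0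
  integrableOn : IntegrableOn (fun x : ι → ℝ => aeval x P / aeval x Q) (basicOpen G)
  eq_integral : α = ∫ x in basicOpen G, aeval x P / aeval x Q

/-- `IsPeriodIn ι α` says that the real period `α` has an integral representation over a subset of
`ℝ^ι`. It refines `IsRealPeriod` by recording the coordinates of the ambient space. -/
def IsPeriodIn (ι : Type) [Fintype ι] (α : ℝ) : Prop :=
  ∃ (κ : Type) (_ : Finite κ) (G : κ → MvPolynomial ι ℚ) (P Q : MvPolynomial ι ℚ),
    HasRationalIntegral G P Q α

section Algebra

variable [Fintype ι] [Fintype ι'] {a b : ℝ}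

lemma isRealPeriod_iff : IsRealPeriod a ↔
    ∃ (ℓ q : ℕ) (G : Fin q → MvPolynomial (Fin ℓ) ℚ) (P Q : MvPolynomial (Fin ℓ) ℚ),
      HasRationalIntegral G P Q a :=
  ⟨fun ⟨ℓ, q, G, P, Q, h, h', h''⟩ => ⟨ℓ, q, G, P, Q, h, h', h''⟩,
    fun ⟨ℓ, q, G, P, Q, h, h', h''⟩ => ⟨ℓ, q, G, P, Q, h, h', h''⟩⟩

lemma exists_isPeriodIn_of_isRealPeriod (h : IsRealPeriod a) : ∃ ℓ, IsPeriodIn (Fin ℓ) a := by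
  obtain ⟨ℓ, q, G, P, Q, h⟩ := isRealPeriod_iff.1 h
  exact ⟨ℓ, Fin q, inferInstance, G, P, Q, h⟩

lemma isPeriodIn_setIntegral [Finite κ] {X : Type*} [MeasureSpace X] {e : (ι → ℝ) ≃ᵐ X}
    (he : MeasurePreserving e volume volume) {S : Set X} {f : X → ℝ} (hf : IntegrableOn f S)
    {G : κ → MvPolynomial ι ℚ} (hG : basicOpen G = e ⁻¹' S) {P Q : MvPolynomial ι ℚ}
    (hQ : ∀ x ∈ basicOpen G, aeval x Q ≠ 0) (hPQ : ∀ x, aeval x P / aeval x Q = f (e x)) :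
    IsPeriodIn ι (∫ z in S, f z) := by
  refine ⟨κ, ‹_›, G, P, Q, hQ, ?_, ?_⟩ <;> simp only [hG, hPQ]
  · exact (he.integrableOn_comp_preimage e.measurableEmbedding).2 hf
  · exact (he.setIntegral_preimage_emb e.measurableEmbedding f S).symm

lemma IsPeriodIn.isRealPeriod (h : IsPeriodIn ι a) : IsRealPeriod a := by
  obtain ⟨κ, _, G, P, Q, hQ, hint, rfl⟩ := h
  let e := Fintype.equivFin ι
  let f := Finite.equivFin κ
  refine isRealPeriod_iff.2
    ⟨_, _, fun j => rename e (G (f.symm j)), rename e P, rename e Q, ?_, ?_, ?_⟩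
  all_goals simp only [basicOpen_rename, aeval_rename_reindex]
  · exact fun x hx => hQ _ hx
  · exact ((measurePreserving_reindex e).integrableOn_comp_preimage
      (reindex e).measurableEmbedding).2 hint
  · exact ((measurePreserving_reindex e).setIntegral_preimage_emb
      (reindex e).measurableEmbedding (fun x => aeval x P / aeval x Q) _).symm

lemma isPeriodIn_measureReal [Finite κ] {G : κ → MvPolynomial ι ℚ}
    (hG : volume (basicOpen G) ≠ ⊤) : IsPeriodIn ι (volume (basicOpen G)).toReal := by
  refine ⟨κ, ‹_›, G, 1, 1, by simp, ?_, by simp [measureReal_def]⟩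
  simpa using integrableOn_const (C := (1 : ℝ)) hG

lemma isPeriodIn_one (ι : Type) [Fintype ι] : IsPeriodIn ι 1 := by
  have hcube : basicOpen (fun i : ι => X i * (1 - X i)) = univ.pi fun _ => Ioo (0 : ℝ) 1 := by
    ext x
    simp only [mem_basicOpen, mem_univ_pi, mem_Ioo, map_mul, map_sub, map_one, aeval_X]
    refine forall_congr' fun i => ⟨fun h => ?_, fun h => mul_pos h.1 (sub_pos.2 h.2)⟩
    constructor <;> nlinarith
  have hvol : volume (univ.pi fun _ : ι => Ioo (0 : ℝ) 1) = 1 := by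
    simp [volume_pi_pi]
  have := isPeriodIn_measureReal (G := fun i : ι => X i * (1 - X i)) (by simp [hcube, hvol])
  simpa [hcube, hvol] using this

lemma IsPeriodIn.smul (r : ℚ) (h : IsPeriodIn ι a) : IsPeriodIn ι (r • a) := by
  obtain ⟨κ, _, G, P, Q, hQ, hint, rfl⟩ := h
  have hsmul : ∀ x : ι → ℝ, aeval x (r • P) / aeval x Q = r • (aeval x P / aeval x Q) := fun x => by
    rw [map_smul, smul_div_assoc]
  refine ⟨κ, ‹_›, G, r • P, Q, hQ, ?_, ?_⟩ <;> simp only [hsmul]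
  · exact hint.smul r
  · exact (integral_smul r _).symm

lemma IsPeriodIn.mul (ha : IsPeriodIn ι a) (hb : IsPeriodIn ι' b) :
    IsPeriodIn (ι ⊕ ι') (a * b) := by
  obtain ⟨κ, _, G, P, Q, hQ, hint, rfl⟩ := ha
  obtain ⟨κ', _, G', P', Q', hQ', hint', rfl⟩ := hb
  let H : κ ⊕ κ' → MvPolynomial (ι ⊕ ι') ℚ :=
    Sum.elim (fun j => rename Sum.inl (G j)) fun j => rename Sum.inr (G' j)
  have hH : basicOpen H = splitSum ι ι' ⁻¹' basicOpen G ×ˢ basicOpen G' := by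
    ext x
    simp only [H, mem_basicOpen, Sum.forall, Sum.elim_inl, Sum.elim_inr, aeval_rename_inl,
      aeval_rename_inr, mem_preimage, mem_prod]
  rw [← setIntegral_prod_mul, ← Measure.volume_eq_prod]
  refine isPeriodIn_setIntegral (P := rename Sum.inl P * rename Sum.inr P')
    (Q := rename Sum.inl Q * rename Sum.inr Q') (measurePreserving_splitSum ι ι') ?_ hH
    (fun x hx => ?_) fun x => ?_
  · rw [IntegrableOn, Measure.volume_eq_prod, ← Measure.prod_restrict]
    exact hint.mul_prod hint'
  · rw [hH] at hx
    rw [map_mul, aeval_rename_inl, aeval_rename_inr]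
    exact mul_ne_zero (hQ _ hx.1) (hQ' _ hx.2)
  · simp only [map_mul, aeval_rename_inl, aeval_rename_inr, mul_div_mul_comm]

end Algebra

lemma ae_eval_ne_zero_fin : ∀ {n : ℕ} {p : MvPolynomial (Fin n) ℝ}, p ≠ 0 →
    ∀ᵐ x : Fin n → ℝ, eval x p ≠ 0
  | 0, p, hp => .of_forall fun x h => hp <| MvPolynomial.funext fun y => by
      rw [Subsingleton.elim y x, h, map_zero]
  | n + 1, p, hp => by
      have hlead : ∀ᵐ x, eval x (finSuccEquiv ℝ n p).leadingCoeff ≠ 0 :=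
        ae_eval_ne_zero_fin (by simpa using hp)
      have hfiber : ∀ᵐ x, ∀ᵐ t : ℝ, eval (Fin.cons t x : Fin (n + 1) → ℝ) p ≠ 0 := by
        filter_upwards [hlead] with x hx
        have hmap : (finSuccEquiv ℝ n p).map (eval x) ≠ 0 := by
          rwa [← Polynomial.leadingCoeff_ne_zero,
            Polynomial.leadingCoeff_map_of_leadingCoeff_ne_zero _ hx]
        simp only [eval_eq_eval_mv_eval']
        exact (Polynomial.finite_setOfPred_isRoot hmap).countable.ae_notMem volume
      let e := (MeasurableEquiv.piFinSuccAbove (fun _ : Fin (n + 1) => ℝ) 0).symm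
      have he : MeasurePreserving (e ∘ Prod.swap) (volume.prod volume) volume :=
        (volume_preserving_piFinSuccAbove _ 0).symm.comp Measure.measurePreserving_swap
      have hcons : ∀ (x : Fin n → ℝ) (t : ℝ), (e ∘ Prod.swap) (x, t) = Fin.cons t x := fun x t =>
        Fin.insertNth_zero' t x
      have hmeas : MeasurableSet {x : Fin (n + 1) → ℝ | eval x p ≠ 0} :=
        (MvPolynomial.continuous_eval p).measurable (measurableSet_singleton 0).compl
      rw [← he.map_eq, ae_map_iff he.aemeasurable hmeas]
      refine (Measure.ae_prod_iff_ae_ae (he.measurable hmeas)).2 ?_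
      simpa only [mem_ofPred_eq, hcons] using hfiber

lemma ae_aeval_ne_zero [Fintype ι] {p : MvPolynomial ι ℚ} (hp : p ≠ 0) :
    ∀ᵐ x : ι → ℝ, aeval x p ≠ 0 := by
  let e := Fintype.equivFin ι
  have hq : (rename e p).map (algebraMap ℚ ℝ) ≠ 0 := by
    rw [(map_injective _ (algebraMap ℚ ℝ).injective).ne_iff' (map_zero _)]
    simpa using (rename_injective e e.injective).ne hp
  have he := measurePreserving_reindex e
  have hmeas : MeasurableSet {x : ι → ℝ | aeval x p ≠ 0} :=
    (continuous_aeval p).measurable (measurableSet_singleton 0).compl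
  rw [← he.map_eq, ae_map_iff he.aemeasurable hmeas]
  filter_upwards [ae_eval_ne_zero_fin hq] with x hx
  rwa [eval_map, ← aeval_def, aeval_rename_reindex] at hx

section Band

/-! ### Adding periods over bands

Two integrands `f` on `D` and `f'` on `D'` are both spread over narrow bands in `X × ℝ`, around
`D × {0}` and `D' × {1}`. If the bands have half-width `w x` small enough, the interpolated
inequalities `(1 - z) G + z G' > 0` cut out `D` on the first band and `D'` on the second, and the
single integrand `((1 - z) f + z f') / (2 w)` has integral `∫ f` over the first and `∫ f'` over the
second. -/

variable {X : Type*} {D : Set X} {u v w : X → ℝ}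

lemma mem_Ioo_sub_add {z c r : ℝ} : z ∈ Ioo (c - r) (c + r) ↔ |z - c| < r := by
  rw [← Real.ball_eq_Ioo, Metric.mem_ball, Real.dist_eq]

lemma setIntegral_Ioo_affine_div (a b c : ℝ) {r : ℝ} (hr : 0 < r) :
    ∫ z in Ioo (c - r) (c + r), (a + (z - c) * b) / (2 * r) = a := by
  rw [← integral_Ioc_eq_integral_Ioo, ← intervalIntegral.integral_of_le (by linarith),
    intervalIntegral.integral_div, intervalIntegral.integral_comp_sub_right fun z => a + z * b,
    intervalIntegral.integral_add (by simp)
      (Continuous.intervalIntegrable (by fun_prop) _ _)]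
  simp only [intervalIntegral.integral_const, intervalIntegral.integral_mul_const, integral_id]
  field_simp
  ring

/-- The band `{(x, z) | x ∈ D, |z - c| < w x}`. -/
def band (D : Set X) (c : ℝ) (w : X → ℝ) : Set (X × ℝ) :=
  regionBetween (fun x => c - w x) (fun x => c + w x) D

lemma mk_mem_band {c : ℝ} {x : X} {z : ℝ} : (x, z) ∈ band D c w ↔ x ∈ D ∧ |z - c| < w x := by
  rw [← mem_Ioo_sub_add]; rfl

lemma disjoint_band {D D' : Set X} (hw : ∀ x, w x ≤ 1 / 2) :
    Disjoint (band D 0 w) (band D' 1 w) := by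
  rw [Set.disjoint_left]
  rintro ⟨x, z⟩ h h'
  have h₀ := (mk_mem_band.1 h).2
  have h₁ := (mk_mem_band.1 h').2
  have hz : 1 ≤ |z - 0| + |z - 1| := by simpa using abs_sub z (z - 1)
  linarith [hw x]

variable [MeasurableSpace X] {μ : Measure X}

lemma measurableSet_band (hD : MeasurableSet D) (hw : Measurable w) (c : ℝ) :
    MeasurableSet (band D c w) :=
  measurableSet_regionBetween (measurable_const.sub hw) (measurable_const.add hw) hD

lemma integrableOn_band_div (hD : MeasurableSet D) (hw : Measurable w) (hu : Measurable u)
    (hint : IntegrableOn u D μ) (c : ℝ) :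
    IntegrableOn (fun z : X × ℝ => u z.1 / w z.1) (band D c w) (μ.prod volume) := by
  have hband := measurableSet_band hD hw c
  have hfiber : ∀ x y, (band D c w).indicator (fun z => u z.1 / w z.1) (x, y) =
      (Ioo (c - w x) (c + w x)).indicator (fun _ => D.indicator (fun x => u x / w x) x) y := by
    intro x y
    by_cases hx : x ∈ D <;> by_cases hy : |y - c| < w x <;>
      simp [Set.indicator, mk_mem_band, -mem_Ioo, mem_Ioo_sub_add, hx, hy]
  have hnorm : ∀ x, ∫ y, ‖(band D c w).indicator (fun z => u z.1 / w z.1) (x, y)‖ =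
      (D ∩ {x | 0 < w x}).indicator (fun x => 2 * |u x|) x := by
    intro x
    simp only [hfiber, norm_indicator_eq_indicator_norm (_ : ℝ → ℝ),
      integral_indicator measurableSet_Ioo, setIntegral_const]
    rcases lt_or_ge 0 (w x) with hx | hx
    · have hlen : volume.real (Ioo (c - w x) (c + w x)) = 2 * w x := by
        rw [Real.volume_real_Ioo_of_le (by linarith)]; ring
      by_cases hD : x ∈ D
      · rw [hlen, indicator_of_mem hD, indicator_of_mem (by exact ⟨hD, hx⟩), Real.norm_eq_abs,
          abs_div, abs_of_pos hx, smul_eq_mul]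
        field_simp
      · simp [hD]
    · rw [Ioo_eq_empty (by linarith)]
      simp [hx.not_gt]
  have hmeas : Measurable fun z : X × ℝ => u z.1 / w z.1 := by fun_prop
  rw [← integrable_indicator_iff hband,
    integrable_prod_iff (hmeas.indicator hband).aestronglyMeasurable]
  constructor
  · refine .of_forall fun x => ?_
    simp only [hfiber]
    exact IntegrableOn.integrable_indicator (integrableOn_const (by simp)) measurableSet_Ioo
  · simp only [hnorm]
    have hpos : MeasurableSet {x | 0 < w x} := hw measurableSet_Ioi
    exact IntegrableOn.integrable_indicator ((hint.mono_set inter_subset_left).abs.const_mul 2)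
      (hD.inter hpos)

lemma integrableOn_band_affine_div (hD : MeasurableSet D) (hw : Measurable w) (hu : Measurable u)
    (hv : Measurable v) (hwv : ∀ x ∈ D, w x * |v x| ≤ |u x|) (hint : IntegrableOn u D μ) (c : ℝ) :
    IntegrableOn (fun z : X × ℝ => (u z.1 + (z.2 - c) * v z.1) / (2 * w z.1)) (band D c w)
      (μ.prod volume) := by
  have hmeas : Measurable fun z : X × ℝ => (u z.1 + (z.2 - c) * v z.1) / (2 * w z.1) := by fun_prop
  refine Integrable.mono (integrableOn_band_div hD hw hu hint c) hmeas.aestronglyMeasurable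
    (ae_restrict_of_forall_mem (measurableSet_band hD hw c) ?_)
  rintro ⟨x, z⟩ hz
  obtain ⟨hx, hz⟩ := mk_mem_band.1 hz
  have hnum : |u x + (z - c) * v x| ≤ 2 * |u x| := calc
    |u x + (z - c) * v x| ≤ |u x| + |z - c| * |v x| := by rw [← abs_mul]; exact abs_add_le _ _
    _ ≤ |u x| + w x * |v x| := by gcongr
    _ ≤ 2 * |u x| := by linarith [hwv x hx]
  simp only [Real.norm_eq_abs, abs_div, abs_mul, abs_two]
  rw [← mul_div_mul_left |u x| |w x| two_ne_zero]
  gcongr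

lemma setIntegral_band_affine_div [SFinite μ] (hD : MeasurableSet D) (hw : Measurable w)
    (hu : Measurable u) (hv : Measurable v) (hwv : ∀ x ∈ D, w x * |v x| ≤ |u x|)
    (hint : IntegrableOn u D μ) (hpos : ∀ᵐ x ∂μ, 0 < w x) (c : ℝ) :
    ∫ z in band D c w, (u z.1 + (z.2 - c) * v z.1) / (2 * w z.1) ∂μ.prod volume =
      ∫ x in D, u x ∂μ := by
  rw [setIntegral_prod_fiber (S := fun x => Ioo (c - w x) (c + w x)) (measurableSet_band hD hw c) hD
    (fun x z => Iff.rfl) (integrableOn_band_affine_div hD hw hu hv hwv hint c)]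
  refine integral_congr_ae (ae_restrict_of_ae ?_)
  filter_upwards [hpos] with x hx
  exact setIntegral_Ioo_affine_div _ _ _ hx

lemma setIntegral_band_union_band [SFinite μ] {D' : Set X} {u' : X → ℝ} (hD : MeasurableSet D)
    (hD' : MeasurableSet D') (hw : Measurable w) (hu : Measurable u) (hu' : Measurable u')
    (hwu : ∀ x, w x * |u' x - u x| ≤ |u x|) (hwu' : ∀ x, w x * |u' x - u x| ≤ |u' x|)
    (hint : IntegrableOn u D μ) (hint' : IntegrableOn u' D' μ) (hpos : ∀ᵐ x ∂μ, 0 < w x)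
    (hhalf : ∀ x, w x ≤ 1 / 2) :
    let F := fun z : X × ℝ => (u z.1 + z.2 * (u' z.1 - u z.1)) / (2 * w z.1)
    IntegrableOn F (band D 0 w ∪ band D' 1 w) (μ.prod volume) ∧
      ∫ z in band D 0 w ∪ band D' 1 w, F z ∂μ.prod volume =
        ∫ x in D, u x ∂μ + ∫ x in D', u' x ∂μ := by
  intro F
  have hF₀ : ∀ z, F z = (u z.1 + (z.2 - 0) * (u' z.1 - u z.1)) / (2 * w z.1) := fun z => by
    rw [sub_zero]
  have hF₁ : ∀ z, F z = (u' z.1 + (z.2 - 1) * (u' z.1 - u z.1)) / (2 * w z.1) := fun z => by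
    ring
  have hv : Measurable fun x => u' x - u x := hu'.sub hu
  have hint₀ : IntegrableOn F (band D 0 w) (μ.prod volume) := by
    rw [funext hF₀]
    exact integrableOn_band_affine_div hD hw hu hv (fun x _ => hwu x) hint 0
  have hint₁ : IntegrableOn F (band D' 1 w) (μ.prod volume) := by
    rw [funext hF₁]
    exact integrableOn_band_affine_div hD' hw hu' hv (fun x _ => hwu' x) hint' 1
  refine ⟨hint₀.union hint₁, ?_⟩
  rw [setIntegral_union (disjoint_band hhalf) (measurableSet_band hD' hw 1) hint₀ hint₁,
    ← setIntegral_band_affine_div hD hw hu hv (fun x _ => hwu x) hint hpos 0,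
    ← setIntegral_band_affine_div hD' hw hu' hv (fun x _ => hwu' x) hint' hpos 1]
  simp only [← hF₀, ← hF₁]

end Band

section TubeRadius

variable {T : Type} [Fintype T]

/-- A width `w` such that `(1 - z) a t + z b t` keeps the sign of `a t` for `|z| < w` and the sign
of `b t` for `|z - 1| < w`. It is a rational function of `a` and `b` and vanishes if some `a t` or
`b t` does. -/
noncomputable def signRadius (a b : T → ℝ) : ℝ :=
  ((∏ t, a t * b t) / ∏ t, (1 + a t ^ 2 + b t ^ 2)) ^ 2

lemma signRadius_comm (a b : T → ℝ) : signRadius a b = signRadius b a := by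
  simp only [signRadius, mul_comm (a _), add_right_comm]

lemma signRadius_nonneg (a b : T → ℝ) : 0 ≤ signRadius a b := sq_nonneg _

lemma signRadius_pos_iff {a b : T → ℝ} : 0 < signRadius a b ↔ ∀ t, a t ≠ 0 ∧ b t ≠ 0 := by
  have hden : ∏ t, (1 + a t ^ 2 + b t ^ 2) ≠ 0 :=
    Finset.prod_ne_zero_iff.2 fun t _ => by positivity
  simp [signRadius, sq_pos_iff, hden, Finset.prod_ne_zero_iff]

lemma signRadius_le (a b : T → ℝ) (t : T) :
    signRadius a b ≤ (a t * b t / (1 + a t ^ 2 + b t ^ 2)) ^ 2 := by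
  classical
  have hle : ∀ s, |a s * b s / (1 + a s ^ 2 + b s ^ 2)| ≤ 1 := fun s => by
    rw [abs_div, abs_mul, div_le_one₀ (by positivity)]
    refine le_trans ?_ (le_abs_self _)
    nlinarith [sq_nonneg (|a s| - |b s|), sq_abs (a s), sq_abs (b s)]
  rw [signRadius, ← Finset.prod_div_distrib, sq_le_sq,
    ← Finset.mul_prod_erase _ _ (Finset.mem_univ t), abs_mul, Finset.abs_prod]
  exact mul_le_of_le_one_right (abs_nonneg _)
    (Finset.prod_le_one (fun _ _ => abs_nonneg _) fun s _ => hle s)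

lemma signRadius_le_half [Nonempty T] (a b : T → ℝ) : signRadius a b ≤ 1 / 2 := by
  obtain ⟨t⟩ := ‹Nonempty T›
  refine (signRadius_le a b t).trans ?_
  rw [div_pow, div_le_iff₀ (by positivity)]
  nlinarith [sq_nonneg (a t ^ 2 - b t ^ 2), sq_nonneg (a t), sq_nonneg (b t)]

lemma signRadius_mul_abs_sub_le (a b : T → ℝ) (t : T) :
    signRadius a b * |b t - a t| ≤ |a t| := by
  have hkey : |a t| * b t ^ 2 * |b t - a t| ≤ (1 + a t ^ 2 + b t ^ 2) ^ 2 := by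
    have := abs_sub (b t) (a t)
    have hb := sq_abs (b t)
    have ha := sq_abs (a t)
    nlinarith [sq_nonneg (|a t| - |b t|),
      mul_le_mul_of_nonneg_left this (by positivity : 0 ≤ |a t| * b t ^ 2)]
  calc signRadius a b * |b t - a t|
      ≤ (a t * b t / (1 + a t ^ 2 + b t ^ 2)) ^ 2 * |b t - a t| := by
        gcongr; exact signRadius_le a b t
    _ = |a t| * ((|a t| * b t ^ 2 * |b t - a t|) / (1 + a t ^ 2 + b t ^ 2) ^ 2) := by
        rw [div_pow, mul_pow, ← sq_abs (a t)]; ring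
    _ ≤ |a t| * 1 := by gcongr; exact div_le_one_of_le₀ hkey (by positivity)
    _ = |a t| := mul_one _

lemma interpolation_pos_iff {a b r z : ℝ} (ha : a ≠ 0) (hr : r * |b - a| ≤ |a|) (hz : |z| < r) :
    0 < a + z * (b - a) ↔ 0 < a := by
  have hlt : |z * (b - a)| < |a| := by
    rw [abs_mul]
    rcases eq_or_ne (b - a) 0 with h | h
    · simpa [h] using ha
    · exact (mul_lt_mul_of_pos_right hz (abs_pos.2 h)).trans_le hr
  obtain ⟨h₁, h₂⟩ := abs_lt.1 hlt
  rcases ha.lt_or_gt with h | h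
  · rw [abs_of_neg h] at h₂
    exact iff_of_false (by linarith) h.not_gt
  · rw [abs_of_pos h] at h₁
    exact iff_of_true (by linarith) h

lemma add_mul_sub_pos_iff_left {a b : T → ℝ} {z : ℝ} (hz : |z| < signRadius a b) (t : T) :
    0 < a t + z * (b t - a t) ↔ 0 < a t :=
  interpolation_pos_iff (signRadius_pos_iff.1 ((abs_nonneg z).trans_lt hz) t).1
    (signRadius_mul_abs_sub_le a b t) hz

lemma add_mul_sub_pos_iff_right {a b : T → ℝ} {z : ℝ} (hz : |z - 1| < signRadius a b) (t : T) :
    0 < a t + z * (b t - a t) ↔ 0 < b t := by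
  rw [abs_sub_comm, signRadius_comm] at hz
  rw [← add_mul_sub_pos_iff_left hz t]
  ring_nf

end TubeRadius

section Sum

variable [Fintype ι] {a b : ℝ}

lemma HasRationalIntegral.congr_ae {G : κ → MvPolynomial ι ℚ} {G' : κ' → MvPolynomial ι ℚ}
    {P Q P' Q' : MvPolynomial ι ℚ} (h : HasRationalIntegral G P Q a)
    (hG : basicOpen G =ᵐ[volume] basicOpen G') (hQ' : ∀ x ∈ basicOpen G', aeval x Q' ≠ 0)
    (hPQ : ∀ᵐ x : ι → ℝ, aeval x P / aeval x Q = aeval x P' / aeval x Q') :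
    HasRationalIntegral G' P' Q' a := by
  refine ⟨hQ', ?_, ?_⟩
  · rw [IntegrableOn, ← Measure.restrict_congr_set hG]
    exact h.integrableOn.congr (ae_restrict_of_ae hPQ)
  · rw [h.eq_integral, ← Measure.restrict_congr_set hG]
    exact integral_congr_ae (ae_restrict_of_ae hPQ)

lemma HasRationalIntegral.congr_basicOpen {G : κ → MvPolynomial ι ℚ} {G' : κ' → MvPolynomial ι ℚ}
    {P Q : MvPolynomial ι ℚ} (h : HasRationalIntegral G P Q a) (hG : basicOpen G = basicOpen G') :
    HasRationalIntegral G' P Q a :=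
  h.congr_ae (.of_eq hG) (hG ▸ h.ne_zero) (.of_forall fun _ => rfl)

lemma HasRationalIntegral.polynomials_ne_zero {G : κ → MvPolynomial ι ℚ} {P Q : MvPolynomial ι ℚ}
    (h : HasRationalIntegral G P Q a) (ha : a ≠ 0) : (∀ j, G j ≠ 0) ∧ P ≠ 0 ∧ Q ≠ 0 := by
  have hempty : basicOpen G ≠ ∅ := fun hG => ha (by rw [h.eq_integral, hG, setIntegral_empty])
  obtain ⟨x, hx⟩ := nonempty_iff_ne_empty.2 hempty
  refine ⟨fun j hj => ?_, ?_, ?_⟩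
  · simpa [hj] using hx j
  · rintro rfl
    exact ha (by simp [h.eq_integral])
  · rintro rfl
    exact h.ne_zero x hx (map_zero _)

lemma HasRationalIntegral.mul_right {G : κ → MvPolynomial ι ℚ} {P Q : MvPolynomial ι ℚ}
    (h : HasRationalIntegral G P Q a) (hQ : Q ≠ 0) {S : MvPolynomial ι ℚ} (hS : S ≠ 0) :
    HasRationalIntegral (Sum.elim G fun _ : Unit => (Q * S) ^ 2) (P * S) (Q * S) a := by
  refine h.congr_ae ?_ (fun x hx => ?_) ?_
  · rw [basicOpen_sumElim]
    filter_upwards [ae_aeval_ne_zero (mul_ne_zero hQ hS)] with x hx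
    refine propext (iff_self_and.2 fun _ _ => ?_)
    rw [map_pow]
    positivity
  · have := hx (Sum.inr ())
    rw [Sum.elim_inr, map_pow] at this
    exact (sq_pos_iff.1 this)
  · filter_upwards [ae_aeval_ne_zero hS] with x hx
    rw [map_mul, map_mul, mul_div_mul_right _ _ hx]

end Sum

section TwoBands

lemma pos_mul_iff_abs_lt {w z : ℝ} (h₀ : 0 ≤ w) (hw : w ≤ 1 / 2) :
    0 < (w ^ 2 - z ^ 2) * ((z - 1) ^ 2 - w ^ 2) ↔ |z| < w ∨ |z - 1| < w := by
  have hz : 1 ≤ |z| + |z - 1| := by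
    simpa using abs_sub z (z - 1)
  rw [mul_pos_iff, sub_pos, sub_pos, sub_neg, sub_neg, sq_lt_sq, sq_lt_sq, sq_lt_sq, sq_lt_sq,
    abs_of_nonneg h₀]
  constructor
  · rintro (h | h)
    · exact .inl h.1
    · exact .inr h.2
  · rintro (h | h)
    · exact .inl ⟨h, by linarith⟩
    · exact .inr ⟨by linarith, h⟩

variable {T : Type} [Fintype T]

/-- The numerator of `signRadius` as a polynomial. -/
noncomputable def signRadiusNum (A B : T → MvPolynomial ι ℚ) : MvPolynomial ι ℚ :=
  (∏ t, A t * B t) ^ 2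

/-- The denominator of `signRadius` as a polynomial. -/
noncomputable def signRadiusDen (A B : T → MvPolynomial ι ℚ) : MvPolynomial ι ℚ :=
  (∏ t, (1 + A t ^ 2 + B t ^ 2)) ^ 2

lemma aeval_signRadiusDen_pos (A B : T → MvPolynomial ι ℚ) (x : ι → ℝ) :
    0 < aeval x (signRadiusDen A B) := by
  simp only [signRadiusDen, map_pow, map_prod, map_add, map_one]
  exact pow_pos (Finset.prod_pos fun t _ => by positivity) 2

/-- The function `signRadius` of two families of polynomials. -/
noncomputable def tubeRadius (A B : T → MvPolynomial ι ℚ) (x : ι → ℝ) : ℝ :=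
  signRadius (fun t => aeval x (A t)) fun t => aeval x (B t)

lemma tubeRadius_nonneg (A B : T → MvPolynomial ι ℚ) (x : ι → ℝ) : 0 ≤ tubeRadius A B x :=
  signRadius_nonneg _ _

lemma tubeRadius_le_half [Nonempty T] (A B : T → MvPolynomial ι ℚ) (x : ι → ℝ) :
    tubeRadius A B x ≤ 1 / 2 :=
  signRadius_le_half _ _

lemma tubeRadius_comm (A B : T → MvPolynomial ι ℚ) : tubeRadius A B = tubeRadius B A :=
  funext fun _ => signRadius_comm _ _

lemma tubeRadius_eq_div (A B : T → MvPolynomial ι ℚ) (x : ι → ℝ) :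
    tubeRadius A B x = aeval x (signRadiusNum A B) / aeval x (signRadiusDen A B) := by
  simp only [tubeRadius, signRadius, signRadiusNum, signRadiusDen, map_pow, map_prod, map_add,
    map_one, map_mul, div_pow]

lemma aeval_signRadiusNum (A B : T → MvPolynomial ι ℚ) (x : ι → ℝ) :
    aeval x (signRadiusNum A B) = aeval x (signRadiusDen A B) * tubeRadius A B x := by
  rw [tubeRadius_eq_div, mul_div_cancel₀ _ (aeval_signRadiusDen_pos A B x).ne']

/-- The conditions cutting out two bands of half-width `tubeRadius A B`, one over the set of all `x`
with `A (some j) x > 0` at height `0` and one over the set of all `x` with `B (some j) x > 0` at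
height `1`. -/
noncomputable def twoBands [Fintype κ] (A B : Option κ → MvPolynomial ι ℚ) :
    κ ⊕ Unit → MvPolynomial (ι ⊕ Unit) ℚ :=
  let Z : MvPolynomial (ι ⊕ Unit) ℚ := X (Sum.inr ())
  let N := rename Sum.inl (signRadiusNum A B)
  let M := rename Sum.inl (signRadiusDen A B)
  Sum.elim (fun j => rename Sum.inl (A (some j)) + Z * rename Sum.inl (B (some j) - A (some j)))
    fun _ => (N ^ 2 - M ^ 2 * Z ^ 2) * (M ^ 2 * (Z - 1) ^ 2 - N ^ 2)

lemma basicOpen_twoBands [Fintype κ] (A B : Option κ → MvPolynomial ι ℚ) :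
    basicOpen (twoBands A B) = splitLast ι ⁻¹' (band (basicOpen (A ∘ some)) 0 (tubeRadius A B) ∪
      band (basicOpen (B ∘ some)) 1 (tubeRadius A B)) := by
  ext x
  simp only [mem_basicOpen, twoBands, Sum.forall, Sum.elim_inl, Sum.elim_inr, forall_const, map_mul,
    map_add, map_sub, map_pow, map_one, aeval_X, aeval_rename_inl_splitLast, ← splitLast_snd,
    aeval_signRadiusNum, mem_preimage]
  obtain ⟨y, z⟩ := splitLast ι x
  have hM := aeval_signRadiusDen_pos A B y
  have hfactor : ∀ m w : ℝ, ((m * w) ^ 2 - m ^ 2 * z ^ 2) * (m ^ 2 * (z - 1) ^ 2 - (m * w) ^ 2) =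
      m ^ 4 * ((w ^ 2 - z ^ 2) * ((z - 1) ^ 2 - w ^ 2)) := fun m w => by ring
  rw [hfactor, mul_pos_iff_of_pos_left (by positivity),
    pos_mul_iff_abs_lt (tubeRadius_nonneg A B y) (tubeRadius_le_half A B y), and_or_left, mem_union,
    mk_mem_band, mk_mem_band, sub_zero]
  exact or_congr
    (and_congr_left fun hz => forall_congr' fun j => add_mul_sub_pos_iff_left hz (some j))
    (and_congr_left fun hz => forall_congr' fun j => add_mul_sub_pos_iff_right hz (some j))

lemma measurable_tubeRadius [Finite ι] (A B : T → MvPolynomial ι ℚ) :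
    Measurable (tubeRadius A B) := by
  simpa only [← tubeRadius_eq_div] using
    measurable_aeval_div (signRadiusNum A B) (signRadiusDen A B)

lemma ae_tubeRadius_pos [Fintype ι] {A B : T → MvPolynomial ι ℚ} (hA : ∀ t, A t ≠ 0)
    (hB : ∀ t, B t ≠ 0) : ∀ᵐ x : ι → ℝ, 0 < tubeRadius A B x := by
  simp only [tubeRadius, signRadius_pos_iff, ae_all_iff]
  intro t
  filter_upwards [ae_aeval_ne_zero (hA t), ae_aeval_ne_zero (hB t)] with x h h' using ⟨h, h'⟩

lemma tubeRadius_mul_abs_div_sub_le (A B : T → MvPolynomial ι ℚ) (t : T) (x : ι → ℝ) (q : ℝ) :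
    tubeRadius A B x * |aeval x (B t) / q - aeval x (A t) / q| ≤ |aeval x (A t) / q| := by
  rw [← sub_div, abs_div, abs_div, ← mul_div_assoc]
  gcongr
  exact signRadius_mul_abs_sub_le (fun t => aeval x (A t)) (fun t => aeval x (B t)) t

/-- Spreads the integrands `A none / Q` and `B none / Q` over the two bands of `twoBands A B`. -/
lemma HasRationalIntegral.add_of_common_denominator [Finite κ] [Fintype ι] {a b : ℝ}
    {A B : Option κ → MvPolynomial ι ℚ} {Q : MvPolynomial ι ℚ}
    (hA : HasRationalIntegral (A ∘ some) (A none) Q a)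
    (hB : HasRationalIntegral (B ∘ some) (B none) Q b) (hA₀ : ∀ t, A t ≠ 0) (hB₀ : ∀ t, B t ≠ 0) :
    IsPeriodIn (ι ⊕ Unit) (a + b) := by
  have := Fintype.ofFinite κ
  obtain ⟨hint, heq⟩ := setIntegral_band_union_band (measurableSet_basicOpen _)
    (measurableSet_basicOpen _) (measurable_tubeRadius A B) (measurable_aeval_div (A none) Q)
    (measurable_aeval_div (B none) Q) (fun x => tubeRadius_mul_abs_div_sub_le A B none x _)
    (fun x => by
      rw [tubeRadius_comm, abs_sub_comm]
      exact tubeRadius_mul_abs_div_sub_le B A none x _)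
    hA.integrableOn hB.integrableOn (ae_tubeRadius_pos hA₀ hB₀) (tubeRadius_le_half A B)
  rw [hA.eq_integral, hB.eq_integral, ← heq]
  refine isPeriodIn_setIntegral
    (P := (rename Sum.inl (A none) + X (Sum.inr ()) * rename Sum.inl (B none - A none)) *
      rename Sum.inl (signRadiusDen A B))
    (Q := 2 * rename Sum.inl (Q * signRadiusNum A B))
    (measurePreserving_splitLast ι) hint (basicOpen_twoBands A B) (fun x hx => ?_) fun x => ?_
  · rw [basicOpen_twoBands] at hx
    have hQw : aeval (splitLast ι x).1 Q ≠ 0 ∧ tubeRadius A B (splitLast ι x).1 ≠ 0 := by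
      rcases hx with h | h <;> obtain ⟨hx, hz⟩ := mk_mem_band.1 h
      · exact ⟨hA.ne_zero _ hx, ((abs_nonneg _).trans_lt hz).ne'⟩
      · exact ⟨hB.ne_zero _ hx, ((abs_nonneg _).trans_lt hz).ne'⟩
    simp [aeval_rename_inl_splitLast, aeval_signRadiusNum, hQw, (aeval_signRadiusDen_pos A B _).ne']
  · simp only [map_mul, map_add, map_sub, map_ofNat, aeval_X, aeval_rename_inl_splitLast,
      ← splitLast_snd, tubeRadius_eq_div]
    rw [← sub_div, mul_div_assoc', ← add_div, mul_div_assoc', div_div_div_eq]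
    ring_nf

end TwoBands

section AddPeriods

variable [Fintype ι] {a b : ℝ}

lemma IsPeriodIn.add (ha : IsPeriodIn ι a) (hb : IsPeriodIn ι b) :
    IsPeriodIn (ι ⊕ Unit) (a + b) := by
  rcases eq_or_ne a 0 with rfl | ha₀
  · simpa using hb.mul (isPeriodIn_one Unit)
  rcases eq_or_ne b 0 with rfl | hb₀
  · simpa using ha.mul (isPeriodIn_one Unit)
  obtain ⟨κ, _, G, P, Q, ha⟩ := ha
  obtain ⟨κ', _, G', P', Q', hb⟩ := hb
  have hQ := (ha.polynomials_ne_zero ha₀).2.2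
  have hQ' := (hb.polynomials_ne_zero hb₀).2.2
  replace ha := ha.mul_right hQ hQ'
  replace hb := hb.mul_right hQ' hQ
  obtain ⟨hG, hP, -⟩ := ha.polynomials_ne_zero ha₀
  obtain ⟨hG', hP', -⟩ := hb.polynomials_ne_zero hb₀
  set K := Sum.elim G fun _ : Unit => (Q * Q') ^ 2
  set K' := Sum.elim G' fun _ : Unit => (Q' * Q) ^ 2
  rw [mul_comm Q' Q] at hb
  refine HasRationalIntegral.add_of_common_denominator
    (A := fun t => t.elim (P * Q') (Sum.elim K (1 : κ' ⊕ Unit → MvPolynomial ι ℚ)))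
    (B := fun t => t.elim (P' * Q) (Sum.elim (1 : κ ⊕ Unit → MvPolynomial ι ℚ) K'))
    (ha.congr_basicOpen ?_) (hb.congr_basicOpen ?_) ?_ ?_
  · ext x
    simp [mem_basicOpen]
  · ext x
    simp [mem_basicOpen]
  · rintro (_ | t | _)
    exacts [hP, hG t, one_ne_zero]
  · rintro (_ | _ | t)
    exacts [hP', one_ne_zero, hG' t]

end AddPeriods

/-- Real periods as a subalgebra of `ℝ`. -/
def periodSubalgebra : Subalgebra ℚ ℝ where
  carrier := {α | IsRealPeriod α}
  add_mem' ha hb := by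
    obtain ⟨k, ha⟩ := exists_isPeriodIn_of_isRealPeriod ha
    obtain ⟨l, hb⟩ := exists_isPeriodIn_of_isRealPeriod hb
    have ha' := ha.mul (isPeriodIn_one (Fin l))
    have hb' := (isPeriodIn_one (Fin k)).mul hb
    rw [mul_one] at ha'
    rw [one_mul] at hb'
    exact (ha'.add hb').isRealPeriod
  mul_mem' ha hb := by
    obtain ⟨k, ha⟩ := exists_isPeriodIn_of_isRealPeriod ha
    obtain ⟨l, hb⟩ := exists_isPeriodIn_of_isRealPeriod hb
    exact (ha.mul hb).isRealPeriod
  algebraMap_mem' r := by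
    simpa [Rat.smul_def] using ((isPeriodIn_one Unit).smul r).isRealPeriod

lemma adjoin_volumes_le_periodSubalgebra :
    Algebra.adjoin ℚ BasicSemialgebraicVolumes ≤ periodSubalgebra := by
  refine Algebra.adjoin_le ?_
  rintro _ ⟨k, q, G, hG, rfl⟩
  exact (isPeriodIn_measureReal (G := G) hG.measure_lt_top.ne).isRealPeriod

/-! ### The span of the volumes -/

/-- The `ℚ`-vector space spanned by the volumes of bounded basic open semialgebraic sets. -/
noncomputable def volumeSpan : Submodule ℚ ℝ := Submodule.span ℚ BasicSemialgebraicVolumes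

section VolumeSpan

variable [Fintype ι] [Finite κ] {G : κ → MvPolynomial ι ℚ}

lemma measureReal_basicOpen_mem_volumeSpan (hG : Bornology.IsBounded (basicOpen G)) :
    volume.real (basicOpen G) ∈ volumeSpan := by
  let e := Fintype.equivFin ι
  have hrename := basicOpen_rename e (Finite.equivFin κ) G
  refine Submodule.subset_span ⟨_, _, fun j => rename e (G ((Finite.equivFin κ).symm j)), ?_, ?_⟩
  · change Bornology.IsBounded (basicOpen _)
    exact hrename ▸ isBounded_preimage_reindex e hG
  · change volume.real _ = volume.real (basicOpen _)
    rw [hrename, measureReal_def, measureReal_def,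
      (measurePreserving_reindex e).measure_preimage_equiv]

/-- The integral of a nonnegative function is the volume of the region under its graph. -/
lemma setIntegral_div_mem_volumeSpan_of_nonneg (hG : Bornology.IsBounded (basicOpen G))
    {P Q : MvPolynomial ι ℚ} (hQ : ∀ x ∈ basicOpen G, aeval x Q ≠ 0) {B : ℝ}
    (h₀ : ∀ x ∈ basicOpen G, 0 ≤ aeval x P / aeval x Q)
    (hB : ∀ x ∈ basicOpen G, aeval x P / aeval x Q ≤ B) :
    ∫ x in basicOpen G, aeval x P / aeval x Q ∈ volumeSpan := by
  let D := basicOpen G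
  let f := fun x : ι → ℝ => aeval x P / aeval x Q
  let Z : MvPolynomial (ι ⊕ Unit) ℚ := X (Sum.inr ())
  let H : κ ⊕ Bool → MvPolynomial (ι ⊕ Unit) ℚ := Sum.elim (fun j => rename Sum.inl (G j))
    fun t => cond t Z (rename Sum.inl (P * Q) - Z * rename Sum.inl (Q ^ 2))
  have hH : basicOpen H = splitLast ι ⁻¹' regionBetween 0 f D := by
    ext x
    simp only [H, Z, mem_basicOpen, Sum.forall, Sum.elim_inl, Sum.elim_inr, Bool.forall_bool,
      cond_true, cond_false, map_sub, map_mul, map_pow, aeval_X, aeval_rename_inl_splitLast,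
      ← splitLast_snd, mem_preimage, regionBetween]
    refine and_congr_right fun hx => ?_
    have hQx : aeval (splitLast ι x).1 Q ≠ 0 := hQ _ hx
    rw [and_comm, mem_Ioo, sub_pos, ← lt_div_iff₀ (by positivity), pow_two,
      mul_div_mul_right _ _ hQx]
    rfl
  have hbdd : Bornology.IsBounded (basicOpen H) := by
    refine (isBounded_preimage_splitLast hG (Metric.isBounded_Icc 0 B)).subset ?_
    rw [hH]
    exact preimage_mono fun z hz => ⟨hz.1, hz.2.1.le, hz.2.2.le.trans (hB _ hz.1)⟩
  have hint : IntegrableOn f D := integrableOn_of_forall_abs_le (measurableSet_basicOpen G)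
    hG.measure_lt_top.ne (measurable_aeval_div P Q) fun x hx => by
      rw [abs_of_nonneg (h₀ x hx)]; exact hB x hx
  have hvol := measureReal_basicOpen_mem_volumeSpan hbdd
  rw [measureReal_def, hH, (measurePreserving_splitLast ι).measure_preimage_equiv,
    Measure.volume_eq_prod, volume_regionBetween_eq_integral (f := 0) integrableOn_zero hint
      (measurableSet_basicOpen G) h₀, ENNReal.toReal_ofReal] at hvol
  · simpa using hvol
  · exact setIntegral_nonneg (measurableSet_basicOpen G) (by simpa using h₀)

lemma setIntegral_div_mem_volumeSpan (hG : Bornology.IsBounded (basicOpen G))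
    {P Q : MvPolynomial ι ℚ} (hQ : ∀ x ∈ basicOpen G, aeval x Q ≠ 0) {B : ℕ}
    (hB : ∀ x ∈ basicOpen G, |aeval x P / aeval x Q| ≤ B) :
    ∫ x in basicOpen G, aeval x P / aeval x Q ∈ volumeSpan := by
  have hshift : ∀ x ∈ basicOpen G,
      aeval x (P + (B : MvPolynomial ι ℚ) * Q) / aeval x Q = aeval x P / aeval x Q + B := by
    intro x hx
    rw [map_add, map_mul, map_natCast, add_div, mul_div_cancel_right₀ _ (hQ x hx)]
  have hmem := setIntegral_div_mem_volumeSpan_of_nonneg (B := 2 * B) hG hQ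
    (fun x hx => by rw [hshift x hx]; linarith [(abs_le.1 (hB x hx)).1])
    (fun x hx => by rw [hshift x hx]; linarith [(abs_le.1 (hB x hx)).2])
  have hint : IntegrableOn (fun x : ι → ℝ => aeval x P / aeval x Q) (basicOpen G) :=
    integrableOn_of_forall_abs_le (measurableSet_basicOpen G)
      hG.measure_lt_top.ne (measurable_aeval_div P Q) hB
  rw [setIntegral_congr_fun (measurableSet_basicOpen G) hshift,
    integral_add hint (integrableOn_const hG.measure_lt_top.ne), setIntegral_const] at hmem
  have hvol := volumeSpan.smul_mem (B : ℚ) (measureReal_basicOpen_mem_volumeSpan hG)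
  simpa [Rat.smul_def, mul_comm] using volumeSpan.sub_mem hmem hvol

end VolumeSpan

section Logarithm

lemma setIntegral_Ioo_rpow_inv {k : ℕ} {a : ℝ} (ha : 0 < a) (ha₁ : a < 1) :
    ∫ s in Ioo (a ^ (k⁻¹ : ℝ)) 1, s⁻¹ = -Real.log a / k := by
  have hroot : 0 < a ^ (k⁻¹ : ℝ) := Real.rpow_pos_of_pos ha _
  have hroot₁ : a ^ (k⁻¹ : ℝ) ≤ 1 := Real.rpow_le_one ha.le ha₁.le (by positivity)
  rw [← integral_Ioc_eq_integral_Ioo, ← intervalIntegral.integral_of_le hroot₁,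
    integral_inv_of_pos hroot one_pos, one_div, Real.log_inv, Real.log_rpow ha]
  ring

lemma setIntegral_pi_inv_prod {k : ℕ} {a : ℝ} (ha : 0 < a) (ha₁ : a < 1) :
    ∫ s in univ.pi fun _ : Fin k => Ioo (a ^ (k⁻¹ : ℝ)) 1, (∏ i, s i)⁻¹ =
      (-Real.log a / k) ^ k := by
  simp only [← Finset.prod_inv_distrib]
  rw [volume_pi, Measure.restrict_pi_pi, integral_fintype_prod_eq_pow,
    setIntegral_Ioo_rpow_inv ha ha₁, Fintype.card_fin]

lemma le_prod_of_mem_pi_Ioo_rpow_inv {k : ℕ} {a : ℝ} (ha : 0 < a) (ha₁ : a ≤ 1) {s : Fin k → ℝ}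
    (hs : s ∈ univ.pi fun _ => Ioo (a ^ (k⁻¹ : ℝ)) 1) : a ≤ ∏ i, s i := by
  rcases eq_or_ne k 0 with rfl | hk
  · simpa using ha₁
  · calc a = ∏ _i : Fin k, a ^ (k⁻¹ : ℝ) := by
          rw [Finset.prod_const, Finset.card_univ, Fintype.card_fin,
            Real.rpow_inv_natCast_pow ha.le hk]
      _ ≤ ∏ i, s i := Finset.prod_le_prod (fun _ _ => Real.rpow_nonneg ha.le _)
          fun i _ => (hs i (mem_univ i)).1.le

lemma mem_Ioo_rpow_inv_iff {k : ℕ} (hk : k ≠ 0) {a s : ℝ} (ha : 0 < a) :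
    s ∈ Ioo (a ^ (k⁻¹ : ℝ)) 1 ↔ 0 < s ∧ 0 < 1 - s ∧ 0 < s ^ k - a := by
  have hroot : 0 < a ^ (k⁻¹ : ℝ) := Real.rpow_pos_of_pos ha _
  have hpow : (a ^ (k⁻¹ : ℝ)) ^ k = a := Real.rpow_inv_natCast_pow ha.le hk
  rw [sub_pos, sub_pos]
  constructor
  · rintro ⟨h, h₁⟩
    exact ⟨hroot.trans h, h₁, hpow.symm.trans_lt (pow_lt_pow_left₀ h hroot.le hk)⟩
  · rintro ⟨h₀, h₁, h⟩
    exact ⟨lt_of_pow_lt_pow_left₀ k h₀.le (hpow.trans_lt h), h₁⟩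

/-- The conditions for `(x, s)` to satisfy `G x > 0` and `g(x)^(1/k) < s i < 1` for all `i`. -/
noncomputable def rootBox (G : κ → MvPolynomial ι ℚ) (g : MvPolynomial ι ℚ) (k : ℕ) :
    κ ⊕ Fin k ⊕ Fin k ⊕ Fin k → MvPolynomial (ι ⊕ Fin k) ℚ :=
  Sum.elim (fun j => rename Sum.inl (G j)) <| Sum.elim (fun i => X (Sum.inr i)) <|
    Sum.elim (fun i => 1 - X (Sum.inr i)) fun i => X (Sum.inr i) ^ k - rename Sum.inl g

lemma basicOpen_rootBox {G : κ → MvPolynomial ι ℚ} {g : MvPolynomial ι ℚ}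
    (hg : ∀ x ∈ basicOpen G, 0 < aeval x g) (k : ℕ) :
    basicOpen (rootBox G g k) = splitSum ι (Fin k) ⁻¹' {z | z.1 ∈ basicOpen G ∧
      z.2 ∈ univ.pi fun _ => Ioo (aeval z.1 g ^ (k⁻¹ : ℝ)) 1} := by
  ext x
  simp only [rootBox, mem_basicOpen, Sum.forall, Sum.elim_inl, Sum.elim_inr, map_sub, map_pow,
    map_one, aeval_X, aeval_rename_inl, ← forall_and]
  refine and_congr_right fun hx => forall_congr' fun i => ?_
  rw [imp_iff_right (mem_univ i), mem_Ioo_rpow_inv_iff i.pos.ne' (hg _ hx)]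
  rfl

variable {G : κ → MvPolynomial ι ℚ} {g : MvPolynomial ι ℚ}

lemma isBounded_basicOpen_rootBox (hG : Bornology.IsBounded (basicOpen G))
    (hg : ∀ x ∈ basicOpen G, 0 < aeval x g) (k : ℕ) :
    Bornology.IsBounded (basicOpen (rootBox G g k)) := by
  refine (isBounded_preimage_splitSum hG
    (Metric.isBounded_Icc (0 : Fin k → ℝ) 1)).subset ?_
  rw [basicOpen_rootBox hg]
  refine preimage_mono fun z hz => ⟨hz.1, fun i => ?_, fun i => (hz.2 i (mem_univ i)).2.le⟩
  exact (Real.rpow_nonneg (hg _ hz.1).le _).trans (hz.2 i (mem_univ i)).1.le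

/-- The product of the new coordinates is at least `g`, which keeps `g / ∏ i, s i` bounded. -/
lemma exists_nat_forall_abs_div_prod_le [Finite ι] (hG : Bornology.IsBounded (basicOpen G))
    (hg₀ : ∀ x ∈ basicOpen G, 0 < aeval x g) (hg₁ : ∀ x ∈ basicOpen G, aeval x g < 1)
    (p : MvPolynomial ι ℚ) : ∃ B : ℕ, ∀ x ∈ basicOpen G, ∀ (k : ℕ) (s : Fin k → ℝ),
      (s ∈ univ.pi fun _ => Ioo (aeval x g ^ (k⁻¹ : ℝ)) 1) →
        |aeval x (p * g) / ∏ i, s i| ≤ B := by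
  obtain ⟨B, hB⟩ := exists_nat_forall_abs_aeval_le hG p
  refine ⟨B, fun x hx k s hs => ?_⟩
  have hle := le_prod_of_mem_pi_Ioo_rpow_inv (hg₀ x hx) (hg₁ x hx).le hs
  have hpos := (hg₀ x hx).trans_le hle
  rw [map_mul, abs_div, abs_mul, abs_of_pos (hg₀ x hx), abs_of_pos hpos, div_le_iff₀ hpos]
  exact mul_le_mul (hB x hx) hle (hg₀ x hx).le B.cast_nonneg

variable [Fintype ι] [Finite κ]

lemma setIntegral_rootBox (hG : Bornology.IsBounded (basicOpen G))
    (hg₀ : ∀ x ∈ basicOpen G, 0 < aeval x g) (hg₁ : ∀ x ∈ basicOpen G, aeval x g < 1)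
    (p : MvPolynomial ι ℚ) (k : ℕ) :
    ∫ x in basicOpen (rootBox G g k),
        aeval x (rename Sum.inl (p * g)) / aeval x (∏ i, X (Sum.inr i) : MvPolynomial _ ℚ) =
      ∫ x in basicOpen G, aeval x (p * g) * (-Real.log (aeval x g) / k) ^ k := by
  let E : Set ((ι → ℝ) × (Fin k → ℝ)) := {z | z.1 ∈ basicOpen G ∧
    z.2 ∈ univ.pi fun _ => Ioo (aeval z.1 g ^ (k⁻¹ : ℝ)) 1}
  have hEpre : basicOpen (rootBox G g k) = splitSum ι (Fin k) ⁻¹' E := basicOpen_rootBox hg₀ k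
  have hE : MeasurableSet E :=
    (MeasurableEquiv.measurableSet_preimage _).1 (hEpre ▸ measurableSet_basicOpen _)
  have hEvol : volume E ≠ ⊤ := by
    rw [← (measurePreserving_splitSum ι (Fin k)).measure_preimage_equiv, ← hEpre]
    exact (isBounded_basicOpen_rootBox hG hg₀ k).measure_lt_top.ne
  obtain ⟨B, hB⟩ := exists_nat_forall_abs_div_prod_le hG hg₀ hg₁ p
  have hmeas : Measurable fun z : (ι → ℝ) × (Fin k → ℝ) =>
      aeval z.1 (p * g) / ∏ i, z.2 i :=
    ((continuous_aeval _).comp continuous_fst).measurable.div (by fun_prop)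
  have hint : IntegrableOn (fun z : (ι → ℝ) × (Fin k → ℝ) => aeval z.1 (p * g) / ∏ i, z.2 i) E :=
    integrableOn_of_forall_abs_le hE hEvol hmeas fun z hz => hB z.1 hz.1 k z.2 hz.2
  calc _ = ∫ z in E, aeval z.1 (p * g) / ∏ i, z.2 i := by
        rw [hEpre, ← (measurePreserving_splitSum ι (Fin k)).setIntegral_preimage_emb
          (splitSum ι (Fin k)).measurableEmbedding]
        simp only [aeval_rename_inl, map_prod, aeval_X]
        rfl
    _ = ∫ x in basicOpen G, ∫ s in univ.pi fun _ => Ioo (aeval x g ^ (k⁻¹ : ℝ)) 1,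
          aeval x (p * g) / ∏ i, s i :=
        setIntegral_prod_fiber hE (measurableSet_basicOpen G) (fun _ _ => Iff.rfl) hint
    _ = _ := setIntegral_congr_fun (measurableSet_basicOpen G) fun x hx => by
        simp only [div_eq_mul_inv (aeval x (p * g)), integral_const_mul,
          setIntegral_pi_inv_prod (hg₀ x hx) (hg₁ x hx)]

lemma setIntegral_mul_log_pow_mem_volumeSpan (hG : Bornology.IsBounded (basicOpen G))
    (hg₀ : ∀ x ∈ basicOpen G, 0 < aeval x g) (hg₁ : ∀ x ∈ basicOpen G, aeval x g < 1)
    (p : MvPolynomial ι ℚ) (k : ℕ) :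
    ∫ x in basicOpen G, aeval x (p * g) * Real.log (aeval x g) ^ k ∈ volumeSpan := by
  obtain ⟨B, hB⟩ := exists_nat_forall_abs_div_prod_le hG hg₀ hg₁ p
  have hfiber : ∀ x ∈ basicOpen (rootBox G g k), (splitSum ι (Fin k) x).1 ∈ basicOpen G ∧
      (splitSum ι (Fin k) x).2 ∈ univ.pi fun _ =>
        Ioo (aeval (splitSum ι (Fin k) x).1 g ^ (k⁻¹ : ℝ)) 1 := fun x hx => by
    rwa [basicOpen_rootBox hg₀] at hx
  have hprod (x : ι ⊕ Fin k → ℝ) : aeval x (∏ i, X (Sum.inr i) : MvPolynomial (ι ⊕ Fin k) ℚ) =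
      ∏ i, (splitSum ι (Fin k) x).2 i := by
    simp only [map_prod, aeval_X]
    rfl
  have hmem := setIntegral_div_mem_volumeSpan (isBounded_basicOpen_rootBox hG hg₀ k)
    (P := rename Sum.inl (p * g)) (Q := ∏ i, X (Sum.inr i)) (B := B)
    (fun x hx => by
      obtain ⟨h, hs⟩ := hfiber x hx
      rw [hprod]
      exact ((hg₀ _ h).trans_le (le_prod_of_mem_pi_Ioo_rpow_inv (hg₀ _ h) (hg₁ _ h).le hs)).ne')
    (fun x hx => by
      rw [hprod, aeval_rename_inl]
      exact hB _ (hfiber x hx).1 k _ (hfiber x hx).2)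
  rw [setIntegral_rootBox hG hg₀ hg₁] at hmem
  have hscale : ∫ x in basicOpen G, aeval x (p * g) * Real.log (aeval x g) ^ k =
      (-k : ℚ) ^ k • ∫ x in basicOpen G, aeval x (p * g) * (-Real.log (aeval x g) / k) ^ k := by
    rw [Rat.smul_def, ← integral_const_mul]
    congr 1 with x
    rcases eq_or_ne k 0 with rfl | hk
    · simp
    · push_cast
      rw [mul_left_comm, ← mul_pow, neg_div, neg_mul_neg, mul_div_cancel₀ _ (by positivity)]
  exact hscale ▸ volumeSpan.smul_mem _ hmem

end Logarithm

/-! ### Derivatives of `p * G ^ s` and linear dependence -/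

section WeightedDeriv

variable {R S : Type} [CommRing R] [CommRing S]

lemma totalDegree_pderiv_le (i : ι) (p : MvPolynomial ι R) :
    (pderiv i p).totalDegree ≤ p.totalDegree := by
  classical
  conv_lhs => rw [p.as_sum, map_sum]
  refine totalDegree_finsetSum_le fun v hv => ?_
  rw [pderiv_monomial]
  exact (totalDegree_monomial_le _ _).trans
    ((Finsupp.degree_mono tsub_le_self).trans (le_totalDegree hv))

/-- The polynomial `q` for which formally `∂ᵢ(p * G ^ s) = q * G ^ (s - 1)`. -/
noncomputable def weightedDeriv (G : MvPolynomial ι R) (s : R) (i : ι) (p : MvPolynomial ι R) :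
    MvPolynomial ι R :=
  pderiv i p * G + C s * (p * pderiv i G)

lemma totalDegree_weightedDeriv_le (G : MvPolynomial ι R) (s : R) (i : ι) (p : MvPolynomial ι R) :
    (weightedDeriv G s i p).totalDegree ≤ p.totalDegree + G.totalDegree := by
  refine (totalDegree_add _ _).trans (max_le ?_ ?_)
  · exact (totalDegree_mul _ _).trans (add_le_add_left (totalDegree_pderiv_le i p) _)
  · refine (totalDegree_mul _ _).trans ?_
    rw [totalDegree_C, zero_add]
    exact (totalDegree_mul _ _).trans (add_le_add_right (totalDegree_pderiv_le i G) _)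

/-- The polynomial `q` for which formally `∂_l(p * G ^ s) = q * G ^ (s - l.length)`, the head of `l`
being differentiated last. -/
noncomputable def iterWeightedDeriv (G p : MvPolynomial ι R) (s : R) : List ι → MvPolynomial ι R
  | [] => p
  | i :: l => weightedDeriv G (s - l.length) i (iterWeightedDeriv G p s l)

lemma totalDegree_iterWeightedDeriv_le (G p : MvPolynomial ι R) (s : R) (l : List ι) :
    (iterWeightedDeriv G p s l).totalDegree ≤ p.totalDegree + l.length * G.totalDegree := by
  induction l with
  | nil => simp [iterWeightedDeriv]
  | cons i l ih =>
    calc _ ≤ (iterWeightedDeriv G p s l).totalDegree + G.totalDegree :=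
          totalDegree_weightedDeriv_le _ _ _ _
      _ ≤ p.totalDegree + l.length * G.totalDegree + G.totalDegree := add_le_add_left ih _
      _ = _ := by rw [List.length_cons]; ring

lemma map_iterWeightedDeriv (f : R →+* S) (G p : MvPolynomial ι R) (s : R) (l : List ι) :
    map f (iterWeightedDeriv G p s l) = iterWeightedDeriv (map f G) (map f p) (f s) l := by
  induction l with
  | nil => rfl
  | cons i l ih =>
    simp only [iterWeightedDeriv, weightedDeriv, map_add, map_mul, ← pderiv_map, ih, map_C,
      map_sub, map_natCast]

/-- The iterated partial derivative along `l`, the head of `l` being differentiated first. -/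
noncomputable def iterPDeriv (l : List ι) (p : MvPolynomial ι R) : MvPolynomial ι R :=
  l.foldl (fun q i => pderiv i q) p

lemma iterPDeriv_cons (i : ι) (l : List ι) (p : MvPolynomial ι R) :
    iterPDeriv (i :: l) p = iterPDeriv l (pderiv i p) := rfl

lemma iterPDeriv_zero (l : List ι) : iterPDeriv l (0 : MvPolynomial ι R) = 0 := by
  induction l with
  | nil => rfl
  | cons i l ih => rw [iterPDeriv_cons, map_zero, ih]

lemma iterPDeriv_monomial_eq_zero [DecidableEq ι] {l : List ι} {m : ι →₀ ℕ} {i : ι}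
    (hi : m i < l.count i) (a : R) : iterPDeriv l (monomial m a) = 0 := by
  induction l generalizing m a with
  | nil => simp at hi
  | cons j l ih =>
    rw [iterPDeriv_cons, pderiv_monomial]
    by_cases hj : m j = 0
    · rw [hj, Nat.cast_zero, mul_zero, monomial_zero, iterPDeriv_zero]
    · refine ih ?_ _
      rw [List.count_cons] at hi
      by_cases hij : j = i
      · subst hij
        simp only [BEq.rfl, if_true, Finsupp.tsub_apply, Finsupp.single_eq_same] at hi ⊢
        omega
      · simpa [hij] using hi

lemma exists_iterPDeriv_monomial_eq_C [DecidableEq ι] [IsDomain R] [CharZero R] {l : List ι}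
    {m : ι →₀ ℕ} (hm : ∀ i, l.count i = m i) {a : R} (ha : a ≠ 0) :
    ∃ c : R, c ≠ 0 ∧ iterPDeriv l (monomial m a) = C c := by
  induction l generalizing m a with
  | nil =>
    obtain rfl : m = 0 := by ext i; simpa using (hm i).symm
    exact ⟨a, ha, rfl⟩
  | cons j l ih =>
    rw [iterPDeriv_cons, pderiv_monomial]
    refine ih (fun i => ?_) (mul_ne_zero ha (Nat.cast_ne_zero.2 ?_))
    · have hmi := hm i
      rw [List.count_cons] at hmi
      by_cases hij : j = i
      · subst hij
        simp only [BEq.rfl, if_true, Finsupp.tsub_apply, Finsupp.single_eq_same] at hmi ⊢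
        omega
      · simpa [hij] using hmi
    · rw [← hm j, List.count_cons_self]
      exact Nat.succ_ne_zero _

/-- A list in which each `i` occurs `k i` times. -/
noncomputable def multiIndexList [Finite ι] (k : ι → ℕ) : List ι :=
  (Finsupp.toMultiset (Finsupp.equivFunOnFinite.symm k)).toList

lemma count_multiIndexList [Finite ι] [DecidableEq ι] (k : ι → ℕ) (i : ι) :
    (multiIndexList k).count i = k i := by
  rw [multiIndexList, ← Multiset.coe_count, Multiset.coe_toList, Finsupp.count_toMultiset]
  rfl

lemma iterPDeriv_multiIndexList_monomial_eq_zero [Finite ι] {k k' : ι → ℕ} (hk : ¬k' ≤ k) (a : R) :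
    iterPDeriv (multiIndexList k') (monomial (Finsupp.equivFunOnFinite.symm k) a) = 0 := by
  classical
  obtain ⟨i, hi⟩ := not_forall.1 hk
  refine iterPDeriv_monomial_eq_zero (i := i) ?_ a
  rw [count_multiIndexList]
  exact not_le.1 hi

lemma length_multiIndexList [Fintype ι] (k : ι → ℕ) :
    (multiIndexList k).length = ∑ i, k i := by
  rw [multiIndexList, Multiset.length_toList, Finsupp.card_toMultiset,
    Finsupp.sum_fintype _ _ fun _ => rfl]
  rfl

lemma sum_val_le_card_mul [Fintype ι] {N : ℕ} (k : ι → Fin N) :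
    ∑ i, (k i : ℕ) ≤ Fintype.card ι * N :=
  Finset.sum_le_card_nsmul _ _ _ fun i _ => (k i).2.le

end WeightedDeriv

section LinearDependence

variable {R : Type} [CommRing R]

lemma eq_zero_of_totalDegree_lt [Finite ι] {f : MvPolynomial ι R} {d : ℕ} (hf : f.totalDegree < d)
    (h : ∀ e : ι → Fin d, coeff (Finsupp.equivFunOnFinite.symm fun i => (e i : ℕ)) f = 0) :
    f = 0 := by
  ext m
  rw [coeff_zero]
  by_contra hm
  have hlt (i : ι) : m i < d :=
    ((Finsupp.le_degree i m).trans (le_totalDegree (mem_support_iff.2 hm))).trans_lt hf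
  refine hm ((congrArg (coeff · f) ?_).trans (h fun i => ⟨m i, hlt i⟩))
  ext i
  rfl

/-- There are at most `d ^ n` monomials of degree less than `d` in `n` variables. -/
lemma exists_relation_of_totalDegree_lt [Nontrivial R] [Fintype ι] {α : Type} [Fintype α]
    {v : α → MvPolynomial ι R} {d : ℕ} (hv : ∀ a, (v a).totalDegree < d)
    (hcard : d ^ Fintype.card ι < Fintype.card α) :
    ∃ c : α → R, (∃ a, c a ≠ 0) ∧ ∑ a, C (c a) * v a = 0 := by
  classical
  let T : MvPolynomial ι R →ₗ[R] ((ι → Fin d) → R) :=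
    LinearMap.pi fun e => lcoeff R (Finsupp.equivFunOnFinite.symm fun i => (e i : ℕ))
  have hdep : ¬ LinearIndependent R fun a => T (v a) := fun hli => by
    have hle := hli.fintype_card_le_finrank
    rw [Module.finrank_fintype_fun_eq_card, Fintype.card_fun, Fintype.card_fin] at hle
    exact hcard.not_ge hle
  obtain ⟨c, hc, ha⟩ := Fintype.not_linearIndependent_iff.1 hdep
  refine ⟨c, ha, eq_zero_of_totalDegree_lt (d := d) ?_ fun e => ?_⟩
  · obtain ⟨a, -⟩ := ha
    refine (totalDegree_finsetSum_le (d := d - 1) fun a _ => ?_).trans_lt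
      (Nat.sub_one_lt (Nat.ne_zero_of_lt (hv a)))
    refine (totalDegree_mul _ _).trans ?_
    rw [totalDegree_C, zero_add]
    exact Nat.le_sub_one_of_lt (hv a)
  · have hT : T (∑ a, C (c a) * v a) = 0 := by
      simpa only [← smul_eq_C_mul, map_sum, map_smul] using hc
    exact congrFun hT e

lemma exists_iterWeightedDeriv_relation [Nontrivial R] [Fintype ι] [DecidableEq ι]
    (G p : MvPolynomial ι R) (t : ℕ → R) :
    ∃ (N : ℕ) (c : Fin N × (ι → Fin N) → R), (∃ a, c a ≠ 0) ∧
      ∑ a, C (c a) * (iterWeightedDeriv G p (t a.1) (multiIndexList fun i => a.2 i) *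
        G ^ (a.1 + Fintype.card ι * N - ∑ i, (a.2 i : ℕ))) = 0 := by
  let n := Fintype.card ι
  let K := p.totalDegree + (n + 1) * G.totalDegree + 1
  let N := K ^ n + 1
  refine ⟨N, exists_relation_of_totalDegree_lt (d := K * N) (fun a => ?_) ?_⟩
  · have hsum : ∑ i, (a.2 i : ℕ) ≤ n * N := sum_val_le_card_mul a.2
    have hadd : ∑ i, (a.2 i : ℕ) + (a.1 + n * N - ∑ i, (a.2 i : ℕ)) = a.1 + n * N := by omega
    calc _ ≤ p.totalDegree + (∑ i, (a.2 i : ℕ)) * G.totalDegree +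
          (a.1 + n * N - ∑ i, (a.2 i : ℕ)) * G.totalDegree := by
          refine (totalDegree_mul _ _).trans (add_le_add ?_ (totalDegree_pow _ _))
          exact (totalDegree_iterWeightedDeriv_le _ _ _ _).trans_eq
            (by rw [length_multiIndexList])
      _ = p.totalDegree * 1 + (a.1 + n * N) * G.totalDegree := by
          rw [mul_one, add_assoc, ← add_mul, hadd]
      _ ≤ p.totalDegree * N + (N + n * N) * G.totalDegree := by
          gcongr
          · exact Nat.le_add_left _ _
          · exact a.1.2.le
      _ < p.totalDegree * N + (N + n * N) * G.totalDegree + N := by omega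
      _ = K * N := by ring
  · rw [Fintype.card_prod, Fintype.card_fun, Fintype.card_fin, mul_pow]
    exact Nat.mul_lt_mul_of_pos_right (Nat.lt_succ_self _) (by positivity)

end LinearDependence

/-! ### Integration by parts for the Mellin transform -/

/-- A polynomial `g` with values in `(0, 1)` on the bounded open set `D`, vanishing on the boundary,
so that integrating by parts against powers of `g` over `D` produces no boundary terms. -/
structure IsBoundaryWeight (D : Set (ι → ℝ)) (g : MvPolynomial ι ℝ) : Prop where
  isOpen : IsOpen D
  isBounded : Bornology.IsBounded D
  pos : ∀ x ∈ D, 0 < eval x g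
  lt_one : ∀ x ∈ D, eval x g < 1
  eq_zero : ∀ x ∈ closure D, x ∉ D → eval x g = 0

/-- The Mellin transform `s ↦ ∫_D r * g ^ s`. -/
noncomputable def mellin [Fintype ι] (D : Set (ι → ℝ)) (g : MvPolynomial ι ℝ) (s : ℝ)
    (r : MvPolynomial ι ℝ) : ℝ :=
  ∫ x in D, eval x r * eval x g ^ s

lemma hasDerivAt_eval_add_smul_single [DecidableEq ι] (i : ι) (p : MvPolynomial ι ℝ)
    (x : ι → ℝ) :
    HasDerivAt (fun t : ℝ => eval (x + t • (Pi.single i 1 : ι → ℝ)) p) (eval x (pderiv i p)) 0 := by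
  induction p using MvPolynomial.induction_on with
  | C a => simpa using hasDerivAt_const (0 : ℝ) a
  | add p q hp hq =>
    simp only [map_add]
    exact hp.fun_add hq
  | mul_X p j hp =>
    have hcoord : HasDerivAt (fun t : ℝ => (x + t • (Pi.single i 1 : ι → ℝ)) j)
        (Pi.single (M := fun _ => ℝ) i 1 j) 0 := by
      simpa using ((hasDerivAt_id (0 : ℝ)).mul_const ((Pi.single i 1 : ι → ℝ) j)).const_add (x j)
    simp only [map_mul, eval_X, pderiv_mul, map_add, pderiv_X]
    refine (hp.fun_mul hcoord).congr_deriv ?_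
    rcases eq_or_ne j i with rfl | hji
    · simp
    · simp [hji]

lemma mellin_zero [Fintype ι] {D : Set (ι → ℝ)} (g : MvPolynomial ι ℝ) (s : ℝ) :
    mellin D g s 0 = 0 := by simp [mellin]

lemma mellin_C_mul [Fintype ι] {D : Set (ι → ℝ)} (g : MvPolynomial ι ℝ) (s c : ℝ)
    (r : MvPolynomial ι ℝ) : mellin D g s (C c * r) = c * mellin D g s r := by
  simp only [mellin, map_mul, eval_C, mul_assoc, integral_const_mul]

namespace IsBoundaryWeight

variable {D : Set (ι → ℝ)} {g : MvPolynomial ι ℝ}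

section LineDeriv

variable [DecidableEq ι]

lemma hasLineDerivAt_of_mem (h : IsBoundaryWeight D g) (i : ι) (r : MvPolynomial ι ℝ) (s : ℝ)
    {x : ι → ℝ} (hx : x ∈ D) :
    HasLineDerivAt ℝ (D.indicator fun x => eval x r * eval x g ^ s)
      (eval x (weightedDeriv g s i r) * eval x g ^ (s - 1)) x (Pi.single i 1) := by
  have hr := hasDerivAt_eval_add_smul_single i r x
  have hg := hasDerivAt_eval_add_smul_single i g x
  have hne : eval (x + (0 : ℝ) • (Pi.single i 1 : ι → ℝ)) g ≠ 0 := by simpa using (h.pos x hx).ne'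
  have hnear : ∀ᶠ t : ℝ in nhds 0, x + t • (Pi.single i 1 : ι → ℝ) ∈ D :=
    ContinuousAt.eventually_mem (by fun_prop) (by simpa using h.isOpen.mem_nhds hx)
  refine ((hr.mul (hg.rpow_const (p := s) (Or.inl hne))).congr_deriv ?_).congr_of_eventuallyEq ?_
  · have hpow : eval x g ^ s = eval x g * eval x g ^ (s - 1) := by
      rw [Real.rpow_sub_one (h.pos x hx).ne', mul_div_cancel₀ _ (h.pos x hx).ne']
    simp only [zero_smul, add_zero, weightedDeriv, map_add, map_mul, eval_C, hpow]
    ring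
  · filter_upwards [hnear] with t ht
    exact indicator_of_mem ht _

/-- At the boundary the function is dominated by `r * g ^ 2`, which vanishes to second order. -/
lemma hasLineDerivAt_of_mem_closure (h : IsBoundaryWeight D g) (i : ι) (r : MvPolynomial ι ℝ)
    {s : ℝ} (hs : 2 ≤ s) {x : ι → ℝ} (hxD : x ∉ D) (hx : x ∈ closure D) :
    HasLineDerivAt ℝ (D.indicator fun x => eval x r * eval x g ^ s) 0 x (Pi.single i 1) := by
  let γ : ℝ → ι → ℝ := fun t => x + t • Pi.single i 1
  have hγ₀ : γ 0 = x := by simp [γ]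
  have hgx := h.eq_zero x hx hxD
  have hsq : HasDerivAt (fun t => eval (γ t) r * eval (γ t) g ^ 2) 0 0 := by
    refine ((hasDerivAt_eval_add_smul_single i r x).fun_mul
      ((hasDerivAt_eval_add_smul_single i g x).fun_pow 2)).congr_deriv ?_
    simp [hgx]
  rw [HasLineDerivAt, hasDerivAt_iff_isLittleO] at *
  refine Asymptotics.IsBigO.trans_isLittleO (.of_bound 1 (.of_forall fun t => ?_)) hsq
  change ‖D.indicator _ (γ t) - D.indicator _ (γ 0) - _‖ ≤ _
  rw [hγ₀, indicator_of_notMem hxD, hgx]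
  simp only [smul_zero, sub_zero, one_mul, ne_eq, OfNat.ofNat_ne_zero, not_false_eq_true, zero_pow,
    mul_zero]
  by_cases ht : γ t ∈ D
  · have hpos := h.pos _ ht
    rw [indicator_of_mem ht, norm_mul, norm_mul, Real.norm_of_nonneg (Real.rpow_nonneg hpos.le _),
      Real.norm_of_nonneg (sq_nonneg _), ← Real.rpow_natCast]
    exact mul_le_mul_of_nonneg_left (Real.rpow_le_rpow_of_exponent_ge hpos (h.lt_one _ ht).le
      (by exact_mod_cast hs)) (norm_nonneg _)
  · rw [indicator_of_notMem ht, norm_zero]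
    positivity

lemma hasLineDerivAt (h : IsBoundaryWeight D g) (i : ι) (r : MvPolynomial ι ℝ) {s : ℝ}
    (hs : 2 ≤ s) (x : ι → ℝ) :
    HasLineDerivAt ℝ (D.indicator fun x => eval x r * eval x g ^ s)
      (D.indicator (fun x => eval x (weightedDeriv g s i r) * eval x g ^ (s - 1)) x) x
      (Pi.single i 1) := by
  by_cases hxD : x ∈ D
  · rw [indicator_of_mem hxD]
    exact h.hasLineDerivAt_of_mem i r s hxD
  rw [indicator_of_notMem hxD]
  by_cases hx : x ∈ closure D
  · exact h.hasLineDerivAt_of_mem_closure i r hs hxD hx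
  · have hnear : ∀ᶠ t : ℝ in nhds 0, x + t • (Pi.single i 1 : ι → ℝ) ∈ (closure D)ᶜ :=
      ContinuousAt.eventually_mem (by fun_prop)
        (by simpa using isClosed_closure.isOpen_compl.mem_nhds hx)
    refine (hasDerivAt_const (0 : ℝ) (0 : ℝ)).congr_of_eventuallyEq ?_
    filter_upwards [hnear] with t ht
    exact indicator_of_notMem (fun htD => ht (subset_closure htD)) _

end LineDeriv

variable [Fintype ι]

lemma integrableOn (h : IsBoundaryWeight D g) {s : ℝ} (hs : 0 ≤ s) (r : MvPolynomial ι ℝ) :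
    IntegrableOn (fun x => eval x r * eval x g ^ s) D := by
  obtain ⟨B, hB⟩ := h.isBounded.isCompact_closure.exists_bound_of_continuousOn
    (MvPolynomial.continuous_eval r).continuousOn
  refine integrableOn_of_forall_abs_le (B := B) h.isOpen.measurableSet
    h.isBounded.measure_lt_top.ne ((MvPolynomial.continuous_eval r).measurable.mul
      ((MvPolynomial.continuous_eval g).measurable.pow_const s)) fun x hx => ?_
  have hpow : 0 ≤ eval x g ^ s := Real.rpow_nonneg (h.pos x hx).le s
  rw [abs_mul, abs_of_nonneg hpow]
  exact (mul_le_of_le_one_right (abs_nonneg _)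
    (Real.rpow_le_one (h.pos x hx).le (h.lt_one x hx).le hs)).trans (hB x (subset_closure hx))

lemma mellin_weightedDeriv (h : IsBoundaryWeight D g) {s : ℝ} (hs : 2 ≤ s) (i : ι)
    (r : MvPolynomial ι ℝ) : mellin D g (s - 1) (weightedDeriv g s i r) = 0 := by
  classical
  have hint := (h.integrableOn (by linarith) r (s := s)).integrable_indicator
    h.isOpen.measurableSet
  have hint' := (h.integrableOn (by linarith) (weightedDeriv g s i r)
    (s := s - 1)).integrable_indicator h.isOpen.measurableSet
  have hparts := integral_bilinear_hasLineDerivAt_right_eq_neg_left_of_integrable (μ := volume)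
    (g := fun _ : ι → ℝ => (1 : ℝ)) (g' := fun _ => (0 : ℝ)) (v := Pi.single i 1)
    (B := ContinuousLinearMap.mul ℝ ℝ) (by simpa using hint') (by simp) (by simpa using hint)
    (fun x _ => h.hasLineDerivAt i r hs x) fun x _ => hasDerivAt_const _ _
  simpa [mellin, integral_indicator h.isOpen.measurableSet, eq_comm] using hparts

lemma mellin_add (h : IsBoundaryWeight D g) {s : ℝ} (hs : 0 ≤ s) (r r' : MvPolynomial ι ℝ) :
    mellin D g s (r + r') = mellin D g s r + mellin D g s r' := by
  simp only [mellin, map_add, add_mul]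
  exact integral_add (h.integrableOn hs r) (h.integrableOn hs r')

lemma mellin_sum (h : IsBoundaryWeight D g) {s : ℝ} (hs : 0 ≤ s) {α : Type} (S : Finset α)
    (r : α → MvPolynomial ι ℝ) : mellin D g s (∑ a ∈ S, r a) = ∑ a ∈ S, mellin D g s (r a) := by
  simp only [mellin, map_sum, Finset.sum_mul]
  exact integral_finsetSum _ fun a _ => h.integrableOn hs (r a)

lemma mellin_mul_pow (h : IsBoundaryWeight D g) (s : ℝ) (r : MvPolynomial ι ℝ) (n : ℕ) :
    mellin D g s (r * g ^ n) = mellin D g (s + n) r := by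
  refine setIntegral_congr_fun h.isOpen.measurableSet fun x hx => ?_
  simp only [map_mul, map_pow]
  rw [Real.rpow_add (h.pos x hx), Real.rpow_natCast]
  ring

lemma mellin_mul_iterWeightedDeriv (h : IsBoundaryWeight D g)
    (p r : MvPolynomial ι ℝ) {s : ℝ} {l : List ι} (hs : l.length + 1 ≤ s) :
    mellin D g (s - l.length) (r * iterWeightedDeriv g p s l) =
      (-1) ^ l.length * mellin D g s (iterPDeriv l r * p) := by
  induction l generalizing r with
  | nil => simp [iterWeightedDeriv, iterPDeriv]
  | cons i l ih =>
    rw [List.length_cons, Nat.cast_add_one] at hs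
    let q := iterWeightedDeriv g p s l
    have hleibniz : weightedDeriv g (s - l.length) i (r * q) =
        pderiv i r * q * g ^ 1 + r * iterWeightedDeriv g p s (i :: l) := by
      simp only [weightedDeriv, iterWeightedDeriv, pderiv_mul, q]
      ring
    have hparts := h.mellin_weightedDeriv (s := s - l.length) (by linarith) i (r * q)
    rw [hleibniz, h.mellin_add (by linarith), h.mellin_mul_pow, Nat.cast_one, sub_add_cancel,
      ih _ (by linarith)] at hparts
    rw [iterPDeriv_cons, List.length_cons, pow_succ, Nat.cast_add_one, ← sub_sub]
    linarith

end IsBoundaryWeight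

/-! ### Recurrences with polynomial coefficients -/

/-- `Φ` satisfies `c₀(t) Φ(t) + c₁(t) Φ(t + 1) + ⋯ + c_N(t) Φ(t + N) = 0` for all large `t`, with
rational polynomials `cⱼ` and `c₀ ≠ 0`. -/
def HasPolynomialRecurrence (Φ : ℝ → ℝ) : Prop :=
  ∃ (N : ℕ) (c : ℕ → Polynomial ℚ), c 0 ≠ 0 ∧ ∀ᶠ t in Filter.atTop,
    ∑ j ∈ Finset.range (N + 1), Polynomial.aeval t (c j) * Φ (t + j) = 0

namespace HasPolynomialRecurrence

lemma comp_add_const {Φ : ℝ → ℝ} (h : HasPolynomialRecurrence Φ) (q : ℚ) :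
    HasPolynomialRecurrence fun t => Φ (t + q) := by
  obtain ⟨N, c, hc, hrec⟩ := h
  refine ⟨N, fun j => Polynomial.taylor q (c j), fun h₀ => hc ?_, ?_⟩
  · exact Polynomial.taylor_injective q (h₀.trans (map_zero _).symm)
  · filter_upwards [(Filter.tendsto_atTop_add_const_right _ (q : ℝ) Filter.tendsto_id).eventually
      hrec] with t ht
    simpa [Polynomial.taylor_apply, Polynomial.aeval_comp, add_right_comm] using ht

/-- Discard the vanishing leading coefficients and shift the argument. -/
lemma of_fin {Φ : ℝ → ℝ} {N : ℕ} {c : Fin N → Polynomial ℚ} (hc : ∃ j, c j ≠ 0)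
    (hrec : ∀ᶠ t in Filter.atTop, ∑ j, Polynomial.aeval t (c j) * Φ (t + (j : ℕ)) = 0) :
    HasPolynomialRecurrence Φ := by
  classical
  let c' : ℕ → Polynomial ℚ := fun j => if hj : j < N then c ⟨j, hj⟩ else 0
  have hc' : ∃ j, c' j ≠ 0 := hc.imp' Fin.val fun j hj => by simpa [c'] using hj
  let m := Nat.find hc'
  have hlow : ∀ j < m, c' j = 0 := fun j hj => not_not.1 (Nat.find_min hc' hj)
  have hhigh : ∀ j, N ≤ j → c' j = 0 := fun j hj => dif_neg hj.not_gt
  have hshift : HasPolynomialRecurrence fun t => Φ (t + m) := by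
    refine ⟨N, fun j => c' (m + j), Nat.find_spec hc', hrec.mono fun t ht => ?_⟩
    let F : ℕ → ℝ := fun j => Polynomial.aeval t (c' j) * Φ (t + j)
    calc _ = ∑ j ∈ Finset.range (N + 1), F (m + j) := by
          simp only [F, Nat.cast_add, add_assoc, add_comm (m : ℝ)]
      _ = ∑ j ∈ Finset.range (m + (N + 1)), F j := by
          rw [Finset.sum_range_add F, Finset.sum_eq_zero (s := Finset.range m), zero_add]
          intro j hj
          simp [F, hlow j (Finset.mem_range.1 hj)]
      _ = ∑ j ∈ Finset.range N, F j := by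
          refine (Finset.sum_subset (Finset.range_mono (by omega)) fun j _ hj => ?_).symm
          simp [F, hhigh j (by simpa using hj)]
      _ = 0 := by
          rw [← ht, ← Fin.sum_univ_eq_sum_range]
          exact Finset.sum_congr rfl fun j _ => by simp [F, c']
  simpa using hshift.comp_add_const (-m)

end HasPolynomialRecurrence

section MellinRecurrence

variable [Fintype ι] {D : Set (ι → ℝ)} {g : MvPolynomial ι ℝ}

lemma IsBoundaryWeight.mellin_mul_iterWeightedDeriv_mul_pow (h : IsBoundaryWeight D g)
    (p r : MvPolynomial ι ℝ) {s : ℝ} {k : ι → ℕ} {j m : ℕ} (hk : ∑ i, k i ≤ m)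
    (hs : (m + 1 : ℝ) ≤ s) :
    mellin D g (s - m) (r * (iterWeightedDeriv g p (s + j) (multiIndexList k) *
        g ^ (j + m - ∑ i, k i))) =
      (-1) ^ (∑ i, k i) * mellin D g (s + j) (iterPDeriv (multiIndexList k) r * p) := by
  rw [← length_multiIndexList] at hk ⊢
  have hk' : ((multiIndexList k).length : ℝ) ≤ m := Nat.cast_le.2 hk
  rw [← h.mellin_mul_iterWeightedDeriv p r (by linarith [j.cast_nonneg (α := ℝ)]), ← mul_assoc,
    h.mellin_mul_pow, Nat.cast_sub (by omega)]
  congr 1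
  push_cast
  ring

/-- Testing the relation against the monomial `x ^ k` kills the derivatives `∂ᵏ'` with
`k' ≰ k`. -/
lemma IsBoundaryWeight.sum_mellin_eq_zero_of_relation [DecidableEq ι] (h : IsBoundaryWeight D g)
    (p : MvPolynomial ι ℝ) {s : ℝ} {N : ℕ} (hs : ((Fintype.card ι * N : ℕ) : ℝ) + 1 ≤ s)
    {c : Fin N × (ι → Fin N) → ℝ}
    (hc : ∑ a, C (c a) * (iterWeightedDeriv g p (s + (a.1 : ℕ)) (multiIndexList fun i => a.2 i) *
      g ^ (a.1 + Fintype.card ι * N - ∑ i, (a.2 i : ℕ))) = 0)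
    {k : ι → Fin N} (hk : ∀ j, ∀ k' ≤ k, k' ≠ k → c (j, k') = 0) :
    ∑ j, c (j, k) * mellin D g (s + (j : ℕ)) p = 0 := by
  obtain ⟨b, hb, hkb⟩ := exists_iterPDeriv_monomial_eq_C (R := ℝ)
    (l := multiIndexList fun i => (k i : ℕ))
    (m := Finsupp.equivFunOnFinite.symm fun i => (k i : ℕ)) (count_multiIndexList _) one_ne_zero
  have hsum := congrArg (fun r => mellin D g (s - (Fintype.card ι * N : ℕ))
    (monomial (Finsupp.equivFunOnFinite.symm fun i => (k i : ℕ)) 1 * r)) hc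
  simp only [Finset.mul_sum, h.mellin_sum (show 0 ≤ s - (Fintype.card ι * N : ℕ) by linarith),
    mul_left_comm (monomial _ _) (C _), mellin_C_mul,
    h.mellin_mul_iterWeightedDeriv_mul_pow p _ (sum_val_le_card_mul _) hs,
    mul_zero, mellin_zero] at hsum
  have hsingle (j : Fin N) (k' : ι → Fin N) (hne : k' ≠ k) : c (j, k') *
      ((-1) ^ (∑ i, (k' i : ℕ)) * mellin D g (s + (j : ℕ))
        (iterPDeriv (multiIndexList fun i => (k' i : ℕ))
          (monomial (Finsupp.equivFunOnFinite.symm fun i => (k i : ℕ)) 1) * p)) = 0 := by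
    by_cases hle : k' ≤ k
    · rw [hk j k' hle hne, zero_mul]
    · rw [iterPDeriv_multiIndexList_monomial_eq_zero hle, zero_mul, mellin_zero, mul_zero, mul_zero]
  rw [Fintype.sum_prod_type,
    Finset.sum_congr rfl fun j _ => Fintype.sum_eq_single k (hsingle j)] at hsum
  simp only [hkb, mellin_C_mul, mul_left_comm (c _), ← Finset.mul_sum] at hsum
  simpa [hb] using hsum

lemma hasPolynomialRecurrence_mellin {G : MvPolynomial ι ℚ}
    (h : IsBoundaryWeight D (map (algebraMap ℚ ℝ) G)) (p : MvPolynomial ι ℚ) :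
    HasPolynomialRecurrence fun s =>
      mellin D (map (algebraMap ℚ ℝ) G) s (map (algebraMap ℚ ℝ) p) := by
  classical
  obtain ⟨N, c, ⟨a, ha⟩, hrel⟩ := exists_iterWeightedDeriv_relation (map Polynomial.C G)
    (map Polynomial.C p) fun j => Polynomial.X + (j : Polynomial ℚ)
  obtain ⟨k, ⟨j, hj⟩, hmin⟩ := (toFinite {k | ∃ j, c (j, k) ≠ 0}).exists_minimal ⟨a.2, a.1, ha⟩
  refine .of_fin (c := fun j => c (j, k)) ⟨j, hj⟩ ?_
  filter_upwards [Filter.eventually_ge_atTop ((Fintype.card ι * N : ℕ) + 1 : ℝ)] with s hs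
  let f : Polynomial ℚ →+* ℝ := (Polynomial.aeval s : Polynomial ℚ →ₐ[ℚ] ℝ).toRingHom
  have hfC : f.comp Polynomial.C = algebraMap ℚ ℝ := by ext; simp [f]
  have hfX : f Polynomial.X = s := Polynomial.aeval_X s
  refine h.sum_mellin_eq_zero_of_relation _ hs (c := fun a => f (c a)) ?_ fun j k' hle hne => ?_
  · simpa only [map_sum, map_mul, map_pow, map_iterWeightedDeriv, map_map, hfC, map_add, map_zero,
      map_C, hfX, map_natCast] using congrArg (map f) hrel
  · by_contra hck
    exact hne (hle.antisymm (hmin ⟨j, fun h₀ => hck (by rw [h₀, map_zero])⟩ hle))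

end MellinRecurrence

section Limits

variable {V : Submodule ℚ ℝ}

lemma mem_of_tendsto_div_pow {F : ℝ → ℝ} {p : FormalMultilinearSeries ℝ ℝ ℝ} {a : ℝ} {m : ℕ}
    (hF : HasFPowerSeriesAt F p 0) (hp : ∀ k, p.coeff k ∈ V)
    (ha : Filter.Tendsto (fun t => F t / t ^ m) (nhdsWithin 0 (Ioi 0)) (nhds a)) : a ∈ V := by
  have hF₀ : Filter.Tendsto F (nhdsWithin 0 (Ioi 0)) (nhds (F 0)) :=
    hF.continuousAt.tendsto.mono_left nhdsWithin_le_nhds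
  induction m generalizing F p with
  | zero =>
    simp only [pow_zero, div_one] at ha
    rw [← tendsto_nhds_unique hF₀ ha, ← hF.coeff_zero fun _ => 1]
    exact hp 0
  | succ m ih =>
    have hpow : Filter.Tendsto (fun t : ℝ => t ^ (m + 1)) (nhdsWithin 0 (Ioi 0)) (nhds 0) :=
      ((continuous_pow (m + 1)).tendsto' 0 0 (zero_pow m.succ_ne_zero)).mono_left
        nhdsWithin_le_nhds
    have hzero : F 0 = 0 := by
      refine tendsto_nhds_unique hF₀ (Filter.Tendsto.congr' ?_ (mul_zero a ▸ ha.mul hpow))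
      filter_upwards [self_mem_nhdsWithin] with t ht
      exact div_mul_cancel₀ _ (pow_pos (mem_Ioi.1 ht) _).ne'
    have hslope := hF.has_fpower_series_dslope_fslope
    refine ih hslope (fun k => ?_) (ha.congr' ?_)
      (hslope.continuousAt.tendsto.mono_left nhdsWithin_le_nhds)
    · rw [FormalMultilinearSeries.coeff_fslope]
      exact hp _
    · filter_upwards [self_mem_nhdsWithin] with t ht
      rw [dslope_of_ne _ (mem_Ioi.1 ht).ne', slope_def_field, hzero, sub_zero, sub_zero, pow_succ,
        div_div, mul_comm]

lemma mem_of_iteratedDeriv_mem {F : ℝ → ℝ} {a : ℝ} {m : ℕ} (hF : AnalyticAt ℝ F 0)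
    (hV : ∀ k, iteratedDeriv k F 0 ∈ V)
    (ha : Filter.Tendsto (fun t => F t / t ^ m) (nhdsWithin 0 (Ioi 0)) (nhds a)) : a ∈ V := by
  refine mem_of_tendsto_div_pow hF.hasFPowerSeriesAt (fun k => ?_) ha
  rw [FormalMultilinearSeries.coeff_ofScalars]
  simpa [Rat.smul_def, inv_mul_eq_div] using V.smul_mem (k.factorial : ℚ)⁻¹ (hV k)

lemma iteratedDeriv_aeval (c : Polynomial ℚ) (k : ℕ) :
    iteratedDeriv k (fun t : ℝ => Polynomial.aeval t c) =
      fun t => Polynomial.aeval t (Polynomial.derivative^[k] c) := by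
  induction k with
  | zero => simp
  | succ k ih =>
    ext t
    rw [iteratedDeriv_succ, ih, Function.iterate_succ_apply']
    exact (Polynomial.hasDerivAt_aeval _ t).deriv

lemma analyticAt_aeval (c : Polynomial ℚ) (t : ℝ) :
    AnalyticAt ℝ (fun t : ℝ => Polynomial.aeval t c) t := by
  simpa only [Polynomial.eval_map_algebraMap] using
    AnalyticOnNhd.eval_polynomial (c.map (algebraMap ℚ ℝ)) t (mem_univ t)

lemma aeval_zero_eq_cast_eval (c : Polynomial ℚ) :
    Polynomial.aeval (0 : ℝ) c = (c.eval 0 : ℚ) := by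
  simpa using Polynomial.aeval_algebraMap_apply ℝ (0 : ℚ) c

lemma iteratedDeriv_aeval_mul_mem {Ψ : ℝ → ℝ} (hΨ : AnalyticAt ℝ Ψ 0)
    (hV : ∀ k, iteratedDeriv k Ψ 0 ∈ V) (c : Polynomial ℚ) (k : ℕ) :
    iteratedDeriv k (fun t => Polynomial.aeval t c * Ψ t) 0 ∈ V := by
  rw [iteratedDeriv_fun_mul (analyticAt_aeval c 0).contDiffAt hΨ.contDiffAt]
  refine V.sum_mem fun i _ => ?_
  simp only [iteratedDeriv_aeval, aeval_zero_eq_cast_eval]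
  simpa [Rat.smul_def] using
    V.smul_mem (k.choose i * (Polynomial.derivative^[i] c).eval 0) (hV (k - i))

lemma analyticAt_comp_add_natCast {Φ : ℝ → ℝ} (hΦ : ∀ t > 0, AnalyticAt ℝ Φ t) {j : ℕ} {t : ℝ}
    (ht : 0 < t + j) : AnalyticAt ℝ (fun t => Φ (t + j)) t :=
  (hΦ _ ht).fun_comp (f := fun t : ℝ => t + (j : ℝ)) (by fun_prop)

lemma recurrence_of_pos {Φ : ℝ → ℝ} (hΦ : ∀ t > 0, AnalyticAt ℝ Φ t) {N : ℕ}
    {c : ℕ → Polynomial ℚ} (hrec : ∀ᶠ t in Filter.atTop,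
      ∑ j ∈ Finset.range N, Polynomial.aeval t (c j) * Φ (t + j) = 0) {t : ℝ} (ht : 0 < t) :
    ∑ j ∈ Finset.range N, Polynomial.aeval t (c j) * Φ (t + j) = 0 := by
  obtain ⟨T, hT⟩ := Filter.eventually_atTop.1 hrec
  have hanalytic : AnalyticOnNhd ℝ
      (fun t => ∑ j ∈ Finset.range N, Polynomial.aeval t (c j) * Φ (t + j)) (Ioi 0) :=
    fun t ht => Finset.analyticAt_fun_sum _ fun j _ => (analyticAt_aeval (c j) t).fun_mul
      (analyticAt_comp_add_natCast hΦ (add_pos_of_pos_of_nonneg ht j.cast_nonneg))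
  refine hanalytic.eqOn_of_preconnected_of_eventuallyEq (g := fun _ => 0)
    (fun t _ => analyticAt_const) isPreconnected_Ioi (z₀ := max T 0 + 1)
    (lt_of_le_of_lt (le_max_right T 0) (lt_add_one _)) ?_ ht
  filter_upwards [lt_mem_nhds (lt_add_one (max T 0))] with t ht
  exact hT t ((le_max_left _ _).trans ht.le)

lemma HasPolynomialRecurrence.mem_of_tendsto {Φ : ℝ → ℝ} (h : HasPolynomialRecurrence Φ)
    (hΦ : ∀ t > 0, AnalyticAt ℝ Φ t) (hV : ∀ j k : ℕ, iteratedDeriv k Φ (j + 1) ∈ V) {a : ℝ}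
    (ha : Filter.Tendsto Φ (nhdsWithin 0 (Ioi 0)) (nhds a)) : a ∈ V := by
  obtain ⟨N, c, hc, hrec⟩ := h
  obtain ⟨b, hb, hb₀⟩ := Polynomial.exists_eq_pow_rootMultiplicity_mul_and_not_dvd (c 0) hc 0
  rw [map_zero, sub_zero] at hb hb₀
  rw [Polynomial.X_dvd_iff, Polynomial.coeff_zero_eq_eval_zero] at hb₀
  let F : ℝ → ℝ := fun t => ∑ j ∈ Finset.range N,
    Polynomial.aeval t (-(c (j + 1))) * Φ (t + (j + 1 : ℕ))
  have hshift (j : ℕ) : AnalyticAt ℝ (fun t => Φ (t + (j + 1 : ℕ))) 0 :=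
    analyticAt_comp_add_natCast hΦ (by positivity)
  have hterm (j : ℕ) : AnalyticAt ℝ
      (fun t => Polynomial.aeval t (-(c (j + 1))) * Φ (t + (j + 1 : ℕ))) 0 :=
    (analyticAt_aeval _ 0).fun_mul (hshift j)
  have hFV (k : ℕ) : iteratedDeriv k F 0 ∈ V := by
    rw [iteratedDeriv_fun_sum fun j _ => (hterm j).contDiffAt]
    refine V.sum_mem fun j _ => iteratedDeriv_aeval_mul_mem (hshift j) (fun k => ?_) _ k
    rw [iteratedDeriv_comp_add_const]
    simpa using hV j k
  have hlim : Filter.Tendsto (fun t => F t / t ^ (c 0).rootMultiplicity 0)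
      (nhdsWithin 0 (Ioi 0)) (nhds ((b.eval 0 : ℚ) * a)) := by
    have hbΦ := ((analyticAt_aeval b 0).continuousAt.tendsto.mono_left nhdsWithin_le_nhds).mul ha
    refine (aeval_zero_eq_cast_eval b ▸ hbΦ).congr' ?_
    filter_upwards [self_mem_nhdsWithin] with t ht
    have hsum := recurrence_of_pos hΦ hrec ht
    rw [Finset.sum_range_succ', hb] at hsum
    simp only [Nat.cast_zero, add_zero, map_mul, map_pow, Polynomial.aeval_X] at hsum
    rw [eq_div_iff (pow_pos (mem_Ioi.1 ht) _).ne']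
    simp only [F, map_neg, neg_mul, Finset.sum_neg_distrib]
    linarith
  have hmem := V.smul_mem (b.eval 0)⁻¹ (mem_of_iteratedDeriv_mem
    (Finset.analyticAt_fun_sum _ fun j _ => hterm j) hFV hlim)
  simpa [Rat.smul_def, hb₀] using hmem

end Limits

/-! ### Analytic dependence on the exponent -/

section ExponentialIntegral

open ProbabilityTheory

variable {Ω : Type} [MeasurableSpace Ω] {μ : Measure Ω} {f L : Ω → ℝ}

lemma integral_mul_eq_sub_withDensity_toNNReal {φ : Ω → ℝ} (hf : Measurable f)
    (hφ : Integrable φ (μ.withDensity fun x => (f x).toNNReal))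
    (hφ' : Integrable φ (μ.withDensity fun x => (-f x).toNNReal)) :
    ∫ x, f x * φ x ∂μ = ∫ x, φ x ∂(μ.withDensity fun x => (f x).toNNReal) -
      ∫ x, φ x ∂(μ.withDensity fun x => (-f x).toNNReal) := by
  have hf' : Measurable fun x => (-f x).toNNReal := hf.neg.real_toNNReal
  rw [integrable_withDensity_iff_integrable_smul hf.real_toNNReal] at hφ
  rw [integrable_withDensity_iff_integrable_smul hf'] at hφ'
  rw [integral_withDensity_eq_integral_smul hf.real_toNNReal,
    integral_withDensity_eq_integral_smul hf', ← integral_sub hφ hφ']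
  refine integral_congr_ae (.of_forall fun x => ?_)
  simp only [NNReal.smul_def, smul_eq_mul, ← sub_mul, Real.coe_toNNReal',
    max_zero_sub_max_neg_zero_eq_self]

lemma norm_mul_exp_mul_le {a b t : ℝ} (hb : b ≤ 0) (ht : 0 ≤ t) :
    ‖a * Real.exp (t * b)‖ ≤ ‖a‖ := by
  rw [norm_mul, Real.norm_of_nonneg (Real.exp_pos _).le]
  exact mul_le_of_le_one_right (norm_nonneg a)
    (Real.exp_le_one_iff.2 (mul_nonpos_of_nonneg_of_nonpos ht hb))

lemma Ioi_subset_interior_integrableExpSet_withDensity (hf : Measurable f) (hfi : Integrable f μ)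
    (hL : Measurable L) (hL₀ : ∀ᵐ x ∂μ, L x ≤ 0) :
    Ioi 0 ⊆ interior (integrableExpSet L (μ.withDensity fun x => (f x).toNNReal)) := by
  refine interior_maximal (fun t ht => ?_) isOpen_Ioi
  change Integrable _ _
  rw [integrable_withDensity_iff_integrable_smul hf.real_toNNReal]
  simp only [NNReal.smul_def, smul_eq_mul]
  refine hfi.pos_part.mono (by fun_prop) ?_
  filter_upwards [hL₀] with x hx
  exact norm_mul_exp_mul_le hx (mem_Ioi.1 ht).le

lemma integral_mul_pow_mul_exp_eq_sub (hf : Measurable f) (hfi : Integrable f μ)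
    (hL : Measurable L) (hL₀ : ∀ᵐ x ∂μ, L x ≤ 0) {t : ℝ} (ht : 0 < t) (k : ℕ) :
    ∫ x, f x * (L x ^ k * Real.exp (t * L x)) ∂μ =
      ∫ x, L x ^ k * Real.exp (t * L x) ∂(μ.withDensity fun x => (f x).toNNReal) -
        ∫ x, L x ^ k * Real.exp (t * L x) ∂(μ.withDensity fun x => (-f x).toNNReal) :=
  integral_mul_eq_sub_withDensity_toNNReal hf
    (integrable_pow_mul_exp_of_mem_interior_integrableExpSet
      (Ioi_subset_interior_integrableExpSet_withDensity hf hfi hL hL₀ ht) k)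
    (integrable_pow_mul_exp_of_mem_interior_integrableExpSet
      (Ioi_subset_interior_integrableExpSet_withDensity hf.neg hfi.neg hL hL₀ ht) k)

lemma integral_mul_exp_eventuallyEq_mgf_sub_mgf (hf : Measurable f) (hfi : Integrable f μ)
    (hL : Measurable L) (hL₀ : ∀ᵐ x ∂μ, L x ≤ 0) {t : ℝ} (ht : 0 < t) :
    (fun t => ∫ x, f x * Real.exp (t * L x) ∂μ) =ᶠ[nhds t]
      mgf L (μ.withDensity fun x => (f x).toNNReal) -
        mgf L (μ.withDensity fun x => (-f x).toNNReal) := by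
  filter_upwards [lt_mem_nhds ht] with u hu
  simpa [mgf] using integral_mul_pow_mul_exp_eq_sub hf hfi hL hL₀ hu 0

lemma analyticAt_integral_mul_exp (hf : Measurable f) (hfi : Integrable f μ)
    (hL : Measurable L) (hL₀ : ∀ᵐ x ∂μ, L x ≤ 0) {t : ℝ} (ht : 0 < t) :
    AnalyticAt ℝ (fun t => ∫ x, f x * Real.exp (t * L x) ∂μ) t :=
  ((analyticOnNhd_mgf t (Ioi_subset_interior_integrableExpSet_withDensity hf hfi hL hL₀ ht)).sub
    (analyticOnNhd_mgf t (Ioi_subset_interior_integrableExpSet_withDensity hf.neg hfi.neg hL hL₀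
      ht))).congr (integral_mul_exp_eventuallyEq_mgf_sub_mgf hf hfi hL hL₀ ht).symm

lemma iteratedDeriv_integral_mul_exp (hf : Measurable f) (hfi : Integrable f μ)
    (hL : Measurable L) (hL₀ : ∀ᵐ x ∂μ, L x ≤ 0) {t : ℝ} (ht : 0 < t) (k : ℕ) :
    iteratedDeriv k (fun t => ∫ x, f x * Real.exp (t * L x) ∂μ) t =
      ∫ x, f x * (L x ^ k * Real.exp (t * L x)) ∂μ := by
  have hpos := Ioi_subset_interior_integrableExpSet_withDensity hf hfi hL hL₀ ht
  have hneg : t ∈ interior (integrableExpSet L (μ.withDensity fun x => (-f x).toNNReal)) :=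
    Ioi_subset_interior_integrableExpSet_withDensity hf.neg hfi.neg hL hL₀ ht
  rw [(integral_mul_exp_eventuallyEq_mgf_sub_mgf hf hfi hL hL₀ ht).iteratedDeriv_eq,
    iteratedDeriv_sub (analyticOnNhd_mgf t hpos).contDiffAt (analyticOnNhd_mgf t hneg).contDiffAt,
    iteratedDeriv_mgf hpos, iteratedDeriv_mgf hneg,
    integral_mul_pow_mul_exp_eq_sub hf hfi hL hL₀ ht]

lemma tendsto_integral_mul_exp (hfi : Integrable f μ) (hL : Measurable L)
    (hL₀ : ∀ᵐ x ∂μ, L x ≤ 0) :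
    Filter.Tendsto (fun t => ∫ x, f x * Real.exp (t * L x) ∂μ) (nhdsWithin 0 (Ioi 0))
      (nhds (∫ x, f x ∂μ)) := by
  refine tendsto_integral_filter_of_dominated_convergence (fun x => ‖f x‖) ?_ ?_ hfi.norm ?_
  · exact .of_forall fun t => hfi.aestronglyMeasurable.mul (by fun_prop)
  · filter_upwards [self_mem_nhdsWithin] with t ht
    filter_upwards [hL₀] with x hx
    exact norm_mul_exp_mul_le hx (mem_Ioi.1 ht).le
  · refine .of_forall fun x => Filter.Tendsto.mono_left ?_ nhdsWithin_le_nhds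
    exact Continuous.tendsto' (by fun_prop) _ _ (by simp)

end ExponentialIntegral

/-! ### Periods over bounded domains -/

lemma eval_map_algebraMap (p : MvPolynomial ι ℚ) (x : ι → ℝ) :
    eval x (map (algebraMap ℚ ℝ) p) = aeval x p := by
  rw [eval_map, aeval_def]

lemma IsBoundaryWeight.sq {D : Set (ι → ℝ)} {g : MvPolynomial ι ℝ} (h : IsBoundaryWeight D g) :
    IsBoundaryWeight D (g ^ 2) where
  isOpen := h.isOpen
  isBounded := h.isBounded
  pos x hx := by
    rw [map_pow]
    exact pow_pos (h.pos x hx) 2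
  lt_one x hx := by
    rw [map_pow]
    exact pow_lt_one₀ (h.pos x hx).le (h.lt_one x hx) two_ne_zero
  eq_zero x hx hxD := by rw [map_pow, h.eq_zero x hx hxD, zero_pow two_ne_zero]

section BoundedDomain

variable {G : κ → MvPolynomial ι ℚ}

lemma aeval_prod_pos_of_mem_basicOpen [Fintype κ] {x : ι → ℝ} (hx : x ∈ basicOpen G) :
    0 < aeval x (∏ j, G j) := by
  rw [map_prod]
  exact Finset.prod_pos fun j _ => hx j

lemma aeval_prod_eq_zero_of_mem_closure [Fintype κ] {x : ι → ℝ} (hx : x ∈ closure (basicOpen G))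
    (hxG : x ∉ basicOpen G) : aeval x (∏ j, G j) = 0 := by
  obtain ⟨j, hj⟩ := not_forall.1 hxG
  have hnonneg : closure (basicOpen G) ⊆ {x | 0 ≤ aeval x (G j)} :=
    closure_minimal (fun y hy => (hy j).le) (isClosed_le continuous_const (continuous_aeval _))
  rw [map_prod]
  exact Finset.prod_eq_zero (Finset.mem_univ j) ((not_lt.1 hj).antisymm (hnonneg hx))

lemma isBoundaryWeight_mul_sq_mul_prod [Fintype κ] (hG : Bornology.IsBounded (basicOpen G))
    {Q : MvPolynomial ι ℚ} (hQ : ∀ x ∈ basicOpen G, aeval x Q ≠ 0) {c : ℚ} (hc : 0 < c)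
    (hlt : ∀ x ∈ basicOpen G, (c : ℝ) * aeval x (Q ^ 2 * ∏ j, G j) < 1) :
    IsBoundaryWeight (basicOpen G) (map (algebraMap ℚ ℝ) (C c * (Q ^ 2 * ∏ j, G j))) := by
  refine ⟨isOpen_basicOpen G, hG, fun x hx => ?_, fun x hx => ?_, fun x hx hxG => ?_⟩ <;>
    rw [eval_map_algebraMap]
  · have hprod := aeval_prod_pos_of_mem_basicOpen hx
    have hQx := hQ x hx
    simp only [map_mul, map_pow, aeval_C, eq_ratCast]
    positivity
  · simpa using hlt x hx
  · simp only [map_mul, aeval_prod_eq_zero_of_mem_closure hx hxG, mul_zero]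

lemma exists_isBoundaryWeight_div_eq_div [Finite ι] [Finite κ]
    (hG : Bornology.IsBounded (basicOpen G)) (P : MvPolynomial ι ℚ) {Q : MvPolynomial ι ℚ}
    (hQ : ∀ x ∈ basicOpen G, aeval x Q ≠ 0) :
    ∃ g p : MvPolynomial ι ℚ, IsBoundaryWeight (basicOpen G) (map (algebraMap ℚ ℝ) g) ∧
      ∀ x ∈ basicOpen G, aeval x P / aeval x Q = aeval x p / aeval x g := by
  have := Fintype.ofFinite κ
  obtain ⟨B, hB⟩ := exists_nat_forall_abs_aeval_le hG (Q ^ 2 * ∏ j, G j)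
  have hc : (0 : ℚ) < (B + 1 : ℚ)⁻¹ := by positivity
  have hlt : ∀ x ∈ basicOpen G,
      (((B + 1 : ℚ)⁻¹ : ℚ) : ℝ) * aeval x (Q ^ 2 * ∏ j, G j) < 1 := fun x hx => by
    push_cast
    rw [inv_mul_lt_one₀ (by positivity)]
    linarith [le_of_abs_le (hB x hx)]
  refine ⟨_, C (B + 1 : ℚ)⁻¹ * (P * Q * ∏ j, G j),
    isBoundaryWeight_mul_sq_mul_prod hG hQ hc hlt, fun x hx => ?_⟩
  have hprod := (aeval_prod_pos_of_mem_basicOpen hx).ne'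
  have hQx := hQ x hx
  have hc' : ((B : ℝ) + 1) ≠ 0 := by positivity
  simp only [map_mul, map_pow, aeval_C, eq_ratCast]
  push_cast
  field_simp

variable {p g : MvPolynomial ι ℚ}

lemma setIntegral_div_mul_log_sq_pow_mul_exp_mem_volumeSpan [Fintype ι] [Finite κ]
    (hG : Bornology.IsBounded (basicOpen G)) (hg₀ : ∀ x ∈ basicOpen G, 0 < aeval x g)
    (hg₁ : ∀ x ∈ basicOpen G, aeval x g < 1) (j k : ℕ) :
    ∫ x in basicOpen G, aeval x p / aeval x g *
      (Real.log (aeval x g ^ 2) ^ k * Real.exp ((j + 1) * Real.log (aeval x g ^ 2))) ∈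
        volumeSpan := by
  have hmem := volumeSpan.smul_mem (2 ^ k : ℚ)
    (setIntegral_mul_log_pow_mem_volumeSpan hG hg₀ hg₁ (p * g ^ (2 * j)) k)
  rw [Rat.smul_def, ← integral_const_mul] at hmem
  convert hmem using 1
  refine setIntegral_congr_fun (measurableSet_basicOpen G) fun x hx => ?_
  have hne := (hg₀ x hx).ne'
  have hexp : Real.exp ((j + 1) * Real.log (aeval x g ^ 2)) = aeval x g ^ (2 * (j + 1)) := by
    rw [← Nat.cast_add_one, Real.exp_nat_mul, Real.exp_log (pow_pos (hg₀ x hx) 2), pow_mul]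
  rw [hexp, Real.log_pow, mul_pow, map_mul, map_mul, map_pow]
  push_cast
  field_simp
  ring

lemma setIntegral_div_mul_exp_mul_log_sq_eq_mellin [Fintype ι] [Finite κ]
    (hg₀ : ∀ x ∈ basicOpen G, 0 < aeval x g) (t : ℝ) :
    ∫ x in basicOpen G, aeval x p / aeval x g * Real.exp (t * Real.log (aeval x g ^ 2)) =
      mellin (basicOpen G) (map (algebraMap ℚ ℝ) (g ^ 2)) (t - 1)
        (map (algebraMap ℚ ℝ) (p * g)) := by
  refine setIntegral_congr_fun (measurableSet_basicOpen G) fun x hx => ?_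
  have hpos := pow_pos (hg₀ x hx) 2
  have hne := (hg₀ x hx).ne'
  simp only [eval_map_algebraMap, map_pow (aeval x), map_mul (aeval x)]
  rw [mul_comm t, ← Real.rpow_def_of_pos hpos, Real.rpow_sub_one hpos.ne']
  field_simp

lemma setIntegral_div_mem_volumeSpan_of_isBoundaryWeight [Fintype ι] [Finite κ]
    (h : IsBoundaryWeight (basicOpen G) (map (algebraMap ℚ ℝ) g))
    (hint : IntegrableOn (fun x => aeval x p / aeval x g) (basicOpen G)) :
    ∫ x in basicOpen G, aeval x p / aeval x g ∈ volumeSpan := by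
  have hg₀ : ∀ x ∈ basicOpen G, 0 < aeval x g := by
    simpa only [eval_map_algebraMap] using h.pos
  have hg₁ : ∀ x ∈ basicOpen G, aeval x g < 1 := by
    simpa only [eval_map_algebraMap] using h.lt_one
  have hmeas : Measurable fun x : ι → ℝ => Real.log (aeval x g ^ 2) :=
    Real.measurable_log.comp ((continuous_aeval g).measurable.pow_const 2)
  have hlog : ∀ᵐ x ∂volume.restrict (basicOpen G), Real.log (aeval x g ^ 2) ≤ 0 :=
    ae_restrict_of_forall_mem (measurableSet_basicOpen G) fun x hx =>
      Real.log_nonpos (sq_nonneg _) (pow_le_one₀ (hg₀ x hx).le (hg₁ x hx).le)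
  have hrec : HasPolynomialRecurrence fun t => ∫ x in basicOpen G,
      aeval x p / aeval x g * Real.exp (t * Real.log (aeval x g ^ 2)) := by
    have hsq : IsBoundaryWeight (basicOpen G) (map (algebraMap ℚ ℝ) (g ^ 2)) := by
      simpa only [map_pow] using h.sq
    simpa only [setIntegral_div_mul_exp_mul_log_sq_eq_mellin hg₀, sub_eq_add_neg, Rat.cast_neg,
      Rat.cast_one] using (hasPolynomialRecurrence_mellin hsq (p * g)).comp_add_const (-1)
  refine hrec.mem_of_tendsto
    (fun t ht => analyticAt_integral_mul_exp (measurable_aeval_div p g) hint hmeas hlog ht)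
    (fun j k => ?_) (tendsto_integral_mul_exp hint hmeas hlog)
  rw [iteratedDeriv_integral_mul_exp (measurable_aeval_div p g) hint hmeas hlog (by positivity)]
  exact setIntegral_div_mul_log_sq_pow_mul_exp_mem_volumeSpan h.isBounded hg₀ hg₁ j k

lemma setIntegral_div_mem_volumeSpan_of_isBounded [Fintype ι] [Finite κ]
    (hG : Bornology.IsBounded (basicOpen G)) {P Q : MvPolynomial ι ℚ}
    (hQ : ∀ x ∈ basicOpen G, aeval x Q ≠ 0)
    (hint : IntegrableOn (fun x => aeval x P / aeval x Q) (basicOpen G)) :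
    ∫ x in basicOpen G, aeval x P / aeval x Q ∈ volumeSpan := by
  obtain ⟨g, p, hg, heq⟩ := exists_isBoundaryWeight_div_eq_div hG P hQ
  rw [setIntegral_congr_fun (measurableSet_basicOpen G) heq]
  exact setIntegral_div_mem_volumeSpan_of_isBoundaryWeight hg
    (hint.congr_fun heq (measurableSet_basicOpen G))

end BoundedDomain

/-! ### Compactifying the domain of integration -/

/-- The rational diffeomorphism `t ↦ t / (1 - t ^ 2)` of `(-1, 1)` onto `ℝ`. -/
noncomputable def stretch (t : ℝ) : ℝ := t / (1 - t ^ 2)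

lemma stretch_inj {a b : ℝ} (ha : 0 < 1 - a ^ 2) (hb : 0 < 1 - b ^ 2)
    (h : stretch a = stretch b) : a = b := by
  rw [stretch, stretch, div_eq_div_iff ha.ne' hb.ne'] at h
  have hprod : (a - b) * (1 + a * b) = 0 := by linarith
  rcases mul_eq_zero.1 hprod with hab | hab
  · exact sub_eq_zero.1 hab
  · nlinarith [sq_nonneg (a + b)]

lemma exists_stretch_eq (x : ℝ) : ∃ t, 0 < 1 - t ^ 2 ∧ stretch t = x := by
  -- the root `2 * x / (1 + s)` of `x * t ^ 2 + t - x` in `(-1, 1)`, in a form valid also at `x = 0`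
  let s := √(1 + 4 * x ^ 2)
  have hs : s ^ 2 = 1 + 4 * x ^ 2 := Real.sq_sqrt (by positivity)
  have hs₀ : 0 ≤ s := Real.sqrt_nonneg _
  have hsub : 1 - (2 * x / (1 + s)) ^ 2 = 2 / (1 + s) := by
    field_simp
    linarith
  refine ⟨2 * x / (1 + s), ?_, ?_⟩
  · rw [hsub]
    positivity
  · rw [stretch, hsub]
    field_simp

lemma hasDerivAt_stretch {t : ℝ} (ht : 0 < 1 - t ^ 2) :
    HasDerivAt stretch ((1 + t ^ 2) / (1 - t ^ 2) ^ 2) t := by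
  have hden : HasDerivAt (fun t : ℝ => 1 - t ^ 2) (-(2 * t)) t := by
    simpa using (hasDerivAt_pow 2 t).const_sub 1
  refine ((hasDerivAt_id' t).fun_div hden ht.ne').congr_deriv ?_
  congr 1
  ring

/-- The coordinatewise extension of `stretch` to `ℝ^ι`. -/
noncomputable def stretchPi (y : ι → ℝ) : ι → ℝ := fun i => stretch (y i)

/-- The open cube `(-1, 1)^ι`, given by polynomial inequalities. -/
def openCube (ι : Type) : Set (ι → ℝ) := {y | ∀ i, 0 < 1 - y i ^ 2}

lemma injOn_stretchPi : InjOn stretchPi (openCube ι) := fun _ hy _ hz h =>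
  funext fun i => stretch_inj (hy i) (hz i) (congrFun h i)

lemma surjOn_stretchPi : SurjOn stretchPi (openCube ι) univ := fun x _ => by
  choose y hy hyx using fun i => exists_stretch_eq (x i)
  exact ⟨y, hy, funext hyx⟩

lemma isBounded_openCube [Finite ι] : Bornology.IsBounded (openCube ι) := by
  refine Bornology.forall_isBounded_image_eval_iff.1 fun i =>
    (Metric.isBounded_Ioo (-1 : ℝ) 1).subset ?_
  rintro _ ⟨y, hy, rfl⟩
  rw [mem_Ioo, ← abs_lt, ← sq_lt_one_iff_abs_lt_one]
  exact sub_pos.1 (hy i)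

/-- The derivative of `stretchPi`. -/
noncomputable def stretchPiDeriv (y : ι → ℝ) : (ι → ℝ) →L[ℝ] (ι → ℝ) :=
  ContinuousLinearMap.pi fun i =>
    (ContinuousLinearMap.toSpanSingleton ℝ ((1 + y i ^ 2) / (1 - y i ^ 2) ^ 2)) ∘SL
      ContinuousLinearMap.proj i

lemma hasFDerivAt_stretchPi [Finite ι] {y : ι → ℝ} (hy : y ∈ openCube ι) :
    HasFDerivAt stretchPi (stretchPiDeriv y) y := by
  have := Fintype.ofFinite ι
  exact hasFDerivAt_pi.2 fun i => (hasDerivAt_stretch (hy i)).hasFDerivAt.comp y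
    (hasFDerivAt_apply i y)

section Stretch

variable [Fintype ι]

lemma det_stretchPiDeriv (y : ι → ℝ) :
    (stretchPiDeriv y).det = ∏ i, ((1 + y i ^ 2) / (1 - y i ^ 2) ^ 2) := by
  rw [stretchPiDeriv, ContinuousLinearMap.det_pi]
  refine Finset.prod_congr rfl fun i _ => ?_
  simp [ContinuousLinearMap.det, LinearMap.det_ring]

/-- The common denominator of the coordinates of `stretchPi`. -/
noncomputable def stretchDenom (ι : Type) [Fintype ι] : MvPolynomial ι ℚ := ∏ i, (1 - X i ^ 2)

lemma aeval_stretchDenom (y : ι → ℝ) : aeval y (stretchDenom ι) = ∏ i, (1 - y i ^ 2) := by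
  simp [stretchDenom]

lemma aeval_stretchDenom_pos {y : ι → ℝ} (hy : y ∈ openCube ι) :
    0 < aeval y (stretchDenom ι) := by
  rw [aeval_stretchDenom]
  exact Finset.prod_pos fun i _ => hy i

lemma exists_aeval_eq_pow_mul_aeval_stretchPi (P : MvPolynomial ι ℚ) :
    ∃ (N : ℕ) (P' : MvPolynomial ι ℚ), ∀ y ∈ openCube ι,
      aeval y P' = aeval y (stretchDenom ι) ^ N * aeval (stretchPi y) P := by
  classical
  induction P using MvPolynomial.induction_on with
  | C a => exact ⟨0, C a, fun y _ => by simp⟩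
  | add p q hp hq =>
    obtain ⟨N, p', hp⟩ := hp
    obtain ⟨M, q', hq⟩ := hq
    refine ⟨N + M, p' * stretchDenom ι ^ M + q' * stretchDenom ι ^ N, fun y hy => ?_⟩
    simp only [map_add, map_mul, map_pow, hp y hy, hq y hy]
    ring
  | mul_X p i hp =>
    obtain ⟨N, p', hp⟩ := hp
    refine ⟨N + 1, p' * X i * ∏ j ∈ Finset.univ.erase i, (1 - X j ^ 2), fun y hy => ?_⟩
    have hdenom : aeval y (stretchDenom ι) * stretchPi y i =
        y i * ∏ j ∈ Finset.univ.erase i, (1 - y j ^ 2) := by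
      rw [aeval_stretchDenom, ← Finset.mul_prod_erase _ _ (Finset.mem_univ i), stretchPi, stretch]
      field_simp [(hy i).ne']
    simp only [map_mul, map_prod, map_sub, map_one, map_pow, aeval_X, hp y hy]
    linear_combination -(aeval y (stretchDenom ι) ^ N * aeval (stretchPi y) p) * hdenom

lemma abs_det_stretchPiDeriv (y : ι → ℝ) :
    |(stretchPiDeriv y).det| = aeval y (∏ i, (1 + X i ^ 2) : MvPolynomial ι ℚ) /
      aeval y (stretchDenom ι) ^ 2 := by
  rw [det_stretchPiDeriv, abs_of_nonneg (Finset.prod_nonneg fun i _ => by positivity),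
    Finset.prod_div_distrib, Finset.prod_pow, aeval_stretchDenom]
  simp

end Stretch

lemma exists_basicOpen_eq_openCube_inter_preimage [Finite ι] (G : κ → MvPolynomial ι ℚ) :
    ∃ H : κ ⊕ ι → MvPolynomial ι ℚ,
      basicOpen H = openCube ι ∩ stretchPi ⁻¹' basicOpen G := by
  have := Fintype.ofFinite ι
  choose n G' hG' using fun j => exists_aeval_eq_pow_mul_aeval_stretchPi (G j)
  refine ⟨Sum.elim G' fun i => 1 - X i ^ 2, ?_⟩
  have hcube : basicOpen (fun i => 1 - X i ^ 2 : ι → MvPolynomial ι ℚ) = openCube ι := by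
    simp [basicOpen, openCube]
  rw [basicOpen_sumElim, hcube, inter_comm]
  ext y
  refine and_congr_right fun hy => forall_congr' fun j => ?_
  rw [hG' j y hy, mul_pos_iff_of_pos_left (pow_pos (aeval_stretchDenom_pos hy) _)]

lemma exists_abs_det_stretchPiDeriv_smul_div_eq [Finite ι] (P Q : MvPolynomial ι ℚ) :
    ∃ P' Q' : MvPolynomial ι ℚ, ∀ y ∈ openCube ι, aeval (stretchPi y) Q ≠ 0 →
      aeval y Q' ≠ 0 ∧ |(stretchPiDeriv y).det| • (aeval (stretchPi y) P / aeval (stretchPi y) Q) =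
        aeval y P' / aeval y Q' := by
  have := Fintype.ofFinite ι
  obtain ⟨a, P', hP'⟩ := exists_aeval_eq_pow_mul_aeval_stretchPi P
  obtain ⟨b, Q', hQ'⟩ := exists_aeval_eq_pow_mul_aeval_stretchPi Q
  refine ⟨(∏ i, (1 + X i ^ 2)) * P' * stretchDenom ι ^ b, Q' * stretchDenom ι ^ (a + 2),
    fun y hy hQ => ?_⟩
  have hdenom := (aeval_stretchDenom_pos hy).ne'
  rw [abs_det_stretchPiDeriv]
  simp only [map_mul, map_pow, hP' y hy, hQ' y hy, smul_eq_mul]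
  refine ⟨by positivity, ?_⟩
  field_simp
  ring

lemma setIntegral_div_mem_volumeSpan_of_integrableOn [Fintype ι] [Finite κ]
    {G : κ → MvPolynomial ι ℚ} {P Q : MvPolynomial ι ℚ}
    (hQ : ∀ x ∈ basicOpen G, aeval x Q ≠ 0)
    (hint : IntegrableOn (fun x => aeval x P / aeval x Q) (basicOpen G)) :
    ∫ x in basicOpen G, aeval x P / aeval x Q ∈ volumeSpan := by
  obtain ⟨H, hH⟩ := exists_basicOpen_eq_openCube_inter_preimage G
  obtain ⟨P', Q', hPQ⟩ := exists_abs_det_stretchPiDeriv_smul_div_eq P Q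
  have hcube : basicOpen H ⊆ openCube ι := hH ▸ inter_subset_left
  have hQH : ∀ y ∈ basicOpen H, aeval (stretchPi y) Q ≠ 0 := fun y hy => hQ _ (hH ▸ hy).2
  have himage : stretchPi '' basicOpen H = basicOpen G := by
    rw [hH, image_inter_preimage,
      inter_eq_right.2 ((subset_univ _).trans surjOn_stretchPi)]
  have hmeas := measurableSet_basicOpen H
  have hderiv : ∀ y ∈ basicOpen H,
      HasFDerivWithinAt stretchPi (stretchPiDeriv y) (basicOpen H) y :=
    fun y hy => (hasFDerivAt_stretchPi (hcube hy)).hasFDerivWithinAt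
  have hinj := injOn_stretchPi.mono hcube
  have heq : EqOn (fun y => |(stretchPiDeriv y).det| •
      (aeval (stretchPi y) P / aeval (stretchPi y) Q)) (fun y => aeval y P' / aeval y Q')
      (basicOpen H) := fun y hy => (hPQ y (hcube hy) (hQH y hy)).2
  rw [← himage, integrableOn_image_iff_integrableOn_abs_det_fderiv_smul volume hmeas hderiv hinj]
    at hint
  rw [← himage, integral_image_eq_integral_abs_det_fderiv_smul volume hmeas hderiv hinj,
    setIntegral_congr_fun hmeas heq]
  exact setIntegral_div_mem_volumeSpan_of_isBounded (isBounded_openCube.subset hcube)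
    (fun y hy => (hPQ y (hcube hy) (hQH y hy)).1) (hint.congr_fun heq hmeas)

lemma mem_volumeSpan_of_isRealPeriod {a : ℝ} (ha : IsRealPeriod a) : a ∈ volumeSpan := by
  obtain ⟨ℓ, q, G, P, Q, hQ, hint, rfl⟩ := ha
  exact setIntegral_div_mem_volumeSpan_of_integrableOn hQ hint

end RealPeriods

/-- The set of real periods equals the ℚ-subalgebra of ℝ
generated by the volumes of bounded basic open semialgebraic sets. -/
theorem realPeriods_eq_adjoin_volumes :
    {α : ℝ | IsRealPeriod α}
      = (Algebra.adjoin ℚ BasicSemialgebraicVolumes : Subalgebra ℚ ℝ) :=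
  Set.Subset.antisymm
    (fun _ hα => Algebra.span_le_adjoin ℚ _ (RealPeriods.mem_volumeSpan_of_isRealPeriod hα))
    RealPeriods.adjoin_volumes_le_periodSubalgebra
end

section
/- Let D ⊆ ℝ^ℓ be a bounded basic open semialgebraic set defined by integer-coefficient polynomials, contained in [0,r]^ℓ for a positive rational r. Then there exists an elementary function φ : ℕ^{ℓ+1} → ℕ such that for all n ≥ 1 and all k = (k_1,…,k_ℓ) with 0 ≤ k_i < n, φ(n, k_1, …, k_ℓ) = 1 if the cube C_n(k) is contained in D, and φ(n, k_1, …, k_ℓ) = 0 otherwise. -/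
/-- The class of elementary functions `ℕ^n → ℕ`: the smallest class containing the
zero function, successor, projections, addition, multiplication and truncated
subtraction, and closed under composition, bounded summation and bounded product. -/
inductive Elem : ∀ {n : ℕ}, ((Fin n → ℕ) → ℕ) → Prop
  | zero {n : ℕ} : Elem (fun _ : Fin n → ℕ => 0)
  | succ : Elem (fun x : Fin 1 → ℕ => x 0 + 1)
  | proj {n : ℕ} (i : Fin n) : Elem (fun x : Fin n → ℕ => x i)
  | add : Elem (fun x : Fin 2 → ℕ => x 0 + x 1)
  | mul : Elem (fun x : Fin 2 → ℕ => x 0 * x 1)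
  | tsub : Elem (fun x : Fin 2 → ℕ => x 0 - x 1)
  | comp {m n : ℕ} {f : (Fin m → ℕ) → ℕ} {g : Fin m → (Fin n → ℕ) → ℕ} :
      Elem f → (∀ i, Elem (g i)) → Elem (fun x => f (fun i => g i x))
  | bsum {n : ℕ} {f : (Fin (n + 1) → ℕ) → ℕ} : Elem f →
      Elem (fun x : Fin (n + 1) → ℕ =>
        ∑ t ∈ Finset.range (x 0 + 1), f (Fin.cons t (fun i => x i.succ)))
  | bprod {n : ℕ} {f : (Fin (n + 1) → ℕ) → ℕ} : Elem f →
      Elem (fun x : Fin (n + 1) → ℕ =>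
        ∏ t ∈ Finset.range (x 0 + 1), f (Fin.cons t (fun i => x i.succ)))

/-- A one-variable function `ℕ → ℕ` is elementary. -/
def Elem1 (f : ℕ → ℕ) : Prop :=
  Elem (fun x : Fin 1 → ℕ => f (x 0))

/-- A (nonnegative) real number is elementary if it is approximated, with an
elementary modulus, by an elementary rational Cauchy sequence. -/
def ElemReal (α : ℝ) : Prop :=
  ∃ a b c : ℕ → ℕ, Elem1 a ∧ Elem1 b ∧ Elem1 c ∧
    ∀ k : ℕ, 1 ≤ k → ∀ x : ℕ, c k ≤ x →
      |(a x : ℝ) / ((b x : ℝ) + 1) - α| < 1 / (k : ℝ)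

/-- The small cube `C_n(k) = Π_{i} [kᵢ·r/n, (kᵢ+1)·r/n] ⊆ ℝ^ℓ`. -/
def smallCube (ℓ : ℕ) (r : ℚ) (n : ℕ) (k : Fin ℓ → ℕ) : Set (Fin ℓ → ℝ) :=
  Set.univ.pi fun i => Set.Icc ((k i : ℝ) * r / n) (((k i : ℝ) + 1) * r / n)

/-!
A cube lies in `D` if and only if each `G i`, transported to the unit cube by an affine map whose
coefficients are polynomial in `n` and `k`, is positive there. So let `P` be a polynomial on the
unit cube with integer parameters `u`. If `P` is positive and `1 / m` is bounded by an elementary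
function of `u`, where `m` is the minimum of `P`, then a Lipschitz constant turns the positivity of
`P` into finitely many inequalities at the points of a grid of elementary size, hence into an
elementary predicate.

To bound `1 / m`, minimise `N P + (∑ i, X i ^ (d + 1)) / (d + 1)` instead, for large `d`. The
minimisers satisfy `X i ^ (d + 2) = X i ^ (d + 1) + N (X i - X i ^ 2) ∂P/∂X i`, on the boundary of
the cube too. Modulo these equations the polynomials form a finite module over `ℤ[u][N]`, so `P`
is a root of a monic polynomial with coefficients in `ℤ[u][N]`. As `N → ∞` the value of `P` at the
minimisers tends to `m`, and therefore `m` is a root of the leading coefficient with respect to `N`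
of this polynomial. That is a nonzero polynomial whose coefficients are integers and elementary in
`u`, and Cauchy's bound on the roots of its reverse bounds `1 / m`.
-/

open scoped NNReal Polynomial

section ElementaryFunctions

variable {n : ℕ}

namespace Elem

theorem congr {f g : (Fin n → ℕ) → ℕ} (hf : Elem f) (h : ∀ x, f x = g x) : Elem g :=
  funext h ▸ hf

theorem comp₂ {F : ℕ → ℕ → ℕ} (hF : Elem fun x : Fin 2 → ℕ => F (x 0) (x 1))
    {f g : (Fin n → ℕ) → ℕ} (hf : Elem f) (hg : Elem g) : Elem fun x => F (f x) (g x) :=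
  hF.comp (g := ![f, g]) (Fin.forall_fin_two.2 ⟨hf, hg⟩)

theorem fun_add {f g : (Fin n → ℕ) → ℕ} (hf : Elem f) (hg : Elem g) :
    Elem fun x => f x + g x :=
  comp₂ add hf hg

theorem fun_mul {f g : (Fin n → ℕ) → ℕ} (hf : Elem f) (hg : Elem g) :
    Elem fun x => f x * g x :=
  comp₂ mul hf hg

theorem fun_tsub {f g : (Fin n → ℕ) → ℕ} (hf : Elem f) (hg : Elem g) :
    Elem fun x => f x - g x :=
  comp₂ tsub hf hg

theorem const : ∀ c : ℕ, Elem fun _ : Fin n → ℕ => c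
  | 0 => zero
  | c + 1 => succ.comp (g := fun _ _ => c) fun _ => const c

theorem fun_pow {f : (Fin n → ℕ) → ℕ} (hf : Elem f) : ∀ d : ℕ, Elem fun x => f x ^ d
  | 0 => const 1
  | d + 1 => (hf.fun_pow d).fun_mul hf

theorem fun_sum {ι : Type*} (s : Finset ι) {f : ι → (Fin n → ℕ) → ℕ} (hf : ∀ i, Elem (f i)) :
    Elem fun x => ∑ i ∈ s, f i x := by
  induction s using Finset.cons_induction with
  | empty => exact zero
  | cons a s ha ih => simpa only [Finset.sum_cons] using (hf a).fun_add ih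

theorem fun_prod {ι : Type*} (s : Finset ι) {f : ι → (Fin n → ℕ) → ℕ} (hf : ∀ i, Elem (f i)) :
    Elem fun x => ∏ i ∈ s, f i x := by
  induction s using Finset.cons_induction with
  | empty => exact const 1
  | cons a s ha ih => simpa only [Finset.prod_cons] using (hf a).fun_mul ih

theorem prod_range_succ_snoc {f : (Fin (n + 1) → ℕ) → ℕ} (hf : Elem f) {b : (Fin n → ℕ) → ℕ}
    (hb : Elem b) : Elem fun x => ∏ t ∈ Finset.range (b x + 1), f (Fin.snoc x t) := by
  have hsnoc : Elem fun y : Fin (n + 1) → ℕ => f (Fin.snoc (fun i => y i.succ) (y 0)) := by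
    refine hf.comp (g := fun i y => (Fin.snoc (fun i => y i.succ) (y 0) : Fin (n + 1) → ℕ) i)
      (Fin.lastCases ?_ fun i => ?_)
    · simpa only [Fin.snoc_last] using proj 0
    · simpa only [Fin.snoc_castSucc] using proj i.succ
  have hcons := (bprod hsnoc).comp (g := fun i x => (Fin.cons (b x) x : Fin (n + 1) → ℕ) i)
    (Fin.cases (by simpa only [Fin.cons_zero] using hb)
      fun i => by simpa only [Fin.cons_succ] using proj i)
  simpa only [Fin.cons_zero, Fin.cons_succ] using hcons

end Elem

open Classical in
/-- A predicate on `ℕ^n` is elementary if its characteristic function is. -/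
def ElemPred (P : (Fin n → ℕ) → Prop) : Prop :=
  Elem fun x => if P x then 1 else 0

namespace ElemPred

theorem congr {P Q : (Fin n → ℕ) → Prop} (hP : ElemPred P) (h : ∀ x, P x ↔ Q x) : ElemPred Q :=
  funext (fun x => propext (h x)) ▸ hP

theorem le {f g : (Fin n → ℕ) → ℕ} (hf : Elem f) (hg : Elem g) :
    ElemPred fun x => f x ≤ g x :=
  ((Elem.const 1).fun_tsub (hf.fun_tsub hg)).congr fun x => by split_ifs <;> omega

theorem forall_finite {ι : Type*} [Finite ι] {P : ι → (Fin n → ℕ) → Prop}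
    (hP : ∀ i, ElemPred (P i)) : ElemPred fun x => ∀ i, P i x := by
  classical
  have := Fintype.ofFinite ι
  exact (Elem.fun_prod Finset.univ hP).congr fun x => by
    simp only [Finset.prod_boole, Finset.mem_univ, forall_const]
    congr

theorem forall_le_snoc {P : (Fin (n + 1) → ℕ) → Prop} (hP : ElemPred P)
    {b : (Fin n → ℕ) → ℕ} (hb : Elem b) : ElemPred fun x => ∀ t ≤ b x, P (Fin.snoc x t) := by
  classical
  exact (Elem.prod_range_succ_snoc hP hb).congr fun x => by
    simp only [Finset.prod_boole, Finset.mem_range, Nat.lt_succ_iff]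
    congr

theorem forall_le_append : ∀ {l : ℕ} {P : (Fin (n + l) → ℕ) → Prop}, ElemPred P →
    ∀ {b : (Fin n → ℕ) → ℕ}, Elem b →
      ElemPred fun x => ∀ t : Fin l → ℕ, (∀ j, t j ≤ b x) → P (Fin.append x t)
  | 0, P, hP, b, _ => hP.congr fun x => by
      simp [Fin.append_right_nil, Subsingleton.elim _ (Fin.elim0 : Fin 0 → ℕ)]
  | l + 1, P, hP, b, hb => by
      have hlast : ElemPred fun y : Fin (n + l) → ℕ =>
          ∀ a ≤ b (fun i => y (i.castAdd l)), P (Fin.snoc y a) :=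
        forall_le_snoc hP (hb.comp fun i => Elem.proj (i.castAdd l))
      refine (hlast.forall_le_append hb).congr fun x => ?_
      simp only [Fin.append_left, ← Fin.append_snoc]
      refine ⟨fun h t ht => ?_, fun h t ht a ha => h _ (Fin.lastCases ?_ fun j => ?_)⟩
      · rw [← Fin.snoc_init_self t]
        exact h _ (fun j => ht _) _ (ht _)
      · simpa only [Fin.snoc_last] using ha
      · simpa only [Fin.snoc_castSucc] using ht j

end ElemPred

/-- An integer-valued function on `ℕ^n` is elementary if it is a difference of two elementary
functions. -/
def ElemInt (f : (Fin n → ℕ) → ℤ) : Prop :=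
  ∃ a b : (Fin n → ℕ) → ℕ, Elem a ∧ Elem b ∧ ∀ x, f x = a x - b x

namespace ElemInt

theorem natCast {f : (Fin n → ℕ) → ℕ} (hf : Elem f) : ElemInt fun x => (f x : ℤ) :=
  ⟨f, _, hf, Elem.zero, fun x => by simp⟩

theorem const (c : ℤ) : ElemInt fun _ : Fin n → ℕ => c :=
  ⟨_, _, Elem.const c.toNat, Elem.const (-c).toNat, fun _ => (Int.toNat_sub_toNat_neg c).symm⟩

theorem fun_add {f g : (Fin n → ℕ) → ℤ} (hf : ElemInt f) (hg : ElemInt g) :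
    ElemInt fun x => f x + g x := by
  obtain ⟨a, b, ha, hb, hfab⟩ := hf
  obtain ⟨c, d, hc, hd, hgcd⟩ := hg
  refine ⟨_, _, ha.fun_add hc, hb.fun_add hd, fun x => ?_⟩
  simp only [hfab, hgcd]
  push_cast
  ring

theorem fun_mul {f g : (Fin n → ℕ) → ℤ} (hf : ElemInt f) (hg : ElemInt g) :
    ElemInt fun x => f x * g x := by
  obtain ⟨a, b, ha, hb, hfab⟩ := hf
  obtain ⟨c, d, hc, hd, hgcd⟩ := hg
  refine ⟨_, _, (ha.fun_mul hc).fun_add (hb.fun_mul hd),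
    (ha.fun_mul hd).fun_add (hb.fun_mul hc), fun x => ?_⟩
  simp only [hfab, hgcd]
  push_cast
  ring

theorem elemPred_le {f g : (Fin n → ℕ) → ℤ} (hf : ElemInt f) (hg : ElemInt g) :
    ElemPred fun x => f x ≤ g x := by
  obtain ⟨a, b, ha, hb, hfab⟩ := hf
  obtain ⟨c, d, hc, hd, hgcd⟩ := hg
  refine (ElemPred.le (ha.fun_add hd) (hc.fun_add hb)).congr fun x => ?_
  rw [hfab, hgcd]
  omega

theorem exists_abs_le {f : (Fin n → ℕ) → ℤ} (hf : ElemInt f) :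
    ∃ B : (Fin n → ℕ) → ℕ, Elem B ∧ ∀ x, |f x| ≤ B x := by
  obtain ⟨a, b, ha, hb, hfab⟩ := hf
  refine ⟨_, ha.fun_add hb, fun x => ?_⟩
  rw [hfab, abs_le]
  omega

theorem eval₂ {σ R : Type*} [CommSemiring R] {φ : (Fin n → ℕ) → R →+* ℤ}
    (hφ : ∀ a, ElemInt fun x => φ x a) {τ : σ → (Fin n → ℕ) → ℤ} (hτ : ∀ i, ElemInt (τ i))
    (p : MvPolynomial σ R) : ElemInt fun x => p.eval₂ (φ x) fun i => τ i x := by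
  induction p using MvPolynomial.induction_on with
  | C a => simpa only [MvPolynomial.eval₂_C] using hφ a
  | add p q hp hq => simpa only [MvPolynomial.eval₂_add] using hp.fun_add hq
  | mul_X p i hp =>
    simpa only [MvPolynomial.eval₂_mul, MvPolynomial.eval₂_X] using hp.fun_mul (hτ i)

end ElemInt

end ElementaryFunctions

section MinimumOnBox

open MvPolynomial Filter Topology

variable {σ : Type*}

theorem hasDerivAt_eval_update [DecidableEq σ] (P : MvPolynomial σ ℝ) (p : σ → ℝ) (i : σ) (s : ℝ) :
    HasDerivAt (fun s => eval (Function.update p i s) P)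
      (eval (Function.update p i s) (pderiv i P)) s := by
  induction P using MvPolynomial.induction_on with
  | C a => simpa using hasDerivAt_const s a
  | add P Q hP hQ => simpa only [map_add] using hP.fun_add hQ
  | mul_X P j hP =>
    simp only [map_mul, eval_X, pderiv_mul, map_add]
    refine hP.fun_mul ?_
    obtain rfl | hj := eq_or_ne j i
    · simpa using hasDerivAt_id' s
    · simpa [pderiv_X_of_ne hj, hj] using hasDerivAt_const s (p j)

theorem mul_eval_pderiv_eq_zero_of_isMinOn_Icc {P : MvPolynomial σ ℝ} {a b p : σ → ℝ}
    (hp : p ∈ Set.Icc a b) (hmin : IsMinOn (fun t => eval t P) (Set.Icc a b) p) (i : σ) :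
    (p i - a i) * (b i - p i) * eval p (pderiv i P) = 0 := by
  classical
  obtain ha | ha := (hp.1 i).eq_or_lt
  · simp [ha]
  obtain hb | hb := (hp.2 i).eq_or_lt
  · simp [hb]
  have hloc : IsLocalMin (fun s => eval (Function.update p i s) P) (p i) := by
    filter_upwards [Icc_mem_nhds ha hb] with s hs
    rw [Function.update_eq_self]
    exact hmin ⟨le_update_iff.2 ⟨hs.1, fun j _ => hp.1 j⟩,
      update_le_iff.2 ⟨hs.2, fun j _ => hp.2 j⟩⟩
  have hderiv := hloc.hasDerivAt_eq_zero (hasDerivAt_eval_update P p i (p i))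
  rw [Function.update_eq_self] at hderiv
  rw [hderiv, mul_zero]

theorem exists_isMinOn_eval_Icc (P : MvPolynomial σ ℝ) {a b : σ → ℝ} (hab : a ≤ b) :
    ∃ p ∈ Set.Icc a b, IsMinOn (fun t => eval t P) (Set.Icc a b) p :=
  isCompact_Icc.exists_isMinOn (Set.nonempty_Icc.2 hab) (continuous_eval P).continuousOn

theorem tendsto_of_isMinOn_perturbation {α : Type*} {f g : α → ℝ} {S : Set α} {C : ℝ}
    (hg : ∀ x ∈ S, |g x| ≤ C) {x₀ : α} (hx₀ : x₀ ∈ S) (hmin₀ : IsMinOn f S x₀) {x : ℕ → α}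
    (hx : ∀ N, x N ∈ S) (hmin : ∀ N : ℕ, IsMinOn (fun y => N * f y + g y) S (x N)) :
    Tendsto (fun N => f (x N)) atTop (𝓝 (f x₀)) := by
  have hupper : ∀ᶠ N : ℕ in atTop, f (x N) ≤ f x₀ + 2 * C / N := by
    filter_upwards [eventually_gt_atTop 0] with N hN
    have hle : N * f (x N) + g (x N) ≤ N * f x₀ + g x₀ := hmin N hx₀
    have hNpos : (0 : ℝ) < N := Nat.cast_pos.2 hN
    rw [← sub_le_iff_le_add', le_div_iff₀ hNpos]
    linarith [(abs_le.1 (hg _ (hx N))).1, (abs_le.1 (hg _ hx₀)).2]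
  refine tendsto_of_tendsto_of_tendsto_of_le_of_le' tendsto_const_nhds ?_
    (Eventually.of_forall fun N => hmin₀ (hx N)) hupper
  simpa using (tendsto_const_div_atTop_nhds_zero_nat (2 * C)).const_add (f x₀)

variable [Fintype σ]

/-- The polynomial `N P + (∑ i, X i ^ (d + 1)) / (d + 1)`. For large `d` its critical points are
isolated, and for large `N` its minimisers nearly minimise `P`. -/
noncomputable def perturbation (P : MvPolynomial σ ℝ) (d N : ℕ) : MvPolynomial σ ℝ :=
  C (N : ℝ) * P + C ((d + 1 : ℝ)⁻¹) * ∑ i, X i ^ (d + 1)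

theorem eval_perturbation (P : MvPolynomial σ ℝ) (d N : ℕ) (t : σ → ℝ) :
    eval t (perturbation P d N) = N * eval t P + (d + 1 : ℝ)⁻¹ * ∑ i, t i ^ (d + 1) := by
  simp [perturbation]

theorem eval_pderiv_perturbation (P : MvPolynomial σ ℝ) (d N : ℕ) (t : σ → ℝ) (i : σ) :
    eval t (pderiv i (perturbation P d N)) = N * eval t (pderiv i P) + t i ^ d := by
  classical
  have hd : (d + 1 : ℝ) ≠ 0 := by positivity
  simp [perturbation, pderiv_X, Pi.single_apply, hd]

theorem pow_eq_of_isMinOn_perturbation {P : MvPolynomial σ ℝ} {d N : ℕ} {p : σ → ℝ}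
    (hp : p ∈ Set.Icc 0 1)
    (hmin : IsMinOn (fun t => eval t (perturbation P d N)) (Set.Icc 0 1) p) (i : σ) :
    p i ^ (d + 2) = p i ^ (d + 1) + N * ((p i - p i ^ 2) * eval p (pderiv i P)) := by
  have hcrit := mul_eval_pderiv_eq_zero_of_isMinOn_Icc hp hmin i
  rw [eval_pderiv_perturbation, Pi.zero_apply, Pi.one_apply] at hcrit
  linear_combination -hcrit

theorem tendsto_eval_of_isMinOn_perturbation {P : MvPolynomial σ ℝ} {d : ℕ} {p₀ : σ → ℝ}
    (hp₀ : p₀ ∈ Set.Icc 0 1) (hmin₀ : IsMinOn (fun t => eval t P) (Set.Icc 0 1) p₀)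
    {p : ℕ → σ → ℝ} (hp : ∀ N, p N ∈ Set.Icc 0 1)
    (hmin : ∀ N, IsMinOn (fun t => eval t (perturbation P d N)) (Set.Icc 0 1) (p N)) :
    Tendsto (fun N => eval (p N) P) atTop (𝓝 (eval p₀ P)) := by
  simp only [eval_perturbation] at hmin
  refine tendsto_of_isMinOn_perturbation (C := (d + 1 : ℝ)⁻¹ * ∑ _i : σ, 1)
    (fun t ht => ?_) hp₀ hmin₀ hp hmin
  have hsum : 0 ≤ ∑ i, t i ^ (d + 1) := Finset.sum_nonneg fun i _ => pow_nonneg (ht.1 i) _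
  rw [abs_of_nonneg (by positivity)]
  gcongr with i
  exact pow_le_one₀ (ht.1 i) (ht.2 i)

end MinimumOnBox

section Elimination

open MvPolynomial

variable {σ R : Type*} [CommRing R]

theorem restrictDegree_sup_span_eq_top {g : σ → MvPolynomial σ R} {e : ℕ}
    (hg : ∀ i, (g i).totalDegree ≤ e) :
    restrictDegree σ R e ⊔
      (Ideal.span (Set.range fun i => X i ^ (e + 1) - g i)).restrictScalars R = ⊤ := by
  set I := Ideal.span (Set.range fun i => X i ^ (e + 1) - g i)
  suffices h : ∀ D (p : MvPolynomial σ R), p.totalDegree < D →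
      p ∈ restrictDegree σ R e ⊔ I.restrictScalars R from
    eq_top_iff.2 fun p _ => h _ p (Nat.lt_succ_self _)
  intro D
  induction D with
  | zero => exact fun p hp => absurd hp (Nat.not_lt_zero _)
  | succ D ih =>
    intro p hp
    rw [p.as_sum]
    refine Submodule.sum_mem _ fun β hβ => ?_
    have hdeg : β.degree < D + 1 := (le_totalDegree hβ).trans_lt hp
    by_cases hsmall : ∀ i, β i ≤ e
    · exact Submodule.mem_sup_left ((monomial_mem_restrictSupport R).2 (.inl hsmall))
    push Not at hsmall
    obtain ⟨i, hi⟩ := hsmall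
    obtain ⟨γ, rfl⟩ : ∃ γ, β = γ + Finsupp.single i (e + 1) :=
      ⟨_, (tsub_add_cancel_of_le (Finsupp.single_le_iff.2 hi)).symm⟩
    have hsplit : ∀ c : R, monomial (γ + Finsupp.single i (e + 1)) c
        = monomial γ c * g i + monomial γ c * (X i ^ (e + 1) - g i) := fun c => by
      rw [← mul_add, add_sub_cancel, X_pow_eq_monomial, monomial_mul, mul_one]
    rw [hsplit]
    refine Submodule.add_mem _ (ih _ ?_) (Submodule.mem_sup_right
      (I.mul_mem_left _ (Ideal.subset_span ⟨i, rfl⟩)))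
    rw [map_add, Finsupp.degree_single] at hdeg
    have hγ : (monomial γ (coeff (γ + Finsupp.single i (e + 1)) p)).totalDegree ≤ γ.degree :=
      totalDegree_monomial_le γ _
    have := totalDegree_mul (monomial γ (coeff (γ + Finsupp.single i (e + 1)) p)) (g i)
    have := hg i
    omega

theorem finite_quotient_span_X_pow_sub [Finite σ] {g : σ → MvPolynomial σ R} {e : ℕ}
    (hg : ∀ i, (g i).totalDegree ≤ e) :
    Module.Finite R (MvPolynomial σ R ⧸ Ideal.span (Set.range fun i => X i ^ (e + 1) - g i)) := by
  set I := Ideal.span (Set.range fun i => X i ^ (e + 1) - g i)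
  refine .of_surjective ((Ideal.Quotient.mkₐ R I).toLinearMap.comp
    (restrictDegree σ R e).subtype) fun y => ?_
  obtain ⟨p, rfl⟩ := Ideal.Quotient.mk_surjective y
  obtain ⟨a, ha, b, hb, rfl⟩ := Submodule.mem_sup.1
    (restrictDegree_sup_span_eq_top hg ▸ Submodule.mem_top : p ∈ _)
  exact ⟨⟨a, ha⟩, Ideal.Quotient.eq.2 (by simpa using hb)⟩

theorem exists_monic_aeval_mem_of_finite_quotient {S : Type*} [CommRing S] [Algebra R S]
    (I : Ideal S) [Module.Finite R (S ⧸ I)] (x : S) :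
    ∃ χ : R[X], χ.Monic ∧ Polynomial.aeval x χ ∈ I := by
  obtain ⟨χ, hχ, hroot⟩ := IsIntegral.of_finite R (Ideal.Quotient.mkₐ R I x)
  refine ⟨χ, hχ, ?_⟩
  rwa [← Ideal.Quotient.eq_zero_iff_mem, ← Ideal.Quotient.mkₐ_eq_mk R,
    ← Polynomial.aeval_algHom_apply]

end Elimination

section LeadingCoefficient

open Polynomial Polynomial.Bivariate Filter Topology

theorem tendsto_aevalAeval_div_pow_natDegree {R α : Type*} [CommRing R] [Algebra R ℝ]
    (q : R[X][Y]) {l : Filter α} {y z : α → ℝ} {m : ℝ} (hy : Tendsto y l (𝓝 m))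
    (hz : Tendsto z l atTop) :
    Tendsto (fun a => aevalAeval (y a) (z a) q / z a ^ q.natDegree) l
      (𝓝 (aeval m q.leadingCoeff)) := by
  have hcoeff (i : ℕ) : Tendsto (fun a => aeval (y a) (q.coeff i)) l (𝓝 (aeval m (q.coeff i))) :=
    ((q.coeff i).continuous_aeval.tendsto m).comp hy
  have hsum (a : α) : aevalAeval (y a) (z a) q = ∑ i ∈ Finset.range q.natDegree,
      aeval (y a) (q.coeff i) * z a ^ i + aeval (y a) q.leadingCoeff * z a ^ q.natDegree := by
    conv_lhs => rw [q.as_sum_range_C_mul_X_pow, Finset.sum_range_succ]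
    simp only [map_add, map_sum, map_mul, map_pow, aevalAeval_C, aevalAeval_Y, coeff_natDegree]
  have hlower : Tendsto (fun a => ∑ i ∈ Finset.range q.natDegree,
      aeval (y a) (q.coeff i) * (z a ^ i / z a ^ q.natDegree)) l (𝓝 0) := by
    rw [← Finset.sum_const_zero (s := Finset.range q.natDegree)]
    refine tendsto_finsetSum _ fun i hi => ?_
    simpa using (hcoeff i).mul
      ((tendsto_pow_div_pow_atTop_zero (Finset.mem_range.1 hi)).comp hz)
  rw [← zero_add (aeval m _)]
  refine (hlower.add (hcoeff q.natDegree)).congr' ?_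
  filter_upwards [hz.eventually_gt_atTop 0] with a ha
  rw [hsum, add_div, Finset.sum_div, mul_div_cancel_right₀ _ (pow_pos ha _).ne']
  simp only [mul_div_assoc, leadingCoeff]

theorem aeval_leadingCoeff_eq_zero_of_tendsto {R α : Type*} [CommRing R] [Algebra R ℝ]
    {q : R[X][Y]} {l : Filter α} [l.NeBot] {y z : α → ℝ} {m : ℝ} (hy : Tendsto y l (𝓝 m))
    (hz : Tendsto z l atTop) (hq : ∀ a, aevalAeval (y a) (z a) q = 0) :
    aeval m q.leadingCoeff = 0 :=
  tendsto_nhds_unique (tendsto_aevalAeval_div_pow_natDegree q hy hz) <| by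
    simp only [hq, zero_div, tendsto_const_nhds]

theorem coeff_coeff_swap {R : Type*} [CommSemiring R] (p : R[X][Y]) (i j : ℕ) :
    ((swap p).coeff i).coeff j = (p.coeff j).coeff i := by
  induction p using Polynomial.induction_on' with
  | add p q hp hq => simp only [map_add, coeff_add, hp, hq]
  | monomial n f =>
    induction f using Polynomial.induction_on' with
    | add f g hf hg => simp only [map_add, coeff_add, hf, hg]
    | monomial k r =>
      simp only [swap_monomial_monomial, coeff_monomial]
      split_ifs <;> simp_all [coeff_monomial]

theorem one_le_mul_of_aeval_eq_zero {p : ℤ[X]} (hp : p ≠ 0) {m : ℝ} (hm : 0 < m)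
    (hroot : aeval m p = 0) {B : ℕ} (hB : ∀ j, |p.coeff j| ≤ B) : 1 ≤ (B + 1) * m := by
  have hrev : (p.reverse.map (Int.castRingHom ℝ)).IsRoot m⁻¹ := by
    let := invertibleOfNonzero hm.ne'
    rw [IsRoot, eval_map, ← invOf_eq_inv, eval₂_reverse_eq_zero_iff]
    exact hroot
  have hinj : Function.Injective (Int.castRingHom ℝ) := Int.cast_injective
  have hne : p.reverse.map (Int.castRingHom ℝ) ≠ 0 := by
    rwa [Polynomial.map_ne_zero_iff hinj, Ne, reverse_eq_zero]
  have hlead : 1 ≤ ‖(p.reverse.map (Int.castRingHom ℝ)).leadingCoeff‖₊ := by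
    rw [leadingCoeff_map_of_injective hinj, reverse_leadingCoeff, ← NNReal.coe_le_coe]
    simpa using mod_cast Int.one_le_abs (trailingCoeff_nonzero_iff_nonzero.2 hp)
  have hcauchy : cauchyBound (p.reverse.map (Int.castRingHom ℝ)) ≤ B + 1 := by
    refine add_le_add_left (div_le_of_le_mul₀ zero_le zero_le ?_) 1
    refine (Finset.sup_le fun i _ => ?_).trans (le_mul_of_one_le_right zero_le hlead)
    rw [← NNReal.coe_le_coe, coeff_map, coeff_reverse]
    simpa using mod_cast hB _
  have hlt : ‖m⁻¹‖ < B + 1 := mod_cast (hrev.norm_lt_cauchyBound hne).trans_le hcauchy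
  rw [Real.norm_eq_abs, abs_inv, abs_of_pos hm, inv_lt_iff_one_lt_mul₀ hm] at hlt
  exact hlt.le

end LeadingCoefficient

section LowerBound

open MvPolynomial Polynomial.Bivariate

theorem aevalAeval_eq_evalEval_map {R A : Type*} [CommRing R] [CommRing A] [Algebra R A] (x y : A)
    (q : R[X][Y]) : Polynomial.aevalAeval x y q =
      (q.map (Polynomial.mapRingHom (algebraMap R A))).evalEval x y := by
  have h : (Polynomial.aevalAeval (R := R) x y).toRingHom = (Polynomial.evalEvalRingHom x y).comp
      (Polynomial.mapRingHom (Polynomial.mapRingHom (algebraMap R A))) := by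
    ext <;> simp
  exact congr($h q)

theorem totalDegree_map_le {σ R S : Type*} [CommSemiring R] [CommSemiring S] (f : R →+* S)
    (p : MvPolynomial σ R) : (p.map f).totalDegree ≤ p.totalDegree :=
  Finset.sup_mono (support_map_subset f p)

variable {σ A : Type*} [CommRing A]

/-- The ideal of the equations `X i ^ (d + 2) = X i ^ (d + 1) + N (X i - X i ^ 2) ∂F/∂X i`
satisfied by the minimisers on the unit cube of `perturbation F d N`. Here `N` is the variable of
the coefficient ring `A[X]`. -/
noncomputable def criticalIdeal (F : MvPolynomial σ A) (d : ℕ) : Ideal (MvPolynomial σ A[X]) :=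
  Ideal.span <| Set.range fun i => X i ^ (d + 2) -
    (X i ^ (d + 1) + C Polynomial.X * ((X i - X i ^ 2) * pderiv i F).map Polynomial.C)

theorem exists_monic_aeval_mem_criticalIdeal [Finite σ] (F : MvPolynomial σ A) :
    ∃ (d : ℕ) (χ : A[X][Y]), χ.Monic ∧
      Polynomial.aeval (F.map Polynomial.C) χ ∈ criticalIdeal F d := by
  obtain ⟨d, hd⟩ :=
    (Set.finite_range fun i => ((X i - X i ^ 2) * pderiv i F).totalDegree).bddAbove
  have : Module.Finite A[X] (MvPolynomial σ A[X] ⧸ criticalIdeal F d) := by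
    refine finite_quotient_span_X_pow_sub fun i =>
      (totalDegree_add _ _).trans (max_le (isHomogeneous_X_pow i _).totalDegree_le ?_)
    rw [← smul_eq_C_mul]
    exact (totalDegree_smul_le _ _).trans
      ((totalDegree_map_le _ _).trans (Nat.le_succ_of_le (hd ⟨i, rfl⟩)))
  exact ⟨d, exists_monic_aeval_mem_of_finite_quotient (criticalIdeal F d) (F.map Polynomial.C)⟩

theorem evalEval_eq_zero_of_aeval_mem_criticalIdeal {K : Type*} [CommRing K] {F : MvPolynomial σ A}
    {d : ℕ} {χ : A[X][Y]} (hχ : Polynomial.aeval (F.map Polynomial.C) χ ∈ criticalIdeal F d)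
    (ψ : A →+* K) (N : K) {p : σ → K}
    (hp : ∀ i, p i ^ (d + 2) =
      p i ^ (d + 1) + N * ((p i - p i ^ 2) * eval₂ ψ p (pderiv i F))) :
    (χ.map (Polynomial.mapRingHom ψ)).evalEval N (eval₂ ψ p F) = 0 := by
  let Φ : MvPolynomial σ A[X] →+* K := eval₂Hom (Polynomial.eval₂RingHom ψ N) p
  have hΦ (G : MvPolynomial σ A) : Φ (G.map Polynomial.C) = eval₂ ψ p G := by
    simp only [Φ, coe_eval₂Hom, eval₂_map]
    congr 1
    ext
    simp
  have hker : criticalIdeal F d ≤ RingHom.ker Φ := by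
    rw [criticalIdeal, Ideal.span_le]
    rintro _ ⟨i, rfl⟩
    simp only [SetLike.mem_coe, RingHom.mem_ker, map_sub, map_add, map_mul Φ, hΦ]
    simp [Φ, hp i]
  have hzero : Φ (Polynomial.aeval (F.map Polynomial.C) χ) = 0 := hker hχ
  rw [Polynomial.aeval_def, Polynomial.hom_eval₂, hΦ] at hzero
  rw [← hzero, ← Polynomial.eval₂_eval₂RingHom_apply]
  congr 1
  ext <;> simp [Φ, algebraMap_eq]

variable [Finite σ]

theorem exists_monic_aeval_leadingCoeff_swap_eq_zero (F : MvPolynomial σ A) :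
    ∃ χ : A[X][Y], χ.Monic ∧ ∀ (ψ : A →+* ℤ) {p : σ → ℝ}, p ∈ Set.Icc 0 1 →
      IsMinOn (fun t => aeval t (F.map ψ)) (Set.Icc 0 1) p →
      Polynomial.aeval (aeval p (F.map ψ))
        (swap (χ.map (Polynomial.mapRingHom ψ))).leadingCoeff = 0 := by
  have := Fintype.ofFinite σ
  obtain ⟨d, χ, hχ, hmem⟩ := exists_monic_aeval_mem_criticalIdeal F
  refine ⟨χ, hχ, fun ψ p₀ hp₀ hmin₀ => ?_⟩
  set P := F.map ((algebraMap ℤ ℝ).comp ψ) with hP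
  choose p hp hmin using fun N =>
    exists_isMinOn_eval_Icc (perturbation P d N) (zero_le_one (α := σ → ℝ))
  have haeval (t : σ → ℝ) : aeval t (F.map ψ) = eval t P := by
    rw [hP, ← map_map, eval_map, aeval_def]
  simp only [haeval] at hmin₀ ⊢
  refine aeval_leadingCoeff_eq_zero_of_tendsto
    (tendsto_eval_of_isMinOn_perturbation hp₀ hmin₀ hp hmin) tendsto_natCast_atTop_atTop
    fun N => ?_
  have hN := evalEval_eq_zero_of_aeval_mem_criticalIdeal hmem ((algebraMap ℤ ℝ).comp ψ) (N : ℝ)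
    (p := p N) fun i => by
      rw [pow_eq_of_isMinOn_perturbation (hp N) (hmin N), hP, pderiv_map, eval_map]
  rwa [aevalAeval_swap, aevalAeval_eq_evalEval_map, Polynomial.map_map, Polynomial.mapRingHom_comp,
    hP, eval_map]

theorem exists_one_le_mul_aeval_of_abs_coeff_le (F : MvPolynomial σ A) :
    ∃ χ : A[X][Y], ∀ (ψ : A →+* ℤ) {B : ℕ}, (∀ i j, |ψ ((χ.coeff i).coeff j)| ≤ B) →
      (∀ t ∈ Set.Icc (0 : σ → ℝ) 1, 0 < aeval t (F.map ψ)) →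
      ∀ t ∈ Set.Icc (0 : σ → ℝ) 1, 1 ≤ (B + 1) * aeval t (F.map ψ) := by
  obtain ⟨χ, hχ, hroot⟩ := exists_monic_aeval_leadingCoeff_swap_eq_zero F
  refine ⟨χ, fun ψ B hB hpos t ht => ?_⟩
  obtain ⟨p, hp, hmin⟩ := exists_isMinOn_eval_Icc ((F.map ψ).map (algebraMap ℤ ℝ))
    (zero_le_one (α := σ → ℝ))
  simp only [eval_map, ← aeval_def] at hmin
  have hne : swap (χ.map (Polynomial.mapRingHom ψ)) ≠ 0 :=
    (map_ne_zero_iff _ swap.injective).2 (hχ.map _).ne_zero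
  have hbound : 1 ≤ (B + 1) * aeval p (F.map ψ) :=
    one_le_mul_of_aeval_eq_zero (Polynomial.leadingCoeff_ne_zero.2 hne) (hpos p hp)
      (hroot ψ hp hmin) fun j => by
        rw [Polynomial.leadingCoeff, coeff_coeff_swap, Polynomial.coeff_map,
          Polynomial.coe_mapRingHom, Polynomial.coeff_map]
        exact hB _ _
  refine hbound.trans ?_
  gcongr
  exact hmin ht

end LowerBound

section Parameters

open MvPolynomial

variable {σ : Type*} {s : ℕ}

/-- The integer polynomial obtained from a polynomial whose coefficients are polynomials in
parameters by giving these parameters the values `u`. -/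
noncomputable def specializeCoeffs (u : Fin s → ℕ) (F : MvPolynomial σ (MvPolynomial (Fin s) ℤ)) :
    MvPolynomial σ ℤ :=
  F.map (eval fun i => (u i : ℤ))

theorem exists_elem_abs_eval_le {S : Set (MvPolynomial (Fin s) ℤ)} (hS : S.Finite) :
    ∃ B : (Fin s → ℕ) → ℕ, Elem B ∧
      ∀ p ∈ S, ∀ u : Fin s → ℕ, |eval (fun i => (u i : ℤ)) p| ≤ B u := by
  choose b hb hle using fun p : MvPolynomial (Fin s) ℤ =>
    (ElemInt.eval₂ (φ := fun _ => RingHom.id ℤ) ElemInt.const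
      (fun i => ElemInt.natCast (Elem.proj i)) p).exists_abs_le
  refine ⟨_, Elem.fun_sum hS.toFinset hb, fun p hp u => (hle p u).trans ?_⟩
  exact mod_cast Finset.single_le_sum (f := fun p => b p u) (fun _ _ => Nat.zero_le _)
    (hS.mem_toFinset.2 hp)

theorem exists_elem_one_le_mul_aeval [Finite σ] (F : MvPolynomial σ (MvPolynomial (Fin s) ℤ)) :
    ∃ B : (Fin s → ℕ) → ℕ, Elem B ∧ ∀ u,
      (∀ t ∈ Set.Icc (0 : σ → ℝ) 1, 0 < aeval t (specializeCoeffs u F)) →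
      ∀ t ∈ Set.Icc (0 : σ → ℝ) 1, 1 ≤ B u * aeval t (specializeCoeffs u F) := by
  obtain ⟨χ, hχ⟩ := exists_one_le_mul_aeval_of_abs_coeff_le F
  obtain ⟨B, hB, hle⟩ := exists_elem_abs_eval_le
    (χ.finite_range_coeff.biUnion fun c _ => c.finite_range_coeff)
  refine ⟨_, hB.fun_add (Elem.const 1), fun u hpos => ?_⟩
  push_cast
  exact hχ _ (fun i j => hle _ (Set.mem_biUnion ⟨i, rfl⟩ ⟨j, rfl⟩) u) hpos

theorem lipschitzOnWith_mul_of_norm_le {α A : Type*} [PseudoMetricSpace α]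
    [NonUnitalSeminormedRing A] {S : Set α} {f g : α → A} {Kf Kg Mf Mg : ℝ≥0}
    (hf : LipschitzOnWith Kf f S) (hg : LipschitzOnWith Kg g S)
    (hMf : ∀ t ∈ S, ‖f t‖ ≤ Mf) (hMg : ∀ t ∈ S, ‖g t‖ ≤ Mg) :
    LipschitzOnWith (Mf * Kg + Kf * Mg) (fun t => f t * g t) S := by
  refine LipschitzOnWith.of_dist_le_mul fun t ht t' ht' => ?_
  calc dist (f t * g t) (f t' * g t')
    _ ≤ ‖f t * (g t - g t')‖ + ‖(f t - f t') * g t'‖ := by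
      rw [dist_eq_norm]
      refine (congrArg norm ?_).trans_le (norm_add_le _ _)
      noncomm_ring
    _ ≤ ‖f t‖ * ‖g t - g t'‖ + ‖f t - f t'‖ * ‖g t'‖ :=
      add_le_add (norm_mul_le _ _) (norm_mul_le _ _)
    _ ≤ Mf * (Kg * dist t t') + Kf * dist t t' * Mg := by
      rw [← dist_eq_norm, ← dist_eq_norm]
      gcongr
      · exact hMf t ht
      · exact hg.dist_le_mul t ht t' ht'
      · exact hf.dist_le_mul t ht t' ht'
      · exact hMg t' ht'
    _ = ((Mf * Kg + Kf * Mg : ℝ≥0) : ℝ) * dist t t' := by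
      push_cast
      ring

theorem exists_elem_lipschitzOnWith_and_abs_le [Fintype σ]
    (F : MvPolynomial σ (MvPolynomial (Fin s) ℤ)) :
    ∃ K : (Fin s → ℕ) → ℕ, Elem K ∧ ∀ u,
      LipschitzOnWith (K u) (fun t : σ → ℝ => aeval t (specializeCoeffs u F)) (Set.Icc 0 1) ∧
      ∀ t ∈ Set.Icc (0 : σ → ℝ) 1, |aeval t (specializeCoeffs u F)| ≤ K u := by
  induction F using MvPolynomial.induction_on with
  | C a =>
    obtain ⟨K, hK, hle⟩ := exists_elem_abs_eval_le (Set.finite_singleton a)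
    refine ⟨K, hK, fun u => ⟨?_, fun t _ => ?_⟩⟩
    · simpa [specializeCoeffs] using (LipschitzWith.const _).weaken zero_le |>.lipschitzOnWith
    · simpa [specializeCoeffs] using mod_cast hle a rfl u
  | add p q hp hq =>
    obtain ⟨K, hK, hp⟩ := hp
    obtain ⟨L, hL, hq⟩ := hq
    refine ⟨_, hK.fun_add hL, fun u => ⟨?_, fun t ht => ?_⟩⟩
    · simpa [specializeCoeffs] using (hp u).1.add (hq u).1
    · simpa [specializeCoeffs] using
        (abs_add_le _ _).trans (add_le_add ((hp u).2 t ht) ((hq u).2 t ht))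
  | mul_X p i hp =>
    obtain ⟨K, hK, hp⟩ := hp
    have hX (t : σ → ℝ) (ht : t ∈ Set.Icc 0 1) : |t i| ≤ 1 :=
      abs_le.2 ⟨neg_one_lt_zero.le.trans (ht.1 i), ht.2 i⟩
    refine ⟨_, hK.fun_add hK, fun u => ⟨?_, fun t ht => ?_⟩⟩
    · simpa [specializeCoeffs] using lipschitzOnWith_mul_of_norm_le (Mf := K u) (Mg := 1) (hp u).1
        (LipschitzWith.eval i).lipschitzOnWith (hp u).2 hX
    · calc |aeval t (specializeCoeffs u (p * X i))|
        _ = |aeval t (specializeCoeffs u p)| * |t i| := by simp [specializeCoeffs]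
        _ ≤ K u * 1 := mul_le_mul ((hp u).2 t ht) (hX t ht) (abs_nonneg _) (Nat.cast_nonneg _)
        _ ≤ (K u + K u : ℕ) := by
          push_cast
          linarith [(K u).cast_nonneg (α := ℝ)]

end Parameters

section Grid

open MvPolynomial

variable {σ : Type*}

theorem natCast_div_mem_Icc {M : ℕ} {g : σ → ℕ} (hg : ∀ j, g j ≤ M) :
    (fun j => (g j / M : ℝ)) ∈ Set.Icc 0 1 :=
  ⟨fun j => by simp only [Pi.zero_apply]; positivity,
    fun j => div_le_one_of_le₀ (Nat.cast_le.2 (hg j)) (Nat.cast_nonneg M)⟩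

variable [Fintype σ]

theorem exists_dist_natCast_div_le {t : σ → ℝ} (ht : t ∈ Set.Icc 0 1) {M : ℕ} (hM : M ≠ 0) :
    ∃ g : σ → ℕ, (∀ j, g j ≤ M) ∧ dist (fun j => (g j / M : ℝ)) t ≤ 1 / M := by
  have hpos : (0 : ℝ) < M := by positivity
  have hnonneg (j : σ) : 0 ≤ t j * M := mul_nonneg (ht.1 j) hpos.le
  refine ⟨fun j => ⌊t j * M⌋₊, fun j => ?_, (dist_pi_le_iff (by positivity)).2 fun j => ?_⟩
  · exact Nat.floor_le_of_le (mul_le_of_le_one_left hpos.le (ht.2 j))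
  · rw [Real.dist_eq, div_sub' hpos.ne', abs_div, abs_of_pos hpos, mul_comm (M : ℝ)]
    gcongr
    rw [abs_le]
    constructor <;> linarith [Nat.floor_le (hnonneg j), Nat.lt_floor_add_one (t j * M)]

theorem forall_Icc_pos_iff_forall_grid {f : (σ → ℝ) → ℝ} {B K : ℕ}
    (hK : LipschitzOnWith K f (Set.Icc 0 1))
    (hB : (∀ t ∈ Set.Icc 0 1, 0 < f t) → ∀ t ∈ Set.Icc 0 1, 1 ≤ B * f t) :
    (∀ t ∈ Set.Icc 0 1, 0 < f t) ↔
      ∀ g : σ → ℕ, (∀ j, g j ≤ B * K + 1) → 1 ≤ B * f fun j => g j / (B * K + 1 : ℕ) := by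
  refine ⟨fun hpos g hg => hB hpos _ (natCast_div_mem_Icc hg), fun hgrid t ht => ?_⟩
  obtain ⟨g, hg, hdist⟩ := exists_dist_natCast_div_le ht (Nat.succ_ne_zero (B * K))
  have hclose : f (fun j => g j / (B * K + 1 : ℕ)) - f t ≤ K * (1 / (B * K + 1 : ℕ)) :=
    calc _ ≤ _ := le_abs_self _
      _ ≤ K * dist _ t := hK.dist_le_mul _ (natCast_div_mem_Icc hg) t ht
      _ ≤ _ := by gcongr
  have hstep : B * (K * (1 / (B * K + 1 : ℕ) : ℝ)) < 1 := by
    rw [mul_one_div, ← mul_div_assoc, div_lt_one (by positivity)]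
    push_cast
    exact lt_add_one _
  have hBf : 0 < B * f t := by
    calc (0 : ℝ) < 1 - B * (K * (1 / (B * K + 1 : ℕ))) := sub_pos.2 hstep
      _ ≤ B * f (fun j => g j / (B * K + 1 : ℕ)) - B * (K * (1 / (B * K + 1 : ℕ))) := by
        gcongr
        exact hgrid g hg
      _ ≤ B * f t := by
        rw [← mul_sub]
        gcongr
        linarith
  exact pos_of_mul_pos_right hBf (Nat.cast_nonneg B)

end Grid

section Homogenization

open MvPolynomial

variable {σ : Type*}

theorem exists_eval₂_elim_eq_pow_mul_eval₂_div {R : Type*} (K : Type*) [CommSemiring R] [Field K]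
    (G : MvPolynomial σ R) : ∃ (d : ℕ) (H : MvPolynomial (Option σ) R),
      ∀ (φ : R →+* K) {c : K}, c ≠ 0 → ∀ x : σ → K,
        H.eval₂ φ (fun o => o.elim c x) = c ^ d * G.eval₂ φ fun i => x i / c := by
  induction G using MvPolynomial.induction_on with
  | C a => exact ⟨0, C a, fun φ c _ x => by simp⟩
  | add p q hp hq =>
    obtain ⟨d, H, hH⟩ := hp
    obtain ⟨e, J, hJ⟩ := hq
    refine ⟨d + e, X none ^ e * H + X none ^ d * J, fun φ c hc x => ?_⟩
    simp only [eval₂_add, eval₂_mul, eval₂_pow, eval₂_X, hH φ hc, hJ φ hc, Option.elim_none]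
    ring
  | mul_X p i hp =>
    obtain ⟨d, H, hH⟩ := hp
    refine ⟨d + 1, H * X (some i), fun φ c hc x => ?_⟩
    simp only [eval₂_mul, eval₂_X, hH φ hc, Option.elim_some]
    rw [pow_succ]
    field_simp

theorem ElemPred.one_le_mul_aeval_div {s m : ℕ} (F : MvPolynomial σ (MvPolynomial (Fin s) ℤ))
    {U : (Fin m → ℕ) → Fin s → ℕ} (hU : ∀ i, Elem fun x => U x i)
    {T : (Fin m → ℕ) → σ → ℕ} (hT : ∀ j, Elem fun x => T x j)
    {B M : (Fin m → ℕ) → ℕ} (hB : Elem B) (hM : Elem M) (hM₀ : ∀ x, M x ≠ 0) :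
    ElemPred fun x =>
      (1 : ℝ) ≤ B x * aeval (fun j => (T x j / M x : ℝ)) (specializeCoeffs (U x) F) := by
  obtain ⟨d, H, hH⟩ := exists_eval₂_elim_eq_pow_mul_eval₂_div ℝ F
  have hnum : ElemInt fun x =>
      H.eval₂ (eval fun i => (U x i : ℤ)) fun o => o.elim (M x : ℤ) fun j => (T x j : ℤ) :=
    ElemInt.eval₂ (fun p => ElemInt.eval₂ (φ := fun _ => RingHom.id ℤ) ElemInt.const
      (fun i => ElemInt.natCast (hU i)) p) (τ := fun o x => o.elim (M x : ℤ) fun j => (T x j : ℤ))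
      (Option.rec (ElemInt.natCast hM) fun j => ElemInt.natCast (hT j)) H
  refine ((ElemInt.natCast (hM.fun_pow d)).elemPred_le
    ((ElemInt.natCast hB).fun_mul hnum)).congr fun x => ?_
  have hM₁ : (M x : ℝ) ≠ 0 := Nat.cast_ne_zero.2 (hM₀ x)
  have hpos : (0 : ℝ) < M x ^ d := by positivity
  have hcast : ((H.eval₂ (eval fun i => (U x i : ℤ))
      fun o => o.elim (M x : ℤ) fun j => (T x j : ℤ) : ℤ) : ℝ) =
      M x ^ d * aeval (fun j => (T x j / M x : ℝ)) (specializeCoeffs (U x) F) := by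
    rw [specializeCoeffs, aeval_def, eval₂_map, algebraMap_int_eq, ← hH _ hM₁]
    refine (hom_eval₂ _ _ (Int.castRingHom ℝ) _).trans ?_
    congr 1
    ext (_ | j) <;> simp
  rw [← Int.cast_le (R := ℝ), Int.cast_mul, hcast, mul_left_comm]
  push_cast
  exact le_mul_iff_one_le_right hpos

end Homogenization

section Positivity

open MvPolynomial

theorem ElemPred.forall_Icc_aeval_pos {s l : ℕ}
    (F : MvPolynomial (Fin l) (MvPolynomial (Fin s) ℤ)) :
    ElemPred fun u => ∀ t ∈ Set.Icc (0 : Fin l → ℝ) 1, 0 < aeval t (specializeCoeffs u F) := by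
  obtain ⟨B, hB, hlow⟩ := exists_elem_one_le_mul_aeval F
  obtain ⟨K, hK, hlip⟩ := exists_elem_lipschitzOnWith_and_abs_le F
  have hM : Elem fun u => B u * K u + 1 := (hB.fun_mul hK).fun_add (Elem.const 1)
  have hfst {f : (Fin s → ℕ) → ℕ} (hf : Elem f) :
      Elem fun x : Fin (s + l) → ℕ => f fun i => x (i.castAdd l) :=
    hf.comp fun i => Elem.proj (i.castAdd l)
  have hgrid := ElemPred.one_le_mul_aeval_div F (fun i => hfst (Elem.proj i))
    (fun j => Elem.proj (j.natAdd s)) (hfst hB) (hfst hM) fun _ => Nat.succ_ne_zero _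
  refine (hgrid.forall_le_append hM).congr fun u => ?_
  rw [forall_Icc_pos_iff_forall_grid (hlip u).1 (hlow u)]
  simp only [Fin.append_left, Fin.append_right]

end Positivity

section Cube

open MvPolynomial

variable {ℓ : ℕ}

theorem smallCube_eq_image {r : ℚ} (hr : 0 < r) {n : ℕ} (hn : n ≠ 0) (k : Fin ℓ → ℕ) :
    smallCube ℓ r n k =
      (fun (t : Fin ℓ → ℝ) i => (k i + t i) * r / n) '' Set.Icc (0 : Fin ℓ → ℝ) 1 := by
  have hscale : (0 : ℝ) < r / n := by positivity
  have hside (i : Fin ℓ) : Set.Icc ((k i : ℝ) * r / n) ((k i + 1) * r / n) =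
      (fun t : ℝ => (k i + t) * r / n) '' Set.Icc (0 : ℝ) 1 := by
    have hline (t : ℝ) : (k i + t) * r / n = r / n * t + k i * r / n := by ring
    rw [funext hline, Set.image_affine_Icc' hscale, ← hline, ← hline, add_zero]
  rw [smallCube, ← Set.pi_univ_Icc]
  simp only [hside]
  exact (Set.piMap_image_univ_pi _ _).symm

theorem exists_aeval_specializeCoeffs_cons_eq (r : ℚ) (G : MvPolynomial (Fin ℓ) ℤ) :
    ∃ (d : ℕ) (F : MvPolynomial (Fin ℓ) (MvPolynomial (Fin (ℓ + 1)) ℤ)),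
      ∀ n ≠ 0, ∀ (k : Fin ℓ → ℕ) (t : Fin ℓ → ℝ),
        aeval t (specializeCoeffs (Fin.cons n k) F) =
          (r.den * n : ℝ) ^ d * aeval (fun i => (k i + t i) * r / n) G := by
  obtain ⟨d, H, hH⟩ := exists_eval₂_elim_eq_pow_mul_eval₂_div ℝ G
  refine ⟨d, aeval (fun o => o.elim (C (C (r.den : ℤ) * X 0))
    fun i => C (C r.num) * (C (X i.succ) + X i)) H, fun n hn k t => ?_⟩
  have hc : (r.den * n : ℝ) ≠ 0 := by have := r.den_ne_zero; positivity
  calc aeval t (specializeCoeffs (Fin.cons n k) (aeval _ H))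
    _ = H.eval₂ (algebraMap ℤ ℝ) fun o => o.elim (r.den * n) fun i => r.num * (k i + t i) := by
      refine (map_aeval _ ((aeval t).toRingHom.comp
        (map (eval fun i => ((Fin.cons n k : Fin (ℓ + 1) → ℕ) i : ℤ)))) H).trans ?_
      rw [coe_eval₂Hom]
      congr 1
      · exact Subsingleton.elim _ _
      · ext (_ | i) <;> simp
    _ = (r.den * n : ℝ) ^ d * aeval (fun i => (k i + t i) * r / n) G := by
      rw [hH _ hc, aeval_def]
      congr! 3
      rw [mul_comm (r.num : ℝ), ← div_div, mul_div_assoc _ (r.num : ℝ), ← Rat.cast_def]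

end Cube

theorem cube_in_domain_elementary_general (ℓ : ℕ) {ι : Type*} [Finite ι] {r : ℚ} (hr : 0 < r)
    (G : ι → MvPolynomial (Fin ℓ) ℤ) :
    ∃ φ : (Fin (ℓ + 1) → ℕ) → ℕ, Elem φ ∧ ∀ n : ℕ, 1 ≤ n → ∀ k : Fin ℓ → ℕ,
      (smallCube ℓ r n k ⊆ {x | ∀ i, 0 < MvPolynomial.aeval x (G i)} → φ (Fin.cons n k) = 1) ∧
      (¬ smallCube ℓ r n k ⊆ {x | ∀ i, 0 < MvPolynomial.aeval x (G i)} →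
        φ (Fin.cons n k) = 0) := by
  choose d F hF using fun i => exists_aeval_specializeCoeffs_cons_eq r (G i)
  refine ⟨_, ElemPred.forall_finite fun i => ElemPred.forall_Icc_aeval_pos (F i),
    fun n hn k => ?_⟩
  have hn₀ : n ≠ 0 := Nat.one_le_iff_ne_zero.1 hn
  have hscale : (0 : ℝ) < r.den * n := by have := r.den_pos; positivity
  have hiff : smallCube ℓ r n k ⊆ {x | ∀ i, 0 < MvPolynomial.aeval x (G i)} ↔
      ∀ i, ∀ t ∈ Set.Icc (0 : Fin ℓ → ℝ) 1,
        0 < MvPolynomial.aeval t (specializeCoeffs (Fin.cons n k) (F i)) := by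
    simp only [smallCube_eq_image hr hn₀, Set.image_subset_iff, hF _ n hn₀,
      mul_pos_iff_of_pos_left (pow_pos hscale _)]
    exact ⟨fun h i t ht => h ht i, fun h t ht i => h i t ht⟩
  exact ⟨fun h => if_pos (hiff.1 h), fun h => if_neg (mt hiff.2 h)⟩

/-- For a bounded basic open semialgebraic set `D ⊆ [0,r]^ℓ`
defined by integer-coefficient polynomials, there is an elementary function
`φ : ℕ^{ℓ+1} → ℕ` deciding whether the cube `C_n(k)` is contained in `D`. -/
theorem cube_in_domain_elementary
    (ℓ q : ℕ) (r : ℚ) (hr : 0 < r)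
    (G : Fin q → MvPolynomial (Fin ℓ) ℤ)
    (D : Set (Fin ℓ → ℝ))
    (hD : D = {x : Fin ℓ → ℝ | ∀ i, 0 < MvPolynomial.aeval x (G i)})
    (hsub : D ⊆ Set.univ.pi fun _ => Set.Icc (0 : ℝ) (r : ℝ)) :
    ∃ φ : (Fin (ℓ + 1) → ℕ) → ℕ, Elem φ ∧
      ∀ n : ℕ, 1 ≤ n → ∀ k : Fin ℓ → ℕ, (∀ i, k i < n) →
        (smallCube ℓ r n k ⊆ D → φ (Fin.cons n k) = 1) ∧
        (¬ smallCube ℓ r n k ⊆ D → φ (Fin.cons n k) = 0) := by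
  obtain ⟨φ, hφ, hdecide⟩ := cube_in_domain_elementary_general ℓ hr G
  exact ⟨φ, hφ, fun n hn k _ => hD ▸ hdecide n hn k⟩
end
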